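/- arXiv:2303.14938 — 3 statements merged into one kernel-verified Lean document; each statement's English description precedes it below -/
import Mathlib

section
/- Let μ be an absolutely continuous, log-concave probability measure on ℝⁿ and let 0 < ε < t. Then there exists a regular, log-concave probability measure ν on ℝⁿ such that C_P(ν) ≥ C_P(μ) − ε and ‖Cov(μ) − Cov(ν)‖_op < ε. Moreover, if μ is t-uniformly log-concave, then ν can be chosen to additionally be (t − ε)-uniformly log-concave. -/
open MeasureTheory Real
open scoped ENNReal RealInnerProductSpace

noncomputable section

abbrev Euc (n : ℕ) := EuclideanSpace ℝ (Fin n)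

/-- A nonnegative function `g` is log-concave: `g(ax+by) ≥ g(x)^a g(y)^b`. -/
def IsLogConcaveFun {n : ℕ} (g : Euc n → ℝ) : Prop :=
  (∀ x, 0 ≤ g x) ∧
  ∀ x y : Euc n, ∀ a b : ℝ, 0 ≤ a → 0 ≤ b → a + b = 1 →
    g x ^ a * g y ^ b ≤ g (a • x + b • y)

def IsLogConcaveMeasure {n : ℕ} (μ : Measure (Euc n)) : Prop :=
  ∃ ρ : Euc n → ℝ, Measurable ρ ∧ IsLogConcaveFun ρ ∧
    μ = volume.withDensity (fun x => ENNReal.ofReal (ρ x))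

def poincareSet {n : ℕ} (μ : Measure (Euc n)) : Set ℝ :=
  {C : ℝ | 0 ≤ C ∧ ∀ f : Euc n → ℝ, LocallyLipschitz f →
    Integrable (fun x => ‖gradient f x‖ ^ 2) μ →
    ∫ x, f x ^ 2 ∂μ - (∫ x, f x ∂μ) ^ 2 ≤ C * ∫ x, ‖gradient f x‖ ^ 2 ∂μ}

def poincareConst {n : ℕ} (μ : Measure (Euc n)) : ℝ := sInf (poincareSet μ)

def covMatrix {n : ℕ} (μ : Measure (Euc n)) : Matrix (Fin n) (Fin n) ℝ :=
  Matrix.of fun i j => ∫ x, x i * x j ∂μ - (∫ x, x i ∂μ) * (∫ x, x j ∂μ)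

def opNorm {n : ℕ} (M : Matrix (Fin n) (Fin n) ℝ) : ℝ :=
  ‖Matrix.toEuclideanCLM (𝕜 := ℝ) M‖

def IsIsotropic {n : ℕ} (μ : Measure (Euc n)) : Prop :=
  (∫ x, x ∂μ) = 0 ∧ ∀ i j, ∫ x, x i * x j ∂μ = if i = j then 1 else 0

def UniformlyLogConcave {n : ℕ} (t : ℝ) (μ : Measure (Euc n)) : Prop :=
  ∃ g : Euc n → ℝ, Measurable g ∧ IsLogConcaveFun g ∧
    μ = volume.withDensity (fun x => ENNReal.ofReal (Real.exp (-t * ‖x‖ ^ 2 / 2) * g x))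

def IsRegularPotential {n : ℕ} (ψ : Euc n → ℝ) : Prop :=
  ContDiff ℝ (⊤ : ℕ∞) ψ ∧
  (∃ ε : ℝ, 0 < ε ∧ ∀ x v : Euc n,
    ε * ‖v‖ ^ 2 ≤ iteratedFDeriv ℝ 2 ψ x ![v, v] ∧
    iteratedFDeriv ℝ 2 ψ x ![v, v] ≤ ε⁻¹ * ‖v‖ ^ 2) ∧
  (∀ m : ℕ, ∃ C : ℝ, ∃ k : ℕ, ∀ x, ‖iteratedFDeriv ℝ m ψ x‖ ≤ C * (1 + ‖x‖) ^ k)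

def IsRegularMeasure {n : ℕ} (μ : Measure (Euc n)) (ψ : Euc n → ℝ) : Prop :=
  IsRegularPotential ψ ∧ μ = volume.withDensity (fun x => ENNReal.ofReal (Real.exp (-ψ x)))

def IsTempered {n : ℕ} (ρ : Euc n → ℝ) (f : Euc n → ℝ) : Prop :=
  ContDiff ℝ (⊤ : ℕ∞) f ∧ ∀ m : ℕ, ∃ C : ℝ, 0 < C ∧ ∃ a : ℝ, 0 < a ∧ ∀ x,
    ‖iteratedFDeriv ℝ m f x‖ ≤ C / Real.sqrt (ρ x) * Real.exp (-a * ‖x‖)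

def lap {n : ℕ} (f : Euc n → ℝ) (x : Euc n) : ℝ :=
  ∑ i, iteratedFDeriv ℝ 2 f x ![EuclideanSpace.single i (1:ℝ), EuclideanSpace.single i (1:ℝ)]

def Lop {n : ℕ} (ψ u : Euc n → ℝ) (x : Euc n) : ℝ :=
  lap u x - ⟪gradient ψ x, gradient u x⟫

def gaussDensity (n : ℕ) (s : ℝ) (x : Euc n) : ℝ :=
  (2 * π * s) ^ (-(n : ℝ) / 2) * Real.exp (-‖x‖ ^ 2 / (2 * s))

def gaussMeasure (n : ℕ) (s : ℝ) : Measure (Euc n) :=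
  volume.withDensity fun x => ENNReal.ofReal (gaussDensity n s x)

def tiltZ {n : ℕ} (ρ : Euc n → ℝ) (t : ℝ) (θ : Euc n) : ℝ :=
  ∫ x, Real.exp (⟪θ, x⟫ - t * ‖x‖ ^ 2 / 2) * ρ x

def tiltDensity {n : ℕ} (ρ : Euc n → ℝ) (t : ℝ) (θ : Euc n) (x : Euc n) : ℝ :=
  Real.exp (⟪θ, x⟫ - t * ‖x‖ ^ 2 / 2) * ρ x / tiltZ ρ t θ

def tiltMeasure {n : ℕ} (ρ : Euc n → ℝ) (t : ℝ) (θ : Euc n) : Measure (Euc n) :=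
  volume.withDensity fun x => ENNReal.ofReal (tiltDensity ρ t θ x)

def varD {n : ℕ} (p : Euc n → ℝ) (f : Euc n → ℝ) : ℝ :=
  (∫ x, f x ^ 2 * p x) - (∫ x, f x * p x) ^ 2

end

open MeasureTheory Real
open scoped ENNReal RealInnerProductSpace
noncomputable section
namespace ApproxAux
open Set Filter Topology Metric

variable {n : ℕ}


lemma mass_ball (ρ : Euc n → ℝ) (hm : Measurable ρ)
    (hf : IsProbabilityMeasure (volume.withDensity (fun x => ENNReal.ofReal (ρ x))))
    (z : Euc n) (s d : ℝ) (h : ∀ y ∈ ball z s, d ≤ ρ y) (hd : 0 ≤ d) (S : Set (Euc n))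
    (hzS : ball z s ⊆ S) :
    d * (volume (ball (0 : Euc n) s)).toReal ≤
      ((volume.withDensity (fun x => ENNReal.ofReal (ρ x))) S).toReal := by
  have h1 : ENNReal.ofReal d * volume (ball z s) ≤
      (volume.withDensity (fun x => ENNReal.ofReal (ρ x))) S := by
    calc ENNReal.ofReal d * volume (ball z s) = ∫⁻ x in ball z s, ENNReal.ofReal d := by
          simp
      _ ≤ ∫⁻ x in ball z s, ENNReal.ofReal (ρ x) := by
          apply setLIntegral_mono (by fun_prop)
          intro x hx
          exact ENNReal.ofReal_le_ofReal (h x hx)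
      _ = (volume.withDensity (fun x => ENNReal.ofReal (ρ x))) (ball z s) := by
          rw [withDensity_apply _ measurableSet_ball]
      _ ≤ _ := measure_mono hzS
  have h2 := ENNReal.toReal_mono (measure_ne_top _ _) h1
  rwa [ENNReal.toReal_mul, ENNReal.toReal_ofReal hd, Measure.addHaar_ball_center] at h2

lemma level_convex (ρ : Euc n → ℝ) (hl : IsLogConcaveFun ρ) (c : ℝ) (hc : 0 < c) :
    Convex ℝ {x | c ≤ ρ x} := by
  intro x hx y hy a b ha hb hab
  have := hl.2 x y a b ha hb hab
  refine le_trans ?_ this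
  calc c = c ^ a * c ^ b := by rw [← Real.rpow_add hc, hab, Real.rpow_one]
    _ ≤ ρ x ^ a * ρ y ^ b := by
      have := hl.1 x
      have := hl.1 y
      have hx' : c ≤ ρ x := hx
      have hy' : c ≤ ρ y := hy
      gcongr

lemma convex_interior_nonempty (s : Set (Euc n)) (hs : Convex ℝ s) (h : volume s ≠ 0) :
    (interior s).Nonempty := by
  by_contra hne
  rw [not_nonempty_iff_eq_empty] at hne
  have h1 := hs.addHaar_frontier volume
  rw [frontier, hne, sdiff_empty] at h1
  exact h (measure_mono_null subset_closure h1)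

lemma exists_good_ball (ρ : Euc n → ℝ) (hl : IsLogConcaveFun ρ)
    (hf : IsProbabilityMeasure (volume.withDensity (fun x => ENNReal.ofReal (ρ x)))) :
    ∃ x0 : Euc n, ∃ r c : ℝ, 0 < r ∧ 0 < c ∧ ∀ y ∈ ball x0 r, c ≤ ρ y := by
  have h0 : ∃ k : ℕ, volume {x | (1 / ((k : ℝ) + 1)) ≤ ρ x} ≠ 0 := by
    by_contra hcon
    push Not at hcon
    have hU : volume {x | 0 < ρ x} = 0 := by
      have : {x | 0 < ρ x} ⊆ ⋃ k : ℕ, {x | (1 / ((k : ℝ) + 1)) ≤ ρ x} := by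
        intro x hx
        obtain ⟨k, hk⟩ := exists_nat_one_div_lt (show (0:ℝ) < ρ x from hx)
        exact mem_iUnion.2 ⟨k, hk.le⟩
      exact measure_mono_null this (measure_iUnion_null hcon)
    have h2 : (volume.withDensity (fun x => ENNReal.ofReal (ρ x))) univ = 0 := by
      rw [withDensity_apply _ MeasurableSet.univ, Measure.restrict_univ]
      apply lintegral_eq_zero_of_ae_eq_zero
      have : ∀ᵐ x ∂(volume : Measure (Euc n)), ¬ 0 < ρ x := by
        rw [ae_iff]; simpa using hU
      filter_upwards [this] with x hx
      simpa using hx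
    simp at h2
  obtain ⟨k, hk⟩ := h0
  have hc : (0:ℝ) < 1 / ((k : ℝ) + 1) := by positivity
  obtain ⟨x0, hx0⟩ := convex_interior_nonempty _ (level_convex ρ hl _ hc) hk
  obtain ⟨r, hr, hb⟩ := Metric.isOpen_iff.1 isOpen_interior x0 hx0
  exact ⟨x0, r, _, hr, hc, fun y hy => by
    have h : y ∈ {x | (1 / ((k : ℝ) + 1)) ≤ ρ x} := interior_subset (hb hy)
    exact h⟩

lemma mid_ball (ρ : Euc n → ℝ) (hl : IsLogConcaveFun ρ) (x0 x : Euc n) (r c : ℝ) (hc : 0 < c)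
    (hb : ∀ y ∈ ball x0 r, c ≤ ρ y) :
    ∀ y ∈ ball ((1/2:ℝ) • (x + x0)) (r/2), Real.sqrt (ρ x) * Real.sqrt c ≤ ρ y := by
  intro y hy
  have h2 : (2:ℝ) • y - x ∈ ball x0 r := by
    rw [mem_ball, dist_eq_norm] at hy ⊢
    have : (2:ℝ) • y - x - x0 = (2:ℝ) • (y - (1/2:ℝ) • (x + x0)) := by module
    rw [this, norm_smul, Real.norm_of_nonneg (by norm_num)]; linarith
  have h3 := hl.2 x ((2:ℝ) • y - x) (1/2) (1/2) (by norm_num) (by norm_num) (by norm_num)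
  have h4 : (1/2:ℝ) • x + (1/2:ℝ) • ((2:ℝ) • y - x) = y := by module
  rw [h4, ← Real.sqrt_eq_rpow, ← Real.sqrt_eq_rpow] at h3
  refine le_trans ?_ h3
  gcongr
  exact hb _ h2

lemma decay (ρ : Euc n → ℝ) (hm : Measurable ρ) (hl : IsLogConcaveFun ρ)
    (hf : IsProbabilityMeasure (volume.withDensity (fun x => ENNReal.ofReal (ρ x)))) :
    ∃ C a : ℝ, 0 < C ∧ 0 < a ∧ ∀ x, ρ x ≤ C * Real.exp (-a * ‖x‖) := by
  obtain ⟨x0, r, c, hr, hc, hb⟩ := exists_good_ball ρ hl hf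
  set μ := (volume.withDensity (fun x => ENNReal.ofReal (ρ x))) with hμ
  set v := (volume (ball (0 : Euc n) (r/2))).toReal with hv
  have hvpos : 0 < v := by
    apply ENNReal.toReal_pos
    · exact (measure_ball_pos _ _ (by positivity)).ne'
    · exact measure_ball_lt_top.ne
  -- boundedness
  have hbd : ∀ x, ρ x ≤ 1 / (c * v ^ 2) := by
    intro x
    have h1 := mass_ball ρ hm hf _ _ _ (mid_ball ρ hl x0 x r c hc hb) (by positivity) univ
      (subset_univ _)
    rw [← hμ, ← hv] at h1
    simp only [measure_univ, ENNReal.toReal_one] at h1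
    have h2 : (Real.sqrt (ρ x) * Real.sqrt c * v) ^ 2 ≤ 1 := by
      apply pow_le_one₀ (by positivity) h1
    rw [mul_pow, mul_pow, Real.sq_sqrt (hl.1 x), Real.sq_sqrt hc.le] at h2
    rw [le_div_iff₀ (by positivity)]; linarith
  -- tail
  set d := c * Real.exp (-1) with hd
  have hdpos : 0 < d := by positivity
  have hdc : d < c := by
    rw [hd]; have : Real.exp (-1) < 1 := by rw [Real.exp_lt_one_iff]; norm_num
    nlinarith
  have htail : ∃ R : ℝ, 0 < R ∧ ∀ x, R ≤ ‖x - x0‖ → ρ x ≤ d := by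
    have ht := (isTightMeasureSet_iff_tendsto_measure_compl_closedBall (S := {μ}) x0).1
      (isTightMeasureSet_singleton_of_innerRegularWRT (innerRegular_isCompact_isClosed_measurableSet_of_finite μ))
    simp only [mem_singleton_iff, iSup_iSup_eq_left] at ht
    have hpos : (0 : ℝ≥0∞) < ENNReal.ofReal (d * v) := by
      rw [ENNReal.ofReal_pos]; positivity
    obtain ⟨R, hR⟩ := (ht.eventually (gt_mem_nhds hpos)).exists
    refine ⟨max 1 (2 * R + r + 1), by positivity, fun x hx => ?_⟩
    by_contra hlt
    push Not at hlt
    have hsub : ball ((1/2:ℝ) • (x + x0)) (r/2) ⊆ (closedBall x0 R)ᶜ := by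
      intro y hy
      rw [mem_ball, dist_eq_norm] at hy
      rw [mem_compl_iff, mem_closedBall, dist_eq_norm, not_le]
      have hx2 : 2 * R + r + 1 ≤ ‖x - x0‖ := le_trans (le_max_right _ _) hx
      have h5 : ‖(1/2:ℝ) • (x - x0)‖ ≤ ‖y - x0‖ + ‖y - (1/2:ℝ) • (x + x0)‖ := by
        have : (1/2:ℝ) • (x - x0) = (y - x0) - (y - (1/2:ℝ) • (x + x0)) := by module
        rw [this]; exact norm_sub_le _ _
      rw [norm_smul] at h5
      norm_num at h5
      norm_num at hy
      linarith
    have h6 := mass_ball ρ hm hf _ _ d (fun y hy => ?_) hdpos.le _ hsub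
    · have := (ENNReal.ofReal_le_iff_le_toReal (measure_ne_top _ _)).2 h6
      exact absurd hR (not_lt.2 this)
    · refine le_trans ?_ (mid_ball ρ hl x0 x r c hc hb y hy)
      rw [← Real.sqrt_mul (hl.1 x)]
      apply Real.le_sqrt_of_sq_le
      nlinarith
  obtain ⟨R, hR, hRd⟩ := htail
  have hcx0 : c ≤ ρ x0 := hb x0 (mem_ball_self hr)
  have hray : ∀ x, R ≤ ‖x - x0‖ → ρ x ≤ c * Real.exp (-‖x - x0‖ / R) := by
    intro x hx
    set s := ‖x - x0‖ with hs
    have hspos : 0 < s := by linarith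
    rcases (hl.1 x).eq_or_lt with h0 | h0
    · rw [← h0]; positivity
    have h7 := hl.2 x0 x (1 - R / s) (R / s) (by rw [sub_nonneg, div_le_one hspos]; exact hx)
      (by positivity) (by ring)
    have h8 : ρ ((1 - R / s) • x0 + (R / s) • x) ≤ d := by
      apply hRd
      have : (1 - R / s) • x0 + (R / s) • x - x0 = (R / s) • (x - x0) := by module
      rw [this, norm_smul, ← hs, Real.norm_of_nonneg (by positivity), div_mul_cancel₀ _ hspos.ne']
    have h9 : c ^ (1 - R / s) * ρ x ^ (R / s) ≤ d := by
      refine le_trans ?_ (h7.trans h8)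
      gcongr
      rw [sub_nonneg, div_le_one hspos]; exact hx
    have h10 := Real.log_le_log (by positivity) h9
    rw [Real.log_mul (by positivity) (by positivity), Real.log_rpow hc, Real.log_rpow h0, hd,
      Real.log_mul hc.ne' (by positivity), Real.log_exp] at h10
    have h11 : Real.log (ρ x) ≤ Real.log c - s / R := by
      have : (R / s) * (Real.log (ρ x) - Real.log c) ≤ -1 := by nlinarith
      have h12 : (s / R) * ((R / s) * (Real.log (ρ x) - Real.log c)) ≤ (s / R) * (-1) := by
        gcongr
      have h13 : (s / R) * ((R / s) * (Real.log (ρ x) - Real.log c)) = Real.log (ρ x) - Real.log c := by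
        field_simp
      linarith
    calc ρ x = Real.exp (Real.log (ρ x)) := (Real.exp_log h0).symm
      _ ≤ Real.exp (Real.log c - s / R) := Real.exp_le_exp.2 h11
      _ = c * Real.exp (-s / R) := by
        rw [sub_eq_add_neg, Real.exp_add, Real.exp_log hc, neg_div]
  set M := 1 / (c * v ^ 2) with hM
  have hMpos : 0 < M := by positivity
  refine ⟨(c + M) * Real.exp (1 + ‖x0‖ / R), 1 / R, by positivity, by positivity, fun x => ?_⟩
  rw [mul_assoc, ← Real.exp_add]
  have hxn : ‖x‖ ≤ ‖x - x0‖ + ‖x0‖ := by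
    simpa using norm_add_le (x - x0) x0
  by_cases hx : R ≤ ‖x - x0‖
  · refine (hray x hx).trans ?_
    have : -‖x - x0‖ / R ≤ 1 + ‖x0‖ / R + -(1 / R) * ‖x‖ := by
      have : ‖x‖ / R ≤ (‖x - x0‖ + ‖x0‖) / R := by gcongr
      rw [add_div] at this
      rw [neg_div]
      have e : -(1 / R) * ‖x‖ = - (‖x‖ / R) := by ring
      rw [e]; linarith
    gcongr
    linarith
  · push Not at hx
    refine (hbd x).trans ?_
    have : 0 ≤ 1 + ‖x0‖ / R + -(1 / R) * ‖x‖ := by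
      have : ‖x‖ / R ≤ (R + ‖x0‖) / R := by gcongr; linarith
      rw [add_div, div_self hR.ne'] at this
      have e : -(1 / R) * ‖x‖ = - (‖x‖ / R) := by ring
      rw [e]; linarith
    have h1 : 1 ≤ Real.exp (1 + ‖x0‖ / R + -(1 / R) * ‖x‖) := Real.one_le_exp this
    nlinarith

lemma ae_continuousAt (ρ : Euc n → ℝ) (hl : IsLogConcaveFun ρ) :
    ∀ᵐ x, ContinuousAt ρ x := by
  set S : Set (Euc n) := {x | 0 < ρ x} with hS
  have hconv : Convex ℝ S := by
    intro x hx y hy a b ha hb hab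
    refine lt_of_lt_of_le ?_ (hl.2 x y a b ha hb hab)
    have hx' : 0 < ρ x := hx
    have hy' : 0 < ρ y := hy
    positivity
  have hlog : ConcaveOn ℝ S (fun x => Real.log (ρ x)) := by
    refine ⟨hconv, fun x hx y hy a b ha hb hab => ?_⟩
    have hx' : 0 < ρ x := hx
    have hy' : 0 < ρ y := hy
    have := Real.log_le_log (by positivity) (hl.2 x y a b ha hb hab)
    rwa [Real.log_mul (by positivity) (by positivity), Real.log_rpow hx', Real.log_rpow hy'] at this
  have hc := hlog.continuousOn_interior
  have hfr := hconv.addHaar_frontier volume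
  have : ∀ᵐ x ∂(volume : Measure (Euc n)), x ∉ frontier S := by
    rw [ae_iff]; simpa using hfr
  filter_upwards [this] with x hx
  by_cases hxi : x ∈ interior S
  · have h1 := hc.continuousAt (isOpen_interior.mem_nhds hxi)
    have h2 : ContinuousAt (fun y => Real.exp (Real.log (ρ y))) x := h1.rexp
    refine h2.congr ?_
    filter_upwards [isOpen_interior.mem_nhds hxi] with y hy
    have h : y ∈ S := interior_subset hy
    exact Real.exp_log h
  · have hxc : x ∉ closure S := fun h => hx ⟨h, hxi⟩
    have : ρ =ᶠ[𝓝 x] fun _ => 0 := by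
      filter_upwards [isClosed_closure.isOpen_compl.mem_nhds hxc] with y hy
      have : ¬ 0 < ρ y := fun h => hy (subset_closure h)
      exact le_antisymm (not_lt.1 this) (hl.1 y)
    exact (continuousAt_const).congr this.symm

/-- sup-convolution with a Gaussian profile (multiplicative Moreau envelope). -/
def supc (ρ : Euc n → ℝ) (l : ℝ) (x : Euc n) : ℝ :=
  ⨆ y, ρ y * Real.exp (-‖x - y‖ ^ 2 / (2 * l))

/-- Standing hypotheses on the density. -/
structure Good (ρ : Euc n → ℝ) (s C a : ℝ) : Prop where
  nonneg : ∀ x, 0 ≤ ρ x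
  Cpos : 0 < C
  apos : 0 < a
  bound : ∀ x, ρ x ≤ C * Real.exp (-a * ‖x‖)
  expos : ∃ y, 0 < ρ y
  spos : 0 ≤ s
  slc : ∀ x y : Euc n, ∀ p q : ℝ, 0 ≤ p → 0 ≤ q → p + q = 1 →
    ρ x ^ p * ρ y ^ q * Real.exp (p * q * (s / 2) * ‖x - y‖ ^ 2) ≤ ρ (p • x + q • y)

namespace Good
variable {ρ : Euc n → ℝ} {s C a : ℝ}

lemma term_le (h : Good ρ s C a) {l : ℝ} (hl : 0 < l) (x y : Euc n) : ρ y * Real.exp (-‖x - y‖ ^ 2 / (2 * l)) ≤ C := by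
  have h1 : Real.exp (-‖x - y‖ ^ 2 / (2 * l)) ≤ 1 := by
    rw [Real.exp_le_one_iff, neg_div]
    have : 0 ≤ ‖x - y‖ ^ 2 / (2 * l) := by positivity
    linarith
  have h2 : Real.exp (-a * ‖y‖) ≤ 1 := by
    rw [Real.exp_le_one_iff]
    have := mul_nonneg h.apos.le (norm_nonneg y)
    linarith
  have h3 := h.bound y
  have h4 := h.Cpos
  have h5 := h.nonneg y
  calc ρ y * Real.exp (-‖x - y‖ ^ 2 / (2 * l)) ≤ ρ y * 1 := by gcongr
    _ ≤ C * Real.exp (-a * ‖y‖) := by linarith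
    _ ≤ C * 1 := by gcongr
    _ = C := by ring

lemma bdd (h : Good ρ s C a) {l : ℝ} (hl : 0 < l) (x : Euc n) :
    BddAbove (range fun y => ρ y * Real.exp (-‖x - y‖ ^ 2 / (2 * l))) :=
  ⟨C, by rintro _ ⟨y, rfl⟩; exact h.term_le hl x y⟩

lemma le_supc (h : Good ρ s C a) {l : ℝ} (hl : 0 < l) (x y : Euc n) : ρ y * Real.exp (-‖x - y‖ ^ 2 / (2 * l)) ≤ supc ρ l x :=
  le_ciSup (h.bdd hl x) y

lemma self_le (h : Good ρ s C a) {l : ℝ} (hl : 0 < l) (x : Euc n) : ρ x ≤ supc ρ l x := by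
  simpa using h.le_supc hl x x

lemma supc_pos (h : Good ρ s C a) {l : ℝ} (hl : 0 < l) (x : Euc n) : 0 < supc ρ l x := by
  obtain ⟨y, hy⟩ := h.expos
  exact lt_of_lt_of_le (by positivity) (h.le_supc hl x y)

lemma supc_le (h : Good ρ s C a) {l : ℝ} (hl : 0 < l) (hl1 : l ≤ 1) (x : Euc n) :
    supc ρ l x ≤ (C * Real.exp (a ^ 2 / 2)) * Real.exp (-a * ‖x‖) := by
  apply ciSup_le
  intro y
  have hC := h.Cpos
  have ha := h.apos
  calc ρ y * Real.exp (-‖x - y‖ ^ 2 / (2 * l))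
      ≤ (C * Real.exp (-a * ‖y‖)) * Real.exp (-‖x - y‖ ^ 2 / (2 * l)) := by
        gcongr; exact h.bound y
    _ = C * Real.exp (-a * ‖y‖ + -‖x - y‖ ^ 2 / (2 * l)) := by rw [Real.exp_add]; ring
    _ ≤ C * Real.exp (a ^ 2 / 2 + -a * ‖x‖) := by
        refine mul_le_mul_of_nonneg_left (Real.exp_le_exp.2 ?_) hC.le
        have h1 : ‖x‖ ≤ ‖x - y‖ + ‖y‖ := by simpa using norm_add_le (x - y) y
        have h2 : -‖x - y‖ ^ 2 / (2 * l) ≤ -‖x - y‖ ^ 2 / 2 := by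
          rw [neg_div, neg_div, neg_le_neg_iff]
          gcongr; linarith
        nlinarith [sq_nonneg (‖x - y‖ - a)]
    _ = _ := by rw [Real.exp_add]; ring

lemma near (h : Good ρ s C a) {l : ℝ} (hl : 0 < l) (x : Euc n) (η : ℝ) (hη : 0 < η) :
    ∃ y, 0 < ρ y ∧ Real.log (supc ρ l x) - η < Real.log (ρ y) - ‖x - y‖ ^ 2 / (2 * l) := by
  have hp := h.supc_pos hl x
  have h1 : supc ρ l x * Real.exp (-η) < supc ρ l x := by
    have : Real.exp (-η) < 1 := by rw [Real.exp_lt_one_iff]; linarith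
    nlinarith
  obtain ⟨y, hy⟩ := exists_lt_of_lt_ciSup h1
  have hpos : 0 < ρ y := by
    rcases (h.nonneg y).eq_or_lt with h0 | h0
    · rw [← h0, zero_mul] at hy
      have : 0 < supc ρ l x * Real.exp (-η) := by positivity
      linarith
    · exact h0
  refine ⟨y, hpos, ?_⟩
  have h2 := Real.log_lt_log (by positivity) hy
  rw [Real.log_mul hp.ne' (by positivity), Real.log_mul hpos.ne' (by positivity), Real.log_exp,
    Real.log_exp] at h2
  rw [neg_div] at h2
  linarith

lemma log_lower (h : Good ρ s C a) {l : ℝ} (hl : 0 < l) (x y : Euc n) (hy : 0 < ρ y) :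
    Real.log (ρ y) - ‖x - y‖ ^ 2 / (2 * l) ≤ Real.log (supc ρ l x) := by
  have h2 := Real.log_le_log (by positivity) (h.le_supc hl x y)
  rw [Real.log_mul hy.ne' (by positivity), Real.log_exp, neg_div] at h2
  linarith

lemma symm_upper (h : Good ρ s C a) {l : ℝ} (hl : 0 < l) (x v : Euc n) :
    -Real.log (supc ρ l (x + v)) + -Real.log (supc ρ l (x - v)) - 2 * -Real.log (supc ρ l x)
      ≤ (1 / l) * ‖v‖ ^ 2 := by
  apply le_of_forall_pos_le_add
  intro η hη
  obtain ⟨y, hy, hy2⟩ := h.near hl x (η / 2) (by positivity)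
  have h1 := h.log_lower hl (x + v) y hy
  have h2 := h.log_lower hl (x - v) y hy
  have h3 : ‖x + v - y‖ ^ 2 + ‖x - v - y‖ ^ 2 = 2 * ‖x - y‖ ^ 2 + 2 * ‖v‖ ^ 2 := by
    have e1 : x + v - y = (x - y) + v := by abel
    have e2 : x - v - y = (x - y) - v := by abel
    rw [e1, e2]
    generalize x - y = z
    rw [norm_add_sq_real, norm_sub_sq_real]; ring
  have h4 : ‖x + v - y‖ ^ 2 / (2 * l) + ‖x - v - y‖ ^ 2 / (2 * l)
      = 2 * (‖x - y‖ ^ 2 / (2 * l)) + (1 / l) * ‖v‖ ^ 2 := by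
    rw [← add_div, h3]; field_simp
  linarith

lemma strong (h : Good ρ s C a) {l : ℝ} (hl : 0 < l) : StrongConvexOn univ (s / (1 + l * s)) (fun x => -Real.log (supc ρ l x)) := by
  refine ⟨convex_univ, fun x₁ _ x₂ _ p q hp hq hpq => ?_⟩
  have hs := h.spos
  simp only [smul_eq_mul]
  apply le_of_forall_pos_le_add
  intro η hη
  obtain ⟨y₁, hy₁, hy₁'⟩ := h.near hl x₁ η hη
  obtain ⟨y₂, hy₂, hy₂'⟩ := h.near hl x₂ η hη
  have h1 := h.slc y₁ y₂ p q hp hq hpq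
  have hpos : 0 < ρ (p • y₁ + q • y₂) := lt_of_lt_of_le (by positivity) h1
  have h2 := Real.log_le_log (by positivity) h1
  rw [Real.log_mul (by positivity) (by positivity), Real.log_mul (by positivity) (by positivity),
    Real.log_rpow hy₁, Real.log_rpow hy₂, Real.log_exp] at h2
  have h3 := h.log_lower hl (p • x₁ + q • x₂) _ hpos
  have key : ‖p • x₁ + q • x₂ - (p • y₁ + q • y₂)‖ ^ 2 =
      p * ‖x₁ - y₁‖ ^ 2 + q * ‖x₂ - y₂‖ ^ 2 - p * q * ‖(x₁ - x₂) - (y₁ - y₂)‖ ^ 2 := by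
    have e1 : p • x₁ + q • x₂ - (p • y₁ + q • y₂) = p • (x₁ - y₁) + q • (x₂ - y₂) := by module
    have e2 : (x₁ - x₂) - (y₁ - y₂) = (x₁ - y₁) - (x₂ - y₂) := by abel
    rw [e1, e2]
    generalize x₁ - y₁ = z₁
    generalize x₂ - y₂ = z₂
    rw [norm_add_sq_real, norm_sub_sq_real, norm_smul, norm_smul, real_inner_smul_left,
      real_inner_smul_right, mul_pow, mul_pow, Real.norm_eq_abs, Real.norm_eq_abs, sq_abs, sq_abs]
    have : q = 1 - p := by linarith
    subst this; ring
  have quad : s / (1 + l * s) / 2 * ‖x₁ - x₂‖ ^ 2 ≤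
      s / 2 * ‖y₁ - y₂‖ ^ 2 + ‖(x₁ - x₂) - (y₁ - y₂)‖ ^ 2 / (2 * l) := by
    set u := x₁ - x₂
    set w := y₁ - y₂
    have h4 : ‖u‖ ≤ ‖w‖ + ‖u - w‖ := by
      have := norm_add_le w (u - w)
      simpa using this
    set U := ‖u‖
    set W := ‖w‖
    set V := ‖u - w‖
    have hU : 0 ≤ U := norm_nonneg _
    have hW : 0 ≤ W := norm_nonneg _
    have hV : 0 ≤ V := norm_nonneg _
    have h5 : U ^ 2 ≤ (W + V) ^ 2 := by gcongr
    have hd : 0 < 1 + l * s := by positivity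
    have h6 : s / (1 + l * s) / 2 * (W + V) ^ 2 ≤ s / 2 * W ^ 2 + V ^ 2 / (2 * l) := by
      rw [div_div, div_mul_eq_mul_div, div_le_iff₀ (by positivity)]
      have : (s / 2 * W ^ 2 + V ^ 2 / (2 * l)) * ((1 + l * s) * 2) =
        s * (W + V) ^ 2 + (l * s * W - V) ^ 2 / l := by
        field_simp; ring
      rw [this]
      have : 0 ≤ (l * s * W - V) ^ 2 / l := by positivity
      linarith
    refine le_trans ?_ h6
    gcongr
  have hpq0 : 0 ≤ p * q := by positivity
  have quad' := mul_le_mul_of_nonneg_left quad hpq0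
  have k2 : ‖p • x₁ + q • x₂ - (p • y₁ + q • y₂)‖ ^ 2 / (2 * l) =
      p * (‖x₁ - y₁‖ ^ 2 / (2 * l)) + q * (‖x₂ - y₂‖ ^ 2 / (2 * l))
        - p * q * (‖(x₁ - x₂) - (y₁ - y₂)‖ ^ 2 / (2 * l)) := by
    rw [key]; ring
  have m1 := mul_le_mul_of_nonneg_left hy₁'.le hp
  have m2 := mul_le_mul_of_nonneg_left hy₂'.le hq
  have : q = 1 - p := by linarith
  subst this
  nlinarith

lemma growth (h : Good ρ s C a) {l : ℝ} (hl : 0 < l) : ∃ K : ℝ, ∀ x, |(-Real.log (supc ρ l x))| ≤ K * (1 + ‖x‖) ^ 2 := by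
  obtain ⟨y, hy⟩ := h.expos
  refine ⟨|Real.log C| + |Real.log (ρ y)| + (1 + ‖y‖) ^ 2 / (2 * l), fun x => ?_⟩
  have h1 := h.log_lower hl x y hy
  have h2 : Real.log (supc ρ l x) ≤ Real.log C :=
    Real.log_le_log (h.supc_pos hl x) (ciSup_le (h.term_le hl x))
  have h3 : ‖x - y‖ ^ 2 / (2 * l) ≤ (1 + ‖y‖) ^ 2 / (2 * l) * (1 + ‖x‖) ^ 2 := by
    have : ‖x - y‖ ≤ (1 + ‖y‖) * (1 + ‖x‖) := by
      have := norm_sub_le x y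
      nlinarith [norm_nonneg x, norm_nonneg y, mul_nonneg (norm_nonneg x) (norm_nonneg y)]
    rw [div_mul_eq_mul_div, ← mul_pow]
    gcongr
  have h4 : 1 ≤ (1 + ‖x‖) ^ 2 := by
    have := norm_nonneg x
    nlinarith
  have h5 : 0 ≤ (1 + ‖y‖) ^ 2 / (2 * l) * (1 + ‖x‖) ^ 2 := by positivity
  have m1 := mul_le_mul_of_nonneg_left h4 (abs_nonneg (Real.log C))
  have m2 := mul_le_mul_of_nonneg_left h4 (abs_nonneg (Real.log (ρ y)))
  have a1 := le_abs_self (Real.log C)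
  have a2 := neg_abs_le (Real.log (ρ y))
  have a3 := abs_nonneg (Real.log C)
  have a4 := abs_nonneg (Real.log (ρ y))
  rw [abs_neg, abs_le]
  constructor <;> nlinarith

lemma tendsto_supc (h : Good ρ s C a) (x : Euc n) (hx : ContinuousAt ρ x) :
    Tendsto (fun l => supc ρ l x) (𝓝[>] 0) (𝓝 (ρ x)) := by
  rw [tendsto_order]
  constructor
  · intro b hb
    filter_upwards [self_mem_nhdsWithin] with l hl
    exact lt_of_lt_of_le hb (h.self_le hl x)
  · intro b hb
    obtain ⟨b', hb1, hb2⟩ := exists_between hb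
    obtain ⟨δ, hδ, hball⟩ := Metric.eventually_nhds_iff.1 (hx.eventually (gt_mem_nhds hb1))
    have hb'pos : 0 < b' := lt_of_le_of_lt (h.nonneg x) hb1
    have hC := h.Cpos
    have ht : Tendsto (fun l : ℝ => C * Real.exp (-δ ^ 2 / 2 * l⁻¹)) (𝓝[>] 0) (𝓝 (C * 0)) := by
      apply Tendsto.const_mul
      apply Real.tendsto_exp_atBot.comp
      apply Tendsto.const_mul_atTop_of_neg _ tendsto_inv_nhdsGT_zero
      have : 0 < δ ^ 2 := by positivity
      linarith
    rw [mul_zero] at ht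
    filter_upwards [self_mem_nhdsWithin, ht.eventually (gt_mem_nhds hb'pos)] with l hl hl2
    have hl' : 0 < l := hl
    refine lt_of_le_of_lt (ciSup_le fun y => ?_) hb2
    by_cases hy : dist y x < δ
    · have h1 : Real.exp (-‖x - y‖ ^ 2 / (2 * l)) ≤ 1 := by
        rw [Real.exp_le_one_iff, neg_div]
        have : 0 ≤ ‖x - y‖ ^ 2 / (2 * l) := by positivity
        linarith
      have := hball hy
      have := h.nonneg y
      nlinarith
    · push Not at hy
      refine le_trans ?_ hl2.le
      have h2 : ρ y ≤ C := by simpa using h.term_le hl' y y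
      have h3 : -‖x - y‖ ^ 2 / (2 * l) ≤ -δ ^ 2 / 2 * l⁻¹ := by
        rw [dist_comm, dist_eq_norm] at hy
        have : -δ ^ 2 / 2 * l⁻¹ = -δ ^ 2 / (2 * l) := by field_simp
        rw [this]
        gcongr
      have := h.nonneg y
      gcongr

end Good

open scoped Convolution in
/-- Mollification. -/
def moll (φ : Euc n → ℝ) (b : ContDiffBump (0 : Euc n)) : Euc n → ℝ :=
  φ ⋆[ContinuousLinearMap.lsmul ℝ ℝ, volume] (b.normed volume)

lemma moll_eq (φ : Euc n → ℝ) (b : ContDiffBump (0 : Euc n)) (x : Euc n) :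
    moll φ b x = ∫ t, φ (x - t) * b.normed volume t := by
  unfold moll
  rw [convolution_lsmul_swap]
  rfl

lemma moll_eq' (φ : Euc n → ℝ) (b : ContDiffBump (0 : Euc n)) (x : Euc n) :
    moll φ b x = ∫ t, φ (x + t) * b.normed volume t := by
  rw [moll_eq, ← integral_neg_eq_self]
  simp [ContDiffBump.normed_neg]

lemma moll_integrable (φ : Euc n → ℝ) (hφ : Continuous φ) (b : ContDiffBump (0 : Euc n))
    (u : Euc n → Euc n) (hu : Continuous u) :
    Integrable (fun t => φ (u t) * b.normed volume t) := by
  apply Continuous.integrable_of_hasCompactSupport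
  · have := b.continuous_normed (μ := volume)
    fun_prop
  · exact HasCompactSupport.mul_left b.hasCompactSupport_normed

lemma conv_bound {F : Type} [NormedAddCommGroup F] [NormedSpace ℝ F]
    (φ : Euc n → ℝ) (K : ℝ) (hK : ∀ x, |φ x| ≤ K * (1 + ‖x‖) ^ 2)
    (g : Euc n → F) (hg : Continuous g) (hc : HasCompactSupport g) :
    ∃ C : ℝ, ∀ x, ‖convolution φ g (ContinuousLinearMap.lsmul ℝ ℝ) volume x‖
      ≤ C * (1 + ‖x‖) ^ 2 := by
  have hK0 : 0 ≤ K := by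
    have := (abs_nonneg _).trans (hK 0)
    simpa using this
  refine ⟨K * ∫ t, (1 + ‖t‖) ^ 2 * ‖g t‖, fun x => ?_⟩
  rw [convolution_lsmul_swap]
  have hInt : Integrable (fun t : Euc n => (1 + ‖t‖) ^ 2 * ‖g t‖) := by
    apply Continuous.integrable_of_hasCompactSupport
    · fun_prop
    · exact HasCompactSupport.mul_left hc.norm
  have h1 : ‖∫ t, φ (x - t) • g t‖ ≤ ∫ t, (K * (1 + ‖x‖) ^ 2) * ((1 + ‖t‖) ^ 2 * ‖g t‖) := by
    apply norm_integral_le_of_norm_le (hInt.const_mul _)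
    refine Eventually.of_forall fun t => ?_
    rw [norm_smul, Real.norm_eq_abs, ← mul_assoc]
    apply mul_le_mul_of_nonneg_right _ (norm_nonneg _)
    refine (hK _).trans ?_
    rw [mul_assoc, ← mul_pow]
    have : ‖x - t‖ ≤ ‖x‖ + ‖t‖ := norm_sub_le _ _
    have := mul_nonneg (norm_nonneg x) (norm_nonneg t)
    gcongr
    nlinarith
  rw [integral_const_mul] at h1
  linarith

lemma conv_growth (φ : Euc n → ℝ) (hφ : Continuous φ) (K : ℝ)
    (hK : ∀ x, |φ x| ≤ K * (1 + ‖x‖) ^ 2) (m : ℕ) :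
    ∀ (F : Type) [NormedAddCommGroup F] [NormedSpace ℝ F]
    (g : Euc n → F), ContDiff ℝ (⊤ : ℕ∞) g → HasCompactSupport g →
    ∃ C : ℝ, ∀ x, ‖iteratedFDeriv ℝ m
      (convolution φ g (ContinuousLinearMap.lsmul ℝ ℝ) volume) x‖ ≤ C * (1 + ‖x‖) ^ 2 := by
  induction m with
  | zero =>
    intro F _ _ g hg hc
    simp only [norm_iteratedFDeriv_zero]
    exact conv_bound φ K hK g hg.continuous hc
  | succ m ih =>
    intro F _ _ g hg hc
    have hfd : fderiv ℝ (convolution φ g (ContinuousLinearMap.lsmul ℝ ℝ) volume) =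
        convolution φ (fderiv ℝ g) (ContinuousLinearMap.lsmul ℝ ℝ) volume := by
      ext1 x
      have := hc.hasFDerivAt_convolution_right (ContinuousLinearMap.lsmul ℝ ℝ)
        (hφ.locallyIntegrable (μ := volume)) (hg.of_le (by simp)) x
      rw [this.fderiv]
      rfl
    obtain ⟨C, hC⟩ := ih (Euc n →L[ℝ] F) (fderiv ℝ g) (hg.fderiv_right (by simp))
      (hc.fderiv ℝ)
    refine ⟨C, fun x => ?_⟩
    rw [← norm_iteratedFDeriv_fderiv, hfd]
    exact hC x

/-- Potentials to be mollified. -/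
structure Pot (φ : Euc n → ℝ) (r Λ : ℝ) : Prop where
  sc : StrongConvexOn univ r φ
  rnn : 0 ≤ r
  up : ∀ x v, φ (x + v) + φ (x - v) - 2 * φ x ≤ Λ * ‖v‖ ^ 2
  gr : ∃ K : ℝ, ∀ x, |φ x| ≤ K * (1 + ‖x‖) ^ 2

lemma sc_lower {φ : Euc n → ℝ} {r : ℝ} (h : StrongConvexOn univ r φ) (x v : Euc n) :
    r * ‖v‖ ^ 2 ≤ φ (x + v) + φ (x - v) - 2 * φ x := by
  have := h.2 (mem_univ (x + v)) (mem_univ (x - v)) (show (0:ℝ) ≤ 1/2 by norm_num)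
    (show (0:ℝ) ≤ 1/2 by norm_num) (by norm_num)
  have e1 : (1/2:ℝ) • (x + v) + (1/2:ℝ) • (x - v) = x := by module
  have e2 : x + v - (x - v) = (2:ℝ) • v := by module
  simp only [e1, e2, norm_smul, smul_eq_mul] at this
  norm_num at this
  nlinarith

namespace Pot
variable {φ : Euc n → ℝ} {r Λ : ℝ}

lemma cont (h : Pot φ r Λ) : Continuous φ := by
  have h1 : ConvexOn ℝ univ φ := by
    have := h.sc.mono h.rnn
    simpa using this
  exact h1.locallyLipschitz.continuous

lemma moll_sc (h : Pot φ r Λ) (b : ContDiffBump (0 : Euc n)) :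
    StrongConvexOn univ r (moll φ b) := by
  refine ⟨convex_univ, fun x _ y _ p q hp hq hpq => ?_⟩
  simp only [moll_eq, smul_eq_mul]
  have hc := h.cont
  have i1 := (moll_integrable φ hc b (fun t => x - t) (by fun_prop)).const_mul p
  have i2 := (moll_integrable φ hc b (fun t => y - t) (by fun_prop)).const_mul q
  have i3 := (b.integrable_normed (μ := volume)).const_mul (p * q * (r / 2 * ‖x - y‖ ^ 2))
  have i4 := (moll_integrable φ hc b (fun t => p • x + q • y - t) (by fun_prop))
  have key := integral_mono i4 ((i1.add i2).sub i3) (fun t => by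
    have h1 := h.sc.2 (mem_univ (x - t)) (mem_univ (y - t)) hp hq hpq
    have e1 : p • (x - t) + q • (y - t) = p • x + q • y - t := by
      have : q = 1 - p := by linarith
      subst this; module
    have e2 : x - t - (y - t) = x - y := by abel
    rw [e1, e2] at h1
    simp only [smul_eq_mul] at h1
    have h2 := mul_le_mul_of_nonneg_right h1 (b.nonneg_normed (μ := volume) t)
    refine h2.trans (le_of_eq ?_)
    simp only [Pi.add_apply, Pi.sub_apply]
    ring)
  have e := integral_sub (i1.add i2) i3
  have e' := integral_add i1 i2
  simp only [Pi.add_apply, Pi.sub_apply, integral_const_mul, b.integral_normed, mul_one] at key e e'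
  rw [e, e'] at key
  exact key

lemma moll_up (h : Pot φ r Λ) (b : ContDiffBump (0 : Euc n)) (x v : Euc n) :
    moll φ b (x + v) + moll φ b (x - v) - 2 * moll φ b x ≤ Λ * ‖v‖ ^ 2 := by
  simp only [moll_eq]
  have hc := h.cont
  have i1 := (moll_integrable φ hc b (fun t => x + v - t) (by fun_prop))
  have i2 := (moll_integrable φ hc b (fun t => x - v - t) (by fun_prop))
  have i3 := (b.integrable_normed (μ := volume)).const_mul (Λ * ‖v‖ ^ 2)
  have i4 := (moll_integrable φ hc b (fun t => x - t) (by fun_prop)).const_mul 2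
  have key := integral_mono ((i1.add i2).sub i4) i3 (fun t => by
    have h1 := h.up (x - t) v
    have e1 : x - t + v = x + v - t := by abel
    have e2 : x - t - v = x - v - t := by abel
    rw [e1, e2] at h1
    have h2 := mul_le_mul_of_nonneg_right h1 (b.nonneg_normed (μ := volume) t)
    refine le_trans (le_of_eq ?_) h2
    simp only [Pi.add_apply, Pi.sub_apply]
    ring)
  have e := integral_sub (i1.add i2) i4
  have e' := integral_add i1 i2
  simp only [Pi.add_apply, Pi.sub_apply, integral_const_mul, b.integral_normed, mul_one] at key e e'
  rw [e, e'] at key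
  exact key

lemma le_moll (h : Pot φ r Λ) (b : ContDiffBump (0 : Euc n)) (x : Euc n) :
    φ x ≤ moll φ b x := by
  have hc := h.cont
  have i1 := (moll_integrable φ hc b (fun t => x + t) (by fun_prop))
  have i2 := (moll_integrable φ hc b (fun t => x - t) (by fun_prop))
  have i3 := (b.integrable_normed (μ := volume)).const_mul (2 * φ x)
  have key := integral_mono i3 (i1.add i2) (fun t => by
    have h1 := sc_lower h.sc x t
    have h0 : 0 ≤ r * ‖t‖ ^ 2 := mul_nonneg h.rnn (by positivity)
    have h2 := mul_le_mul_of_nonneg_right (show 2 * φ x ≤ φ (x + t) + φ (x - t) by linarith)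
      (b.nonneg_normed (μ := volume) t)
    refine h2.trans (le_of_eq ?_)
    simp only [Pi.add_apply]
    ring)
  have e' := integral_add i1 i2
  simp only [Pi.add_apply, integral_const_mul, b.integral_normed, mul_one] at key e'
  rw [e', ← moll_eq, ← moll_eq'] at key
  linarith

lemma moll_le (h : Pot φ r Λ) (hΛ : 0 ≤ Λ) (b : ContDiffBump (0 : Euc n)) (x : Euc n) :
    moll φ b x ≤ φ x + Λ * b.rOut ^ 2 / 2 := by
  have hc := h.cont
  have i1 := (moll_integrable φ hc b (fun t => x + t) (by fun_prop))
  have i2 := (moll_integrable φ hc b (fun t => x - t) (by fun_prop))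
  have i3 := (b.integrable_normed (μ := volume)).const_mul (2 * φ x + Λ * b.rOut ^ 2)
  have key := integral_mono (i1.add i2) i3 (fun t => by
    simp only [Pi.add_apply]
    by_cases ht : t ∈ ball (0 : Euc n) b.rOut
    · have h1 := h.up x t
      have h3 : ‖t‖ ≤ b.rOut := by simpa using (mem_ball_zero_iff.1 ht).le
      have h4 : Λ * ‖t‖ ^ 2 ≤ Λ * b.rOut ^ 2 := by gcongr
      have h2 := mul_le_mul_of_nonneg_right
        (show φ (x + t) + φ (x - t) ≤ 2 * φ x + Λ * b.rOut ^ 2 by linarith)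
        (b.nonneg_normed (μ := volume) t)
      linarith
    · rw [← b.support_normed_eq (μ := volume), Function.notMem_support] at ht
      simp [ht])
  have e' := integral_add i1 i2
  simp only [Pi.add_apply, integral_const_mul, b.integral_normed, mul_one] at key e'
  rw [e', ← moll_eq, ← moll_eq'] at key
  linarith

lemma moll_contDiff (h : Pot φ r Λ) (b : ContDiffBump (0 : Euc n)) :
    ContDiff ℝ (⊤ : ℕ∞) (moll φ b) :=
  b.hasCompactSupport_normed.contDiff_convolution_right _
    (h.cont.locallyIntegrable (μ := volume)) b.contDiff_normed

end Pot

lemma second_deriv_bounds (ψ : Euc n → ℝ) (hψ : ContDiff ℝ (⊤ : ℕ∞) ψ) (A B : ℝ)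
    (hA : ∀ x v, A * ‖v‖ ^ 2 ≤ ψ (x + v) + ψ (x - v) - 2 * ψ x)
    (hB : ∀ x v, ψ (x + v) + ψ (x - v) - 2 * ψ x ≤ B * ‖v‖ ^ 2) (x v : Euc n) :
    A * ‖v‖ ^ 2 ≤ iteratedFDeriv ℝ 2 ψ x ![v, v] ∧
    iteratedFDeriv ℝ 2 ψ x ![v, v] ≤ B * ‖v‖ ^ 2 := by
  rw [iteratedFDeriv_two_apply]
  simp only [Matrix.cons_val_zero, Matrix.cons_val_one]
  set D := (fderiv ℝ (fderiv ℝ ψ) x v) v with hD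
  have hdiff : Differentiable ℝ ψ := hψ.differentiable (by simp)
  have hdiff2 : Differentiable ℝ (fderiv ℝ ψ) :=
    (hψ.fderiv_right (m := 1) (by norm_cast)).differentiable (by simp)
  -- derivative along the line
  have hline : ∀ s : ℝ, HasDerivAt (fun s : ℝ => x + s • v) v s := fun s => by
    simpa using ((hasDerivAt_id s).smul_const v).const_add x
  have hline' : ∀ s : ℝ, HasDerivAt (fun s : ℝ => x - s • v) (-v) s := fun s => by
    simpa using ((hasDerivAt_id s).smul_const v).const_sub x
  have h1 : ∀ s : ℝ, HasDerivAt (fun s : ℝ => ψ (x + s • v) + ψ (x - s • v) - 2 * ψ x)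
      (fderiv ℝ ψ (x + s • v) v - fderiv ℝ ψ (x - s • v) v) s := fun s => by
    have a1 := (hdiff (x + s • v)).hasFDerivAt.comp_hasDerivAt s (hline s)
    have a2 := (hdiff (x - s • v)).hasFDerivAt.comp_hasDerivAt s (hline' s)
    have := (a1.add a2).sub_const (2 * ψ x)
    simpa [sub_eq_add_neg] using this
  have h2 : HasDerivAt (fun s : ℝ => fderiv ℝ ψ (x + s • v) v - fderiv ℝ ψ (x - s • v) v)
      (2 * D) 0 := by
    have hG : HasFDerivAt (fun y => fderiv ℝ ψ y v)
        ((ContinuousLinearMap.apply ℝ ℝ v).comp (fderiv ℝ (fderiv ℝ ψ) x)) x :=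
      (ContinuousLinearMap.apply ℝ ℝ v).hasFDerivAt.comp x (hdiff2 x).hasFDerivAt
    have a1 := hG.comp_hasDerivAt_of_eq (0:ℝ) (hline 0) (by simp)
    have a2 := hG.comp_hasDerivAt_of_eq (0:ℝ) (hline' 0) (by simp)
    have a3 := a1.sub a2
    have e : ((ContinuousLinearMap.apply ℝ ℝ v).comp (fderiv ℝ (fderiv ℝ ψ) x)) v -
        ((ContinuousLinearMap.apply ℝ ℝ v).comp (fderiv ℝ (fderiv ℝ ψ) x)) (-v) = 2 * D := by
      rw [map_neg, sub_neg_eq_add, two_mul]; rfl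
    rw [e] at a3
    exact a3
  have h3 : Tendsto (fun s : ℝ => (fderiv ℝ ψ (x + s • v) v - fderiv ℝ ψ (x - s • v) v) / (2 * s))
      (𝓝[>] 0) (𝓝 D) := by
    have := (hasDerivAt_iff_tendsto_slope.1 h2).mono_left
      (nhdsWithin_mono 0 (fun s (hs : 0 < s) => hs.ne') : 𝓝[>] (0:ℝ) ≤ 𝓝[≠] 0)
    have := this.div_const 2
    rw [mul_div_cancel_left₀ _ (two_ne_zero)] at this
    refine this.congr fun s => ?_
    simp [slope_def_field]
    ring
  have h4 : Tendsto (fun s : ℝ => (ψ (x + s • v) + ψ (x - s • v) - 2 * ψ x) / s ^ 2)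
      (𝓝[>] 0) (𝓝 D) := by
    apply HasDerivAt.lhopital_zero_nhdsGT (f' := fun s : ℝ =>
      (fderiv ℝ ψ (x + s • v) v - fderiv ℝ ψ (x - s • v) v)) (g' := fun s => 2 * s)
    · exact Eventually.of_forall h1
    · exact Eventually.of_forall fun s => by simpa using hasDerivAt_pow 2 s
    · filter_upwards [self_mem_nhdsWithin] with s hs
      have : (0:ℝ) < s := hs
      positivity
    · have := (h1 0).continuousAt.tendsto.mono_left (nhdsWithin_le_nhds (s := Ioi 0))
      simp only [zero_smul, add_zero, sub_zero] at this
      convert this using 2; ring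
    · have : Tendsto (fun s : ℝ => s ^ 2) (𝓝 0) (𝓝 (0 ^ 2)) := (continuous_pow 2).tendsto 0
      rw [zero_pow two_ne_zero] at this
      exact this.mono_left nhdsWithin_le_nhds
    · exact h3
  constructor
  · apply ge_of_tendsto h4
    filter_upwards [self_mem_nhdsWithin] with s hs
    have : (0:ℝ) < s := hs
    have := hA x (s • v)
    rw [norm_smul, mul_pow, Real.norm_eq_abs, sq_abs] at this
    rw [le_div_iff₀ (by positivity)]
    linarith
  · apply le_of_tendsto h4
    filter_upwards [self_mem_nhdsWithin] with s hs
    have : (0:ℝ) < s := hs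
    have := hB x (s • v)
    rw [norm_smul, mul_pow, Real.norm_eq_abs, sq_abs] at this
    rw [div_le_iff₀ (by positivity)]
    linarith

lemma Pot.regular {φ : Euc n → ℝ} {r Λ : ℝ} (h : Pot φ r Λ) (hr : 0 < r) (hΛ : 0 < Λ)
    (b : ContDiffBump (0 : Euc n)) : IsRegularPotential (moll φ b) := by
  refine ⟨h.moll_contDiff b, ⟨min r Λ⁻¹, by positivity, fun x v => ?_⟩, fun m => ?_⟩
  · obtain ⟨h1, h2⟩ := second_deriv_bounds (moll φ b) (h.moll_contDiff b) r Λ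
      (sc_lower (h.moll_sc b)) (h.moll_up b) x v
    constructor
    · refine le_trans ?_ h1
      gcongr
      exact min_le_left _ _
    · refine le_trans h2 ?_
      gcongr
      rw [le_inv_comm₀ hΛ (by positivity)]
      exact min_le_right _ _
  · obtain ⟨K, hK⟩ := h.gr
    obtain ⟨C, hC⟩ := conv_growth φ h.cont K hK m ℝ (b.normed volume) b.contDiff_normed
      b.hasCompactSupport_normed
    exact ⟨C, 2, hC⟩

lemma moll_add_const (φ : Euc n → ℝ) (hφ : Continuous φ) (c : ℝ) (b : ContDiffBump (0 : Euc n))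
    (x : Euc n) : moll (fun y => φ y + c) b x = moll φ b x + c := by
  simp only [moll_eq]
  have i1 := (moll_integrable φ hφ b (fun t => x - t) (by fun_prop))
  have i3 := (b.integrable_normed (μ := volume)).const_mul c
  have e' := integral_add i1 i3
  simp only [integral_const_mul, b.integral_normed, mul_one] at e'
  rw [← e']
  congr 1; ext t; ring

lemma locLip_ae_diff (f : Euc n → ℝ) (hf : LocallyLipschitz f) :
    ∀ᵐ x : Euc n, DifferentiableAt ℝ f x := by
  have h : ∀ k : ℕ, ∀ᵐ x : Euc n, x ∈ closedBall (0 : Euc n) k →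
      DifferentiableWithinAt ℝ f (closedBall (0 : Euc n) k) x := by
    intro k
    obtain ⟨K, hK⟩ := LocallyLipschitzOn.exists_lipschitzOnWith_of_compact
      (isCompact_closedBall (0 : Euc n) (k : ℝ)) (hf.locallyLipschitzOn (s := _))
    exact hK.ae_differentiableWithinAt_of_mem
  filter_upwards [ae_all_iff.2 h] with x hx
  obtain ⟨k, hk⟩ := exists_nat_gt ‖x‖
  have hb : x ∈ ball (0 : Euc n) k := by simpa using hk
  exact (hx k (ball_subset_closedBall hb)).differentiableAt
    (mem_of_superset (isOpen_ball.mem_nhds hb) ball_subset_closedBall)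

/-- Squared gradient, infinite where `f` is not differentiable. -/
def Gp (f : Euc n → ℝ) (z : Euc n) : ℝ≥0∞ :=
  open Classical in
  if DifferentiableAt ℝ f z then ENNReal.ofReal (‖gradient f z‖ ^ 2) else ⊤

lemma norm_gradient (f : Euc n → ℝ) (z : Euc n) : ‖gradient f z‖ = ‖fderiv ℝ f z‖ := by
  unfold gradient
  simp

lemma measurable_norm_gradient (f : Euc n → ℝ) : Measurable (fun z => ‖gradient f z‖) := by
  simp_rw [norm_gradient]
  exact (measurable_fderiv ℝ f).norm

lemma measurable_Gp (f : Euc n → ℝ) : Measurable (Gp f) := by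
  unfold Gp
  refine Measurable.ite (measurableSet_of_differentiableAt ℝ f) ?_ measurable_const
  exact ((measurable_norm_gradient f).pow_const 2).ennreal_ofReal

lemma Gp_ae (f : Euc n → ℝ) (hf : LocallyLipschitz f) :
    Gp f =ᵐ[volume] fun z => ENNReal.ofReal (‖gradient f z‖ ^ 2) := by
  filter_upwards [locLip_ae_diff f hf] with x hx
  simp [Gp, hx]

lemma jensen_sq {α : Type*} [MeasurableSpace α] (μ : Measure α) [IsProbabilityMeasure μ]
    (F : α → ℝ≥0∞) (hF : AEMeasurable F μ) : (∫⁻ x, F x ∂μ) ^ 2 ≤ ∫⁻ x, F x ^ 2 ∂μ := by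
  have h := ENNReal.lintegral_mul_le_Lp_mul_Lq μ (p := 2) (q := 2)
    Real.HolderConjugate.two_two hF (aemeasurable_const (b := (1:ℝ≥0∞)))
  simp only [Pi.mul_apply, mul_one, ENNReal.one_rpow, lintegral_const, measure_univ] at h
  calc (∫⁻ x, F x ∂μ) ^ 2 ≤ ((∫⁻ x, F x ^ (2:ℝ) ∂μ) ^ (1/2 : ℝ)) ^ 2 := by gcongr
    _ = ∫⁻ x, F x ^ 2 ∂μ := by
      rw [← ENNReal.rpow_natCast, ← ENNReal.rpow_mul]
      norm_num

/-- Smooth-step function. -/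
def ss (τ : ℝ) : ℝ := τ ^ 2 * (3 - 2 * τ)

lemma ss_hasDerivAt (τ : ℝ) : HasDerivAt ss (6 * τ * (1 - τ)) τ := by
  have h := ((hasDerivAt_id τ).pow 2).mul (((hasDerivAt_id τ).const_mul 2).const_sub 3)
  refine h.congr_deriv ?_
  simp
  ring

lemma ss_continuous : Continuous ss := by unfold ss; fun_prop

lemma seg (f : Euc n → ℝ) (hf : LocallyLipschitz f) (x u : Euc n) :
    ENNReal.ofReal ((f (x + u) - f x) ^ 2) ≤ ∫⁻ τ in Icc (0:ℝ) 1,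
      Gp f (x + ss τ • u) * ENNReal.ofReal ((6 * τ * (1 - τ)) ^ 2 * ‖u‖ ^ 2) := by
  by_cases hu : u = 0
  · simp [hu]
  by_cases hT : ∫⁻ τ in Icc (0:ℝ) 1,
      Gp f (x + ss τ • u) * ENNReal.ofReal ((6 * τ * (1 - τ)) ^ 2 * ‖u‖ ^ 2) = ⊤
  · rw [hT]; exact le_top
  have hz : Continuous fun τ : ℝ => x + ss τ • u := by
    have := ss_continuous; fun_prop
  have hmeas : Measurable fun τ : ℝ =>
      Gp f (x + ss τ • u) * ENNReal.ofReal ((6 * τ * (1 - τ)) ^ 2 * ‖u‖ ^ 2) := by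
    refine ((measurable_Gp f).comp hz.measurable).mul ?_
    exact Measurable.ennreal_ofReal (by fun_prop)
  have hfin := ae_lt_top hmeas hT
  set h : ℝ → ℝ := fun τ => f (x + ss τ • u) with hh
  have hlip : LocallyLipschitz h := by
    have h1 : LocallyLipschitz fun τ : ℝ => x + ss τ • u := by
      have : ContDiff ℝ 1 fun τ : ℝ => x + ss τ • u := by unfold ss; fun_prop
      exact this.locallyLipschitz
    exact hf.comp h1
  obtain ⟨K, hK⟩ := LocallyLipschitzOn.exists_lipschitzOnWith_of_compact
      (isCompact_uIcc (a := (0:ℝ)) (b := 1)) (hlip.locallyLipschitzOn (s := _))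
  have hftc := hK.absolutelyContinuousOnInterval.integral_deriv_eq_sub
  have e1 : h 1 - h 0 = f (x + u) - f x := by simp [hh, ss]; norm_num
  rw [e1, intervalIntegral.integral_of_le zero_le_one, ← integral_Icc_eq_integral_Ioc] at hftc
  have : IsProbabilityMeasure (volume.restrict (Icc (0:ℝ) 1)) := ⟨by simp⟩
  have hdm : Measurable (deriv h) := measurable_deriv h
  calc ENNReal.ofReal ((f (x + u) - f x) ^ 2) = ‖∫ τ in Icc (0:ℝ) 1, deriv h τ‖ₑ ^ 2 := by
        rw [hftc, ← ofReal_norm_eq_enorm, ← ENNReal.ofReal_pow (norm_nonneg _), Real.norm_eq_abs,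
          sq_abs]
    _ ≤ (∫⁻ τ in Icc (0:ℝ) 1, ‖deriv h τ‖ₑ) ^ 2 := by
        gcongr; exact enorm_integral_le_lintegral_enorm _
    _ ≤ ∫⁻ τ in Icc (0:ℝ) 1, ‖deriv h τ‖ₑ ^ 2 := jensen_sq _ _ hdm.enorm.aemeasurable
    _ ≤ _ := by
      apply lintegral_mono_ae
      have hne : ∀ᵐ τ ∂(volume.restrict (Icc (0:ℝ) 1)), τ ≠ 0 ∧ τ ≠ 1 := by
        apply ae_restrict_of_ae
        have a1 : ∀ᵐ τ : ℝ, τ ≠ 0 := by simp [ae_iff]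
        have a2 : ∀ᵐ τ : ℝ, τ ≠ 1 := by simp [ae_iff]
        filter_upwards [a1, a2] with τ h1 h2 using ⟨h1, h2⟩
      filter_upwards [hfin, hne] with τ hτ hn
      have hd : DifferentiableAt ℝ f (x + ss τ • u) := by
        by_contra hcon
        rw [Gp, if_neg hcon, ENNReal.top_mul] at hτ
        · exact lt_irrefl _ hτ
        · have : 0 < (6 * τ * (1 - τ)) ^ 2 * ‖u‖ ^ 2 := by
            have h1 : 1 - τ ≠ 0 := sub_ne_zero.2 (Ne.symm hn.2)
            have h2 := hn.1
            positivity
          simpa using this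
      have hda : HasDerivAt h (fderiv ℝ f (x + ss τ • u) ((6 * τ * (1 - τ)) • u)) τ := by
        have h1 : HasDerivAt (fun τ : ℝ => x + ss τ • u) ((6 * τ * (1 - τ)) • u) τ :=
          ((ss_hasDerivAt τ).smul_const u).const_add x
        exact hd.hasFDerivAt.comp_hasDerivAt τ h1
      rw [hda.deriv, Gp, if_pos hd, ← ENNReal.ofReal_mul (by positivity), ← ofReal_norm_eq_enorm,
        ← ENNReal.ofReal_pow (norm_nonneg _)]
      apply ENNReal.ofReal_le_ofReal
      have := (fderiv ℝ f (x + ss τ • u)).le_opNorm ((6 * τ * (1 - τ)) • u)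
      rw [norm_smul] at this
      calc _ ≤ (‖fderiv ℝ f (x + ss τ • u)‖ * (‖6 * τ * (1 - τ)‖ * ‖u‖)) ^ 2 := by gcongr
        _ = _ := by
          rw [norm_gradient, mul_pow, mul_pow, Real.norm_eq_abs, sq_abs]

lemma ss_mem {τ : ℝ} (h : τ ∈ Icc (0:ℝ) 1) : 0 ≤ ss τ ∧ 0 ≤ 1 - ss τ := by
  obtain ⟨h0, h1⟩ := h
  have e : 1 - ss τ = (1 - τ) ^ 2 * (1 + 2 * τ) := by unfold ss; ring
  refine ⟨?_, ?_⟩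
  · unfold ss
    have : 0 ≤ 3 - 2 * τ := by linarith
    positivity
  · rw [e]; positivity

lemma ss_deriv_sq {τ : ℝ} (h : τ ∈ Icc (0:ℝ) 1) :
    (6 * τ * (1 - τ)) ^ 2 ≤ 12 * (ss τ * (1 - ss τ)) := by
  obtain ⟨h0, h1⟩ := h
  have e : 12 * (ss τ * (1 - ss τ)) - (6 * τ * (1 - τ)) ^ 2
      = 48 * (τ * (1 - τ)) ^ 2 * (τ * (1 - τ)) := by unfold ss; ring
  have : 0 ≤ τ * (1 - τ) := mul_nonneg h0 (by linarith)
  have : 0 ≤ 48 * (τ * (1 - τ)) ^ 2 * (τ * (1 - τ)) := by positivity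
  linarith

lemma qexp (δ q : ℝ) (hδ : 0 < δ) :
    12 * q * Real.exp (-(δ * q)) ≤ 24 / δ * Real.exp (-(δ / 2 * q)) := by
  have h1 : δ / 2 * q ≤ Real.exp (δ / 2 * q) := by linarith [Real.add_one_le_exp (δ / 2 * q)]
  have e : Real.exp (-(δ * q)) = Real.exp (-(δ / 2 * q)) * Real.exp (-(δ / 2 * q)) := by
    rw [← Real.exp_add]; ring_nf
  have h2 : Real.exp (δ / 2 * q) * Real.exp (-(δ / 2 * q)) = 1 := by
    rw [← Real.exp_add]; simp
  have hp := Real.exp_pos (-(δ / 2 * q))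
  rw [e]
  generalize Real.exp (-(δ / 2 * q)) = A at *
  generalize Real.exp (δ / 2 * q) = B at *
  have h3 : δ / 2 * q * (A * A) ≤ A := by
    calc _ ≤ B * (A * A) := mul_le_mul_of_nonneg_right h1 (mul_pos hp hp).le
      _ = A := by rw [← mul_assoc, h2, one_mul]
  have : 12 * q * (A * A) = 24 / δ * (δ / 2 * q * (A * A)) := by field_simp; ring
  rw [this]
  gcongr

/-- The transport kernel. -/
def kk (δ τ : ℝ) (u : Euc n) : ℝ≥0∞ :=
  ENNReal.ofReal (24 / δ * Real.exp (-(δ / 2 * (ss τ * (1 - ss τ) * ‖u‖ ^ 2))))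

/-- The density. -/
def ww (ψ : Euc n → ℝ) (x : Euc n) : ℝ≥0∞ := ENNReal.ofReal (Real.exp (-ψ x))

lemma ww_mul (ψ : Euc n → ℝ) (δ : ℝ) (hδ : 0 < δ) (hψ : StrongConvexOn univ δ ψ)
    (x u : Euc n) {τ : ℝ} (hτ : τ ∈ Icc (0:ℝ) 1) :
    ww ψ x * ww ψ (x + u) * ENNReal.ofReal ((6 * τ * (1 - τ)) ^ 2 * ‖u‖ ^ 2) ≤
      ww ψ (x + ss τ • u) * ww ψ (x + ss τ • u + (1 - 2 * ss τ) • u) * kk δ τ u := by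
  obtain ⟨h0, h1⟩ := ss_mem hτ
  have hd := ss_deriv_sq hτ
  set s := ss τ
  have a1 := hψ.2 (mem_univ x) (mem_univ (x + u)) h1 h0 (by ring)
  have a2 := hψ.2 (mem_univ x) (mem_univ (x + u)) h0 h1 (by ring)
  have e1 : (1 - s) • x + s • (x + u) = x + s • u := by module
  have e2 : s • x + (1 - s) • (x + u) = x + s • u + (1 - 2 * s) • u := by module
  have e3 : ‖x - (x + u)‖ = ‖u‖ := by simp
  rw [e1, e3] at a1
  rw [e2, e3] at a2
  simp only [smul_eq_mul] at a1 a2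
  unfold ww kk
  rw [← ENNReal.ofReal_mul (Real.exp_pos _).le, ← ENNReal.ofReal_mul (Real.exp_pos _).le,
    ← ENNReal.ofReal_mul (by positivity), ← ENNReal.ofReal_mul (by positivity)]
  apply ENNReal.ofReal_le_ofReal
  rw [← Real.exp_add, ← Real.exp_add]
  set q := s * (1 - s) * ‖u‖ ^ 2 with hq
  have hb : (6 * τ * (1 - τ)) ^ 2 * ‖u‖ ^ 2 ≤ 12 * q := by
    rw [hq]
    nlinarith [mul_le_mul_of_nonneg_right hd (sq_nonneg ‖u‖)]
  have hexp : Real.exp (-ψ x + -ψ (x + u)) ≤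
      Real.exp (-ψ (x + s • u) + -ψ (x + s • u + (1 - 2 * s) • u)) * Real.exp (-(δ * q)) := by
    rw [← Real.exp_add]
    apply Real.exp_le_exp.2
    rw [hq]
    nlinarith [a1, a2]
  calc _ ≤ (Real.exp (-ψ (x + s • u) + -ψ (x + s • u + (1 - 2 * s) • u)) * Real.exp (-(δ * q)))
        * (12 * q) := by
        gcongr
    _ = Real.exp (-ψ (x + s • u) + -ψ (x + s • u + (1 - 2 * s) • u)) *
        (12 * q * Real.exp (-(δ * q))) := by ring
    _ ≤ _ := by
      exact mul_le_mul_of_nonneg_left (qexp δ q hδ) (Real.exp_pos _).le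

lemma gauss_fin (c : ℝ) (hc : 0 < c) :
    ∫⁻ u : Euc n, ENNReal.ofReal (Real.exp (-(c * ‖u‖ ^ 2))) < ⊤ := by
  have h := GaussianFourier.integrable_cexp_neg_mul_sq_norm_add (V := Euc n) (b := (c : ℂ))
    (by simpa using hc) 0 0
  have h2 := h.norm.lintegral_lt_top
  refine lt_of_eq_of_lt ?_ h2
  congr 1
  ext u
  congr 1
  rw [Complex.norm_exp]
  simp [← Complex.ofReal_pow]

lemma ww_meas {ψ : Euc n → ℝ} (hc : Continuous ψ) : Measurable (ww ψ) := by
  unfold ww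
  exact (by fun_prop : Measurable fun x => Real.exp (-ψ x)).ennreal_ofReal

lemma kernel_bound (ψ : Euc n → ℝ) (δ M : ℝ) (hδ : 0 < δ) (hc : Continuous ψ)
    (hM : ∀ x, Real.exp (-ψ x) ≤ M) (h1 : ∫⁻ x, ww ψ x = 1) (z : Euc n) {τ : ℝ}
    (hτ : τ ∈ Icc (0:ℝ) 1) :
    ∫⁻ u, ww ψ (z + (1 - 2 * ss τ) • u) * kk δ τ u ≤
      ENNReal.ofReal (24 / δ) * (ENNReal.ofReal (2 ^ n) + ENNReal.ofReal M *
        ∫⁻ u : Euc n, ENNReal.ofReal (Real.exp (-(3 * δ / 32 * ‖u‖ ^ 2)))) := by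
  obtain ⟨h0, h0'⟩ := ss_mem hτ
  set s := ss τ with hs
  by_cases hcase : 1 / 2 ≤ |1 - 2 * s|
  · have hne : 1 - 2 * s ≠ 0 := by
      intro h; rw [h] at hcase; norm_num at hcase
    have b : ∀ u, ww ψ (z + (1 - 2 * s) • u) * kk δ τ u ≤
        ENNReal.ofReal (24 / δ) * ww ψ (z + (1 - 2 * s) • u) := by
      intro u
      rw [mul_comm]
      gcongr
      unfold kk
      apply ENNReal.ofReal_le_ofReal
      apply mul_le_of_le_one_right (by positivity)
      apply Real.exp_le_one_iff.2
      have : 0 ≤ ss τ * (1 - ss τ) := mul_nonneg h0 h0'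
      have : 0 ≤ δ / 2 * (ss τ * (1 - ss τ) * ‖u‖ ^ 2) := by positivity
      linarith
    have hmw := ww_meas hc
    have hmz : Measurable fun v => ww ψ (z + v) := hmw.comp (by fun_prop)
    have key : ∫⁻ u, ww ψ (z + (1 - 2 * s) • u) = ENNReal.ofReal |((1 - 2 * s) ^ n)⁻¹| := by
      have e := Measure.map_addHaar_smul (volume : Measure (Euc n)) hne
      rw [← lintegral_map (f := fun v => ww ψ (z + v)) hmz (measurable_const_smul (1 - 2 * s)), e,
        lintegral_smul_measure, lintegral_add_left_eq_self, h1]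
      simp
    refine (lintegral_mono b).trans ?_
    have hmc : Measurable fun u => ww ψ (z + (1 - 2 * s) • u) :=
      hmz.comp (measurable_const_smul (1 - 2 * s))
    rw [lintegral_const_mul _ hmc]
    refine (mul_le_mul_right key.le _).trans ?_
    gcongr
    refine le_trans ?_ le_self_add
    apply ENNReal.ofReal_le_ofReal
    rw [abs_inv, abs_pow, ← inv_pow]
    gcongr
    rw [inv_le_comm₀ (by linarith) (by norm_num)]
    simpa using hcase
  · have hlt : |1 - 2 * s| < 1 / 2 := not_le.1 hcase
    have hss : 3 / 16 ≤ s * (1 - s) := by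
      have := abs_lt.1 hlt
      nlinarith
    have b : ∀ u : Euc n, ww ψ (z + (1 - 2 * s) • u) * kk δ τ u ≤
        ENNReal.ofReal (24 / δ) * (ENNReal.ofReal M *
          ENNReal.ofReal (Real.exp (-(3 * δ / 32 * ‖u‖ ^ 2)))) := by
      intro u
      have a1 : ww ψ (z + (1 - 2 * s) • u) ≤ ENNReal.ofReal M :=
        ENNReal.ofReal_le_ofReal (hM _)
      have a2 : kk δ τ u ≤ ENNReal.ofReal (24 / δ) *
          ENNReal.ofReal (Real.exp (-(3 * δ / 32 * ‖u‖ ^ 2))) := by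
        unfold kk
        rw [← ENNReal.ofReal_mul (by positivity)]
        apply ENNReal.ofReal_le_ofReal
        refine mul_le_mul_of_nonneg_left (Real.exp_le_exp.2 ?_) (by positivity)
        rw [← hs]
        nlinarith [mul_le_mul_of_nonneg_left hss (mul_nonneg hδ.le (sq_nonneg ‖u‖))]
      calc _ ≤ _ := mul_le_mul' a1 a2
        _ = _ := by ring
    refine (lintegral_mono b).trans ?_
    have m : Measurable fun u : Euc n => ENNReal.ofReal (Real.exp (-(3 * δ / 32 * ‖u‖ ^ 2))) :=
      Measurable.ennreal_ofReal (by fun_prop)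
    rw [lintegral_const_mul _ (m.const_mul _), lintegral_const_mul _ m]
    gcongr
    exact le_add_self

lemma swap_bound (H w : Euc n → ℝ≥0∞) (k : ℝ → Euc n → ℝ≥0∞) (σ : ℝ → ℝ) (hHm : Measurable H)
    (hw : Measurable w) (hkm : Measurable fun p : ℝ × Euc n => k p.1 p.2) (hs : Continuous σ)
    (C0 : ℝ≥0∞)
    (hk : ∀ z : Euc n, ∀ τ ∈ Icc (0:ℝ) 1, ∫⁻ u, w (z + (1 - 2 * σ τ) • u) * k τ u ≤ C0) :
    ∫⁻ u, ∫⁻ x, ∫⁻ τ in Icc (0:ℝ) 1,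
        H (x + σ τ • u) * (w (x + σ τ • u + (1 - 2 * σ τ) • u) * k τ u) ≤ C0 * ∫⁻ z, H z := by
  have mI : Measurable fun p : (Euc n × Euc n) × ℝ =>
      H (p.1.2 + σ p.2 • p.1.1) * (w (p.1.2 + σ p.2 • p.1.1 + (1 - 2 * σ p.2) • p.1.1) *
        k p.2 p.1.1) := by
    have mz : Measurable fun p : (Euc n × Euc n) × ℝ => p.1.2 + σ p.2 • p.1.1 :=
      Continuous.measurable (by fun_prop)
    have mz' : Measurable fun p : (Euc n × Euc n) × ℝ =>
        p.1.2 + σ p.2 • p.1.1 + (1 - 2 * σ p.2) • p.1.1 :=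
      Continuous.measurable (by fun_prop)
    have m1 := hHm.comp mz
    have m2 := hw.comp mz'
    have m3 : Measurable fun p : (Euc n × Euc n) × ℝ => k p.2 p.1.1 :=
      hkm.comp (measurable_snd.prodMk (measurable_fst.comp measurable_fst))
    exact m1.mul (m2.mul m3)
  have mJ : Measurable fun p : (Euc n × ℝ) × Euc n =>
      H p.2 * (w (p.2 + (1 - 2 * σ p.1.2) • p.1.1) * k p.1.2 p.1.1) := by
    have m1 : Measurable fun p : (Euc n × ℝ) × Euc n => H p.2 := hHm.comp measurable_snd
    have mz : Measurable fun p : (Euc n × ℝ) × Euc n => p.2 + (1 - 2 * σ p.1.2) • p.1.1 :=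
      Continuous.measurable (by fun_prop)
    have m2 := hw.comp mz
    have m3 : Measurable fun p : (Euc n × ℝ) × Euc n => k p.1.2 p.1.1 :=
      hkm.comp (f := fun p : (Euc n × ℝ) × Euc n => (p.1.2, p.1.1)) (by fun_prop)
    exact m1.mul (m2.mul m3)
  calc ∫⁻ u, ∫⁻ x, ∫⁻ τ in Icc (0:ℝ) 1,
        H (x + σ τ • u) * (w (x + σ τ • u + (1 - 2 * σ τ) • u) * k τ u)
      = ∫⁻ u, ∫⁻ τ in Icc (0:ℝ) 1, ∫⁻ x,
        H (x + σ τ • u) * (w (x + σ τ • u + (1 - 2 * σ τ) • u) * k τ u) := by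
        congr 1; ext u
        rw [lintegral_lintegral_swap]
        exact (mI.comp (f := fun p : Euc n × ℝ => ((u, p.1), p.2)) (by fun_prop)).aemeasurable
    _ = ∫⁻ u, ∫⁻ τ in Icc (0:ℝ) 1, ∫⁻ z,
        H z * (w (z + (1 - 2 * σ τ) • u) * k τ u) := by
        congr 1; ext u
        congr 1; ext τ
        exact lintegral_add_right_eq_self
          (fun z => H z * (w (z + (1 - 2 * σ τ) • u) * k τ u)) (σ τ • u)
    _ = ∫⁻ τ in Icc (0:ℝ) 1, ∫⁻ u, ∫⁻ z,
        H z * (w (z + (1 - 2 * σ τ) • u) * k τ u) := by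
        rw [lintegral_lintegral_swap]
        apply Measurable.aemeasurable
        exact mJ.lintegral_prod_right'
    _ = ∫⁻ τ in Icc (0:ℝ) 1, ∫⁻ z, ∫⁻ u,
        H z * (w (z + (1 - 2 * σ τ) • u) * k τ u) := by
        congr 1; ext τ
        rw [lintegral_lintegral_swap]
        exact (mJ.comp (f := fun p : Euc n × Euc n => ((p.1, τ), p.2)) (by fun_prop)).aemeasurable
    _ ≤ ∫⁻ τ in Icc (0:ℝ) 1, C0 * ∫⁻ z, H z := by
        apply setLIntegral_mono' measurableSet_Icc
        intro τ hτ
        rw [← lintegral_const_mul _ hHm]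
        apply lintegral_mono
        intro z
        have m2 : Measurable fun u => w (z + (1 - 2 * σ τ) • u) := by
          have : Measurable fun u : Euc n => z + (1 - 2 * σ τ) • u :=
            Continuous.measurable (by fun_prop)
          exact hw.comp this
        have m3 : Measurable fun u => k τ u :=
          hkm.comp (f := fun p : Euc n => (τ, p)) (by fun_prop)
        have : Measurable fun u => w (z + (1 - 2 * σ τ) • u) * k τ u := m2.mul m3
        calc _ = H z * ∫⁻ u, w (z + (1 - 2 * σ τ) • u) * k τ u := lintegral_const_mul _ this
          _ ≤ H z * C0 := by gcongr; exact hk z τ hτ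
          _ = _ := mul_comm _ _
    _ = _ := by simp

lemma kk_meas (δ : ℝ) : Measurable fun p : ℝ × Euc n => kk δ p.1 p.2 := by
  have hs := ss_continuous
  unfold kk
  apply Measurable.ennreal_ofReal
  apply Continuous.measurable
  fun_prop

lemma transport_pt (ψ : Euc n → ℝ) (δ : ℝ) (hδ : 0 < δ)
    (hψ : StrongConvexOn univ δ ψ) (f : Euc n → ℝ) (hf : LocallyLipschitz f) (u x : Euc n) :
    ww ψ x * ww ψ (x + u) * ENNReal.ofReal ((f (x + u) - f x) ^ 2) ≤
      ∫⁻ τ in Icc (0:ℝ) 1, Gp f (x + ss τ • u) * ww ψ (x + ss τ • u) *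
        (ww ψ (x + ss τ • u + (1 - 2 * ss τ) • u) * kk δ τ u) := by
  have hfin : ww ψ x * ww ψ (x + u) ≠ ⊤ := by
    unfold ww; exact ENNReal.mul_ne_top ENNReal.ofReal_ne_top ENNReal.ofReal_ne_top
  refine (mul_le_mul_right (seg f hf x u) _).trans ?_
  rw [← lintegral_const_mul' _ _ hfin]
  apply setLIntegral_mono' measurableSet_Icc
  intro τ hτ
  have := mul_le_mul_right (ww_mul ψ δ hδ hψ x u hτ) (Gp f (x + ss τ • u))
  refine le_trans (le_of_eq ?_) (this.trans (le_of_eq ?_)) <;> ring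

lemma transport (ψ : Euc n → ℝ) (δ : ℝ) (hδ : 0 < δ) (hc : Continuous ψ)
    (hψ : StrongConvexOn univ δ ψ) (C0 : ℝ≥0∞)
    (hk : ∀ z : Euc n, ∀ τ ∈ Icc (0:ℝ) 1, ∫⁻ u, ww ψ (z + (1 - 2 * ss τ) • u) * kk δ τ u ≤ C0)
    (f : Euc n → ℝ) (hf : LocallyLipschitz f) :
    ∫⁻ u, ∫⁻ x, ww ψ x * ww ψ (x + u) * ENNReal.ofReal ((f (x + u) - f x) ^ 2) ≤
      C0 * ∫⁻ z, Gp f z * ww ψ z := by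
  refine le_trans ?_ (swap_bound (fun z => Gp f z * ww ψ z) (ww ψ) (kk δ) ss
    ((measurable_Gp f).mul (ww_meas hc)) (ww_meas hc) (kk_meas δ) ss_continuous C0 hk)
  exact lintegral_mono fun u => lintegral_mono fun x => transport_pt ψ δ hδ hψ f hf u x

lemma poincare_nonempty (ψ : Euc n → ℝ) (δ M : ℝ) (hδ : 0 < δ) (hc : Continuous ψ)
    (hψ : StrongConvexOn univ δ ψ) (hM : ∀ x, Real.exp (-ψ x) ≤ M)
    (hP : IsProbabilityMeasure (volume.withDensity fun x => ENNReal.ofReal (Real.exp (-ψ x)))) :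
    (poincareSet (volume.withDensity fun x => ENNReal.ofReal (Real.exp (-ψ x)))).Nonempty := by
  have h1 : ∫⁻ x, ww ψ x = 1 := by
    have := hP.measure_univ
    rwa [withDensity_apply _ MeasurableSet.univ, Measure.restrict_univ] at this
  set C0 : ℝ≥0∞ := ENNReal.ofReal (24 / δ) * (ENNReal.ofReal (2 ^ n) + ENNReal.ofReal M *
        ∫⁻ u : Euc n, ENNReal.ofReal (Real.exp (-(3 * δ / 32 * ‖u‖ ^ 2)))) with hC0
  have hC0t : C0 ≠ ⊤ := by
    refine ENNReal.mul_ne_top ENNReal.ofReal_ne_top (ENNReal.add_ne_top.2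
      ⟨ENNReal.ofReal_ne_top, ENNReal.mul_ne_top ENNReal.ofReal_ne_top ?_⟩)
    exact (gauss_fin _ (by positivity)).ne
  have hw := ww_meas hc
  change (poincareSet (volume.withDensity (ww ψ))).Nonempty
  change IsProbabilityMeasure (volume.withDensity (ww ψ)) at hP
  set ν := volume.withDensity (ww ψ) with hν
  refine ⟨C0.toReal, ENNReal.toReal_nonneg, ?_⟩
  intro f hf hgi
  have hgn : 0 ≤ C0.toReal * ∫ x, ‖gradient f x‖ ^ 2 ∂ν :=
    mul_nonneg ENNReal.toReal_nonneg (integral_nonneg fun x => by positivity)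
  by_cases hf2 : Integrable (fun x => f x ^ 2) ν
  swap
  · rw [integral_undef hf2]
    nlinarith [sq_nonneg (∫ x, f x ∂ν)]
  have hfc : Continuous f := hf.continuous
  have hmem : MemLp f 2 ν := (memLp_two_iff_integrable_sq hfc.aestronglyMeasurable).2 hf2
  have hf1 : Integrable f ν := hmem.integrable (by norm_num)
  set V := ∫ x, f x ^ 2 ∂ν - (∫ x, f x ∂ν) ^ 2 with hV
  have hVy : ∀ y, ENNReal.ofReal V ≤ ∫⁻ x, ENNReal.ofReal ((f x - f y) ^ 2) ∂ν := by
    intro y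
    have e : ∀ x, (f x - f y) ^ 2 = f x ^ 2 - 2 * f y * f x + f y ^ 2 := fun x => by ring
    have hi : Integrable (fun x => (f x - f y) ^ 2) ν := by
      simp_rw [e]
      exact (hf2.sub (hf1.const_mul _)).add (integrable_const _)
    rw [← ofReal_integral_eq_lintegral_ofReal hi (ae_of_all _ fun x => sq_nonneg _)]
    apply ENNReal.ofReal_le_ofReal
    have : ∫ x, (f x - f y) ^ 2 ∂ν = ∫ x, f x ^ 2 ∂ν - 2 * f y * ∫ x, f x ∂ν + f y ^ 2 := by
      simp_rw [e]
      have hd : Integrable (fun x => f x ^ 2 - 2 * f y * f x) ν := hf2.sub (hf1.const_mul _)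
      rw [integral_add hd (integrable_const _), integral_sub hf2 (hf1.const_mul _), integral_const_mul]
      simp
    rw [this, hV]
    nlinarith [sq_nonneg (f y - ∫ x, f x ∂ν)]
  have hmF : Measurable fun p : Euc n × Euc n => ENNReal.ofReal ((f p.2 - f p.1) ^ 2) :=
    Measurable.ennreal_ofReal (by
      have := hfc.measurable
      fun_prop)
  have hmain : ENNReal.ofReal V ≤ C0 * ∫⁻ z, Gp f z * ww ψ z := by
    calc ENNReal.ofReal V = ∫⁻ y, ENNReal.ofReal V ∂ν := by simp
      _ ≤ ∫⁻ y, ∫⁻ x, ENNReal.ofReal ((f x - f y) ^ 2) ∂ν ∂ν := lintegral_mono hVy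
      _ = ∫⁻ y, ∫⁻ x, ww ψ y * ww ψ x * ENNReal.ofReal ((f x - f y) ^ 2) := by
          have hin : Measurable fun y => ∫⁻ x, ENNReal.ofReal ((f x - f y) ^ 2) ∂ν :=
            hmF.lintegral_prod_right'
          rw [hν, lintegral_withDensity_eq_lintegral_mul _ hw (hν ▸ hin)]
          congr 1; ext y
          have hmy : Measurable fun x => ENNReal.ofReal ((f x - f y) ^ 2) :=
            hmF.comp (f := fun x => (y, x)) (by fun_prop)
          simp only [Pi.mul_apply]
          rw [lintegral_withDensity_eq_lintegral_mul _ hw hmy, ← lintegral_const_mul _ (hw.mul hmy)]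
          simp only [Pi.mul_apply, mul_assoc]
      _ = ∫⁻ y, ∫⁻ u, ww ψ y * ww ψ (y + u) * ENNReal.ofReal ((f (y + u) - f y) ^ 2) := by
          congr 1; ext y
          exact (lintegral_add_left_eq_self
            (fun x => ww ψ y * ww ψ x * ENNReal.ofReal ((f x - f y) ^ 2)) y).symm
      _ = ∫⁻ u, ∫⁻ y, ww ψ y * ww ψ (y + u) * ENNReal.ofReal ((f (y + u) - f y) ^ 2) := by
          rw [lintegral_lintegral_swap]
          apply Measurable.aemeasurable
          exact ((hw.comp measurable_fst).mul (hw.comp (f := fun p : Euc n × Euc n => p.1 + p.2)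
            (by fun_prop))).mul (hmF.comp (f := fun p : Euc n × Euc n => (p.1, p.1 + p.2))
            (by fun_prop))
      _ ≤ _ := transport ψ δ hδ hc hψ C0
        (fun z τ hτ => kernel_bound ψ δ M hδ hc hM h1 z hτ) f hf
  have hG : ∫⁻ z, Gp f z * ww ψ z = ENNReal.ofReal (∫ x, ‖gradient f x‖ ^ 2 ∂ν) := by
    rw [ofReal_integral_eq_lintegral_ofReal hgi (ae_of_all _ fun x => by positivity), hν,
      lintegral_withDensity_eq_lintegral_mul _ hw
        ((measurable_norm_gradient f).pow_const 2).ennreal_ofReal]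
    apply lintegral_congr_ae
    filter_upwards [Gp_ae f hf] with x hx
    simp only [Pi.mul_apply]
    rw [hx, mul_comm]
  rw [hG, ← ENNReal.ofReal_toReal hC0t, ← ENNReal.ofReal_mul ENNReal.toReal_nonneg] at hmain
  exact (ENNReal.ofReal_le_ofReal_iff hgn).1 hmain

/-- Regularised potential before mollification. -/
def phi (ρ : Euc n → ℝ) (l : ℝ) (x : Euc n) : ℝ := -Real.log (supc ρ l x) + l / 2 * ‖x‖ ^ 2

lemma par_sq (x v : Euc n) : ‖x + v‖ ^ 2 + ‖x - v‖ ^ 2 - 2 * ‖x‖ ^ 2 = 2 * ‖v‖ ^ 2 := by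
  have := parallelogram_law_with_norm ℝ x v
  nlinarith

lemma phi_pot {ρ : Euc n → ℝ} {s C a : ℝ} (h : Good ρ s C a) {l : ℝ} (hl : 0 < l) :
    Pot (phi ρ l) (s / (1 + l * s) + l) (1 / l + l) where
  sc := by
    rw [strongConvexOn_iff_convex]
    have := strongConvexOn_iff_convex.1 (h.strong hl)
    convert! this using 2 with x
    unfold phi
    ring
  rnn := by have := h.spos; positivity
  up := by
    intro x v
    have h1 := h.symm_upper hl x v
    have h2 := par_sq x v
    unfold phi
    nlinarith [congrArg (fun y => l / 2 * y) h2]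
  gr := by
    obtain ⟨K, hK⟩ := h.growth hl
    refine ⟨K + l / 2, fun x => ?_⟩
    have h1 := hK x
    have h2 : ‖x‖ ^ 2 ≤ (1 + ‖x‖) ^ 2 := by gcongr; linarith
    unfold phi
    calc _ ≤ |(-Real.log (supc ρ l x))| + |l / 2 * ‖x‖ ^ 2| := abs_add_le _ _
      _ ≤ K * (1 + ‖x‖) ^ 2 + l / 2 * (1 + ‖x‖) ^ 2 := by
        rw [abs_of_nonneg (show 0 ≤ l / 2 * ‖x‖ ^ 2 by positivity)]
        gcongr
      _ = _ := by ring

lemma phi_exp {ρ : Euc n → ℝ} {s C a : ℝ} (h : Good ρ s C a) {l : ℝ} (hl : 0 < l) (x : Euc n) :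
    Real.exp (-phi ρ l x) = supc ρ l x * Real.exp (-(l / 2 * ‖x‖ ^ 2)) := by
  unfold phi
  rw [neg_add, neg_neg, Real.exp_add, Real.exp_log (h.supc_pos hl x)]

/-- Radius `l` bump. -/
def bmp {l : ℝ} (hl : 0 < l) : ContDiffBump (0 : Euc n) := ⟨l / 2, l, by positivity, by linarith⟩

lemma weight_integrable (a : ℝ) (ha : 0 < a) :
    Integrable (fun x : Euc n => (1 + ‖x‖) ^ 2 * Real.exp (-a * ‖x‖)) := by
  have h0 := integrable_one_add_norm (E := Euc n) (μ := volume) (r := (n + 1 : ℕ)) (by simp)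
  refine (h0.const_mul (((n + 3).factorial : ℝ) * Real.exp a / a ^ (n + 3))).mono'
    (Continuous.aestronglyMeasurable (by fun_prop)) (ae_of_all _ fun x => ?_)
  rw [Real.norm_of_nonneg (by positivity)]
  have hx : 0 < 1 + ‖x‖ := by positivity
  have h1 := Real.pow_div_factorial_le_exp (a * (1 + ‖x‖)) (by positivity) (n + 3)
  rw [Real.rpow_neg hx.le, Real.rpow_natCast]
  have e : Real.exp (-a * ‖x‖) = Real.exp a / Real.exp (a * (1 + ‖x‖)) := by
    rw [← Real.exp_sub]; ring_nf
  rw [e]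
  have hE := Real.exp_pos (a * (1 + ‖x‖))
  have hA := Real.exp_pos a
  generalize Real.exp (a * (1 + ‖x‖)) = E at *
  generalize Real.exp a = A at *
  rw [div_le_iff₀ (by positivity), mul_pow] at h1
  rw [← mul_div_assoc, div_le_iff₀ hE, div_mul_eq_mul_div, div_mul_eq_mul_div,
    le_div_iff₀ (by positivity), ← div_eq_mul_inv, div_mul_eq_mul_div, le_div_iff₀ (by positivity)]
  calc _ = A * (a ^ (n + 3) * (1 + ‖x‖) ^ (n + 3)) := by ring
    _ ≤ A * (E * (n + 3).factorial) := by gcongr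
    _ = _ := by ring

lemma integral_wd (p F : Euc n → ℝ) (hp : Measurable p) (hp0 : ∀ x, 0 ≤ p x) :
    ∫ x, F x ∂(volume.withDensity fun x => ENNReal.ofReal (p x)) = ∫ x, F x * p x := by
  rw [integral_withDensity_eq_integral_toReal_smul hp.ennreal_ofReal
    (ae_of_all _ fun x => ENNReal.ofReal_lt_top)]
  congr 1; ext x
  rw [ENNReal.toReal_ofReal (hp0 x), smul_eq_mul, mul_comm]

lemma family {ρ : Euc n → ℝ} {s C a : ℝ} (h : Good ρ s C a) (hm : Measurable ρ)
    (hP : IsProbabilityMeasure (volume.withDensity fun x => ENNReal.ofReal (ρ x)))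
    (hcont : ∀ᵐ x, ContinuousAt ρ x) :
    ∃ (ψ : ℕ → Euc n → ℝ) (r : ℕ → ℝ), (∀ k, 0 < r k ∧ StrongConvexOn univ (r k) (ψ k) ∧
      IsRegularPotential (ψ k) ∧ Continuous (ψ k) ∧ (∃ M, ∀ x, Real.exp (-ψ k x) ≤ M) ∧
      IsProbabilityMeasure (volume.withDensity fun x => ENNReal.ofReal (Real.exp (-ψ k x)))) ∧
      Tendsto r atTop (𝓝 s) ∧
      ∀ (F : Euc n → ℝ) (K : ℝ), Measurable F → (∀ x, |F x| ≤ K * (1 + ‖x‖) ^ 2) →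
        Tendsto (fun k => ∫ x, F x ∂(volume.withDensity fun x =>
          ENNReal.ofReal (Real.exp (-ψ k x)))) atTop
          (𝓝 (∫ x, F x ∂(volume.withDensity fun x => ENNReal.ofReal (ρ x)))) := by
  set l : ℕ → ℝ := fun k => 1 / ((k : ℝ) + 1) with hldef
  have hl : ∀ k, 0 < l k := fun k => by positivity
  have hl1 : ∀ k, l k ≤ 1 := fun k => by
    rw [hldef]; simp only
    rw [div_le_one (by positivity)]; linarith [k.cast_nonneg (α := ℝ)]
  have hl0 : Tendsto l atTop (𝓝 0) := tendsto_one_div_add_atTop_nhds_zero_nat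
  have hl0' : Tendsto l atTop (𝓝[>] 0) :=
    tendsto_nhdsWithin_iff.2 ⟨hl0, Eventually.of_forall hl⟩
  set Λ : ℕ → ℝ := fun k => 1 / l k + l k with hΛ
  have hΛ0 : ∀ k, 0 < Λ k := fun k => by have := hl k; positivity
  have pot := fun k => phi_pot h (hl k)
  set ψ0 : ℕ → Euc n → ℝ := fun k => moll (phi ρ (l k)) (bmp (hl k)) with hψ0
  set p : ℕ → Euc n → ℝ := fun k x => Real.exp (-ψ0 k x) with hp
  set C' := C * Real.exp (a ^ 2 / 2) with hC'
  have hC'0 : 0 < C' := by have := h.Cpos; positivity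
  have pc0 : ∀ k, Continuous (ψ0 k) := fun k => ((pot k).moll_contDiff (bmp (hl k))).continuous
  have pc : ∀ k, Continuous (p k) := fun k => by have := pc0 k; fun_prop
  have hup : ∀ k x, p k x ≤ Real.exp (-phi ρ (l k) x) := fun k x =>
    Real.exp_le_exp.2 (neg_le_neg ((pot k).le_moll _ x))
  have hlow : ∀ k x, Real.exp (-phi ρ (l k) x) * Real.exp (-(Λ k * l k ^ 2 / 2)) ≤ p k x := by
    intro k x
    rw [← Real.exp_add]
    apply Real.exp_le_exp.2
    have := (pot k).moll_le (hΛ0 k).le (bmp (hl k)) x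
    have e : (bmp (n := n) (hl k)).rOut = l k := rfl
    rw [e] at this
    linarith
  have hdom : ∀ k x, p k x ≤ C' * Real.exp (-a * ‖x‖) := by
    intro k x
    refine (hup k x).trans ?_
    rw [phi_exp h (hl k)]
    refine le_trans ?_ (h.supc_le (hl k) (hl1 k) x)
    apply mul_le_of_le_one_right (h.supc_pos (hl k) x).le
    apply Real.exp_le_one_iff.2
    have := hl k
    have : 0 ≤ l k / 2 * ‖x‖ ^ 2 := by positivity
    linarith
  have hlim : ∀ᵐ x, Tendsto (fun k => p k x) atTop (𝓝 (ρ x)) := by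
    filter_upwards [hcont] with x hx
    have t1 : Tendsto (fun k => Real.exp (-phi ρ (l k) x)) atTop (𝓝 (ρ x)) := by
      have e : (fun k => Real.exp (-phi ρ (l k) x)) =
          fun k => supc ρ (l k) x * Real.exp (-(l k / 2 * ‖x‖ ^ 2)) :=
        funext fun k => phi_exp h (hl k) x
      rw [e]
      have a1 := (h.tendsto_supc x hx).comp hl0'
      have a2 : Tendsto (fun k => Real.exp (-(l k / 2 * ‖x‖ ^ 2))) atTop (𝓝 1) := by
        have : Tendsto (fun k => -(l k / 2 * ‖x‖ ^ 2)) atTop (𝓝 (-(0 / 2 * ‖x‖ ^ 2))) :=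
          ((hl0.div_const 2).mul_const _).neg
        have := (Real.continuous_exp.tendsto _).comp this
        simpa [Function.comp_def] using this
      simpa using a1.mul a2
    have t2 : Tendsto (fun k => Real.exp (-(Λ k * l k ^ 2 / 2))) atTop (𝓝 1) := by
      have e : (fun k => Real.exp (-(Λ k * l k ^ 2 / 2))) =
          fun k => Real.exp (-((l k + l k ^ 3) / 2)) := by
        funext k
        have := (hl k).ne'
        rw [hΛ]
        congr 1
        simp only
        field_simp
      rw [e]
      have : Tendsto (fun k => -((l k + l k ^ 3) / 2)) atTop (𝓝 (-((0 + 0 ^ 3) / 2))) :=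
        ((hl0.add (hl0.pow 3)).div_const 2).neg
      have := (Real.continuous_exp.tendsto _).comp this
      simpa [Function.comp_def] using this
    have t3 := t1.mul t2
    rw [mul_one] at t3
    exact tendsto_of_tendsto_of_tendsto_of_le_of_le t3 t1 (fun k => hlow k x) (fun k => hup k x)
  have hpi : ∀ (F : Euc n → ℝ) (K : ℝ), Measurable F → (∀ x, |F x| ≤ K * (1 + ‖x‖) ^ 2) → ∀ k,
      Integrable (fun x => F x * p k x) := by
    intro F K hF hK k
    refine ((weight_integrable (n := n) a h.apos).const_mul (K * C')).mono'
      (hF.mul (pc k).measurable).aestronglyMeasurable (ae_of_all _ fun x => ?_)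
    rw [norm_mul, Real.norm_eq_abs, Real.norm_of_nonneg (Real.exp_pos _).le]
    calc _ ≤ (K * (1 + ‖x‖) ^ 2) * (C' * Real.exp (-a * ‖x‖)) :=
          mul_le_mul (hK x) (hdom k x) (Real.exp_pos _).le ((abs_nonneg _).trans (hK x))
      _ = _ := by ring
  have hconv : ∀ (F : Euc n → ℝ) (K : ℝ), Measurable F → (∀ x, |F x| ≤ K * (1 + ‖x‖) ^ 2) →
      Tendsto (fun k => ∫ x, F x * p k x) atTop (𝓝 (∫ x, F x * ρ x)) := by
    intro F K hF hK
    refine tendsto_integral_of_dominated_convergence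
      (fun x => (K * C') * ((1 + ‖x‖) ^ 2 * Real.exp (-a * ‖x‖)))
      (fun k => (hF.mul (pc k).measurable).aestronglyMeasurable)
      ((weight_integrable (n := n) a h.apos).const_mul (K * C')) (fun k => ae_of_all _ fun x => ?_) ?_
    · rw [norm_mul, Real.norm_eq_abs, Real.norm_of_nonneg (Real.exp_pos _).le]
      calc _ ≤ (K * (1 + ‖x‖) ^ 2) * (C' * Real.exp (-a * ‖x‖)) :=
            mul_le_mul (hK x) (hdom k x) (Real.exp_pos _).le ((abs_nonneg _).trans (hK x))
        _ = _ := by ring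
    · filter_upwards [hlim] with x hx
      exact hx.const_mul _
  have hone : ∀ x : Euc n, |(1:ℝ)| ≤ 1 * (1 + ‖x‖) ^ 2 := fun x => by
    have := norm_nonneg x
    rw [abs_one]; nlinarith
  have hpi1 : ∀ k, Integrable (p k) := fun k => by
    simpa using hpi (fun _ => 1) 1 measurable_const hone k
  set Z : ℕ → ℝ := fun k => ∫ x, p k x with hZ
  have hZ0 : ∀ k, 0 < Z k := fun k => integral_exp_pos (hpi1 k)
  have hρ1 : ∫ x, ρ x = 1 := by
    have := integral_wd ρ (fun _ => 1) hm h.nonneg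
    simpa using this.symm
  have hZ1 : Tendsto Z atTop (𝓝 1) := by
    have := hconv (fun _ => 1) 1 measurable_const hone
    simpa [hρ1] using this
  have hexp : ∀ k x, Real.exp (-(ψ0 k x + Real.log (Z k))) = p k x / Z k := by
    intro k x
    rw [neg_add, ← sub_eq_add_neg, Real.exp_sub, Real.exp_log (hZ0 k)]
  refine ⟨fun k x => ψ0 k x + Real.log (Z k), fun k => s / (1 + l k * s) + l k, fun k => ?_, ?_, ?_⟩
  · have hr : 0 < s / (1 + l k * s) + l k := by
      have := hl k; have := h.spos; positivity
    have hmoll : (fun x => ψ0 k x + Real.log (Z k)) =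
        moll (fun y => phi ρ (l k) y + Real.log (Z k)) (bmp (hl k)) :=
      funext fun x => (moll_add_const _ (pot k).cont _ _ _).symm
    have pot' : Pot (fun y => phi ρ (l k) y + Real.log (Z k)) (s / (1 + l k * s) + l k) (Λ k) := by
      refine ⟨?_, (pot k).rnn, ?_, ?_⟩
      · rw [strongConvexOn_iff_convex]
        have := (strongConvexOn_iff_convex.1 (pot k).sc).add_const (Real.log (Z k))
        convert! this using 2 with x
        simp only [Pi.add_apply]
        ring
      · intro x v
        have := (pot k).up x v
        linarith
      · obtain ⟨K, hK⟩ := (pot k).gr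
        refine ⟨K + |Real.log (Z k)|, fun x => ?_⟩
        have h1 : (1:ℝ) ≤ (1 + ‖x‖) ^ 2 := by have := norm_nonneg x; nlinarith
        calc _ ≤ |phi ρ (l k) x| + |Real.log (Z k)| := abs_add_le _ _
          _ ≤ K * (1 + ‖x‖) ^ 2 + |Real.log (Z k)| * (1 + ‖x‖) ^ 2 := by
            gcongr
            · exact hK x
            · exact le_mul_of_one_le_right (abs_nonneg _) h1
          _ = _ := by ring
    refine ⟨hr, ?_, ?_, (pc0 k).add_const _, ⟨C' / Z k, fun x => ?_⟩, ⟨?_⟩⟩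
    · have := pot'.moll_sc (bmp (hl k))
      rwa [← hmoll] at this
    · have := pot'.regular hr (hΛ0 k) (bmp (hl k))
      rwa [← hmoll] at this
    · rw [hexp]
      have := hZ0 k
      gcongr
      refine (hdom k x).trans ?_
      apply mul_le_of_le_one_right hC'0.le
      apply Real.exp_le_one_iff.2
      have := mul_nonneg h.apos.le (norm_nonneg x)
      linarith
    · rw [withDensity_apply _ MeasurableSet.univ, Measure.restrict_univ]
      simp only [hexp]
      rw [← ofReal_integral_eq_lintegral_ofReal ((hpi1 k).div_const _)
        (ae_of_all _ fun x => div_nonneg (Real.exp_pos _).le (hZ0 k).le), integral_div]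
      rw [div_self (hZ0 k).ne', ENNReal.ofReal_one]
  · have : Tendsto (fun k => s / (1 + l k * s) + l k) atTop (𝓝 (s / (1 + 0 * s) + 0)) :=
      Tendsto.add (tendsto_const_nhds.div (tendsto_const_nhds.add (hl0.mul_const s)) (by simp)) hl0
    simpa using this
  · intro F K hF hK
    rw [integral_wd ρ F hm h.nonneg]
    have e : (fun k => ∫ x, F x ∂(volume.withDensity fun x =>
        ENNReal.ofReal (Real.exp (-(ψ0 k x + Real.log (Z k)))))) =
        fun k => (∫ x, F x * p k x) / Z k := by
      funext k
      simp only [hexp]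
      rw [integral_wd (fun x => p k x / Z k) F ((pc k).measurable.div_const _)
        (fun x => div_nonneg (Real.exp_pos _).le (hZ0 k).le), ← integral_div]
      congr 1; ext x; ring
    rw [e]
    have := (hconv F K hF hK).div hZ1 one_ne_zero
    rw [div_one] at this
    exact this

lemma locLip_mul {f g : Euc n → ℝ} (hf : LocallyLipschitz f) (hg : LocallyLipschitz g) :
    LocallyLipschitz fun x => f x * g x := by
  have h : ContDiff ℝ 1 fun p : ℝ × ℝ => p.1 * p.2 := by fun_prop
  exact h.locallyLipschitz.comp (hf.prodMk hg)

lemma compact_bounds (g : Euc n → ℝ) (hg : LocallyLipschitz g) (hc : HasCompactSupport g) :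
    ∃ B : ℝ, (∀ x, |g x| ≤ B) ∧ ∀ x, ‖gradient g x‖ ≤ B := by
  obtain ⟨B1, hB1⟩ := hc.exists_bound_of_continuous hg.continuous
  obtain ⟨R, hR⟩ := hc.isBounded.subset_ball (0 : Euc n)
  obtain ⟨K, hK⟩ := LocallyLipschitzOn.exists_lipschitzOnWith_of_compact
      (isCompact_closedBall (0 : Euc n) R) (hg.locallyLipschitzOn (s := _))
  refine ⟨max B1 K, fun x => (hB1 x).trans (le_max_left _ _), fun x => ?_⟩
  rw [norm_gradient]
  by_cases hx : x ∈ ball (0 : Euc n) R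
  · refine le_trans ?_ (le_max_right _ _)
    exact norm_fderiv_le_of_lipschitzOn ℝ
      (mem_of_superset (isOpen_ball.mem_nhds hx) ball_subset_closedBall) hK
  · have hx' : x ∉ tsupport g := fun h => hx (hR h)
    have : fderiv ℝ g x = 0 := by
      by_contra hne
      exact hx' (support_fderiv_subset ℝ hne)
    rw [this, norm_zero]
    exact le_max_of_le_right K.coe_nonneg

lemma cutoff (μ : Measure (Euc n)) [IsProbabilityMeasure μ] (hac : μ ≪ volume) (C : ℝ)
    (hC0 : 0 ≤ C) (hC : C ∉ poincareSet μ) :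
    ∃ g : Euc n → ℝ, LocallyLipschitz g ∧ (∃ B : ℝ, (∀ x, |g x| ≤ B) ∧ ∀ x, ‖gradient g x‖ ≤ B) ∧
      C * ∫ x, ‖gradient g x‖ ^ 2 ∂μ < ∫ x, g x ^ 2 ∂μ - (∫ x, g x ∂μ) ^ 2 := by
  have hex : ∃ f : Euc n → ℝ, LocallyLipschitz f ∧ Integrable (fun x => ‖gradient f x‖ ^ 2) μ ∧
      C * ∫ x, ‖gradient f x‖ ^ 2 ∂μ < ∫ x, f x ^ 2 ∂μ - (∫ x, f x ∂μ) ^ 2 := by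
    by_contra hcon
    push Not at hcon
    exact hC ⟨hC0, fun f hf hi => hcon f hf hi⟩
  obtain ⟨f, hf, hgi, hlt⟩ := hex
  have hgn : 0 ≤ C * ∫ x, ‖gradient f x‖ ^ 2 ∂μ :=
    mul_nonneg hC0 (integral_nonneg fun x => by positivity)
  have hf2 : Integrable (fun x => f x ^ 2) μ := by
    by_contra hf2
    rw [integral_undef hf2] at hlt
    nlinarith [sq_nonneg (∫ x, f x ∂μ)]
  have hfc : Continuous f := hf.continuous
  have hmem : MemLp f 2 μ := (memLp_two_iff_integrable_sq hfc.aestronglyMeasurable).2 hf2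
  have hf1 : Integrable f μ := hmem.integrable (by norm_num)
  let χ : ContDiffBump (0 : Euc n) := ⟨1, 2, by norm_num, by norm_num⟩
  obtain ⟨K, hK⟩ := ContDiff.lipschitzWith_of_hasCompactSupport χ.hasCompactSupport
    (χ.contDiff (n := 1)) (by simp)
  set c : ℕ → ℝ := fun k => 1 / ((k : ℝ) + 1) with hc
  have hc0 : ∀ k, 0 < c k := fun k => by positivity
  have hc1 : ∀ k, c k ≤ 1 := fun k => by
    rw [hc]; simp only
    rw [div_le_one (by positivity)]; linarith [k.cast_nonneg (α := ℝ)]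
  have hcl : Tendsto c atTop (𝓝 0) := tendsto_one_div_add_atTop_nhds_zero_nat
  set η : ℕ → Euc n → ℝ := fun k x => χ (c k • x) with hη
  have η0 : ∀ k x, 0 ≤ η k x := fun k x => χ.nonneg
  have η1 : ∀ k x, η k x ≤ 1 := fun k x => χ.le_one
  have ηlip : ∀ k, LipschitzWith K (η k) := by
    intro k
    apply LipschitzWith.of_dist_le_mul
    intro x y
    refine (hK.dist_le_mul _ _).trans ?_
    gcongr
    rw [dist_eq_norm, dist_eq_norm, ← smul_sub, norm_smul, Real.norm_of_nonneg (hc0 k).le]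
    exact mul_le_of_le_one_left (norm_nonneg _) (hc1 k)
  have ηdiff : ∀ k, Differentiable ℝ (η k) := by
    intro k
    have : Differentiable ℝ χ := (χ.contDiff (n := 1)).differentiable (by simp)
    exact this.comp (differentiable_id.const_smul (c k))
  have ηcs : ∀ k, HasCompactSupport (η k) := fun k =>
    χ.hasCompactSupport.comp_smul (hc0 k).ne'
  set g : ℕ → Euc n → ℝ := fun k x => η k x * f x with hg
  have glip : ∀ k, LocallyLipschitz (g k) := fun k => locLip_mul (ηlip k).locallyLipschitz hf
  have gcs : ∀ k, HasCompactSupport (g k) := fun k => (ηcs k).mul_right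
  have gle : ∀ k x, |g k x| ≤ |f x| := by
    intro k x
    rw [hg]; simp only
    rw [abs_mul, abs_of_nonneg (η0 k x)]
    exact mul_le_of_le_one_left (abs_nonneg _) (η1 k x)
  have geq : ∀ x, ∀ᶠ k in atTop, g k =ᶠ[𝓝 x] f := by
    intro x
    have h1 : Tendsto (fun k => c k * (‖x‖ + 1)) atTop (𝓝 (0 * (‖x‖ + 1))) := hcl.mul_const _
    rw [zero_mul] at h1
    filter_upwards [h1.eventually_lt_const (show (0:ℝ) < 1 by norm_num)] with k hk
    filter_upwards [isOpen_ball.mem_nhds (mem_ball_self (x := x) (show (0:ℝ) < 1 by norm_num))]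
      with y hy
    have : η k y = 1 := by
      apply χ.one_of_mem_closedBall
      rw [mem_closedBall_zero_iff, norm_smul, Real.norm_of_nonneg (hc0 k).le]
      have h2 : ‖y‖ ≤ ‖x‖ + 1 := by
        rw [mem_ball_iff_norm] at hy
        have := norm_le_norm_add_norm_sub' y x
        linarith
      calc c k * ‖y‖ ≤ c k * (‖x‖ + 1) := by have := hc0 k; gcongr
        _ ≤ 1 := hk.le
    rw [hg]; simp only
    rw [this, one_mul]
  have t1 : Tendsto (fun k => ∫ x, g k x ∂μ) atTop (𝓝 (∫ x, f x ∂μ)) := by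
    refine tendsto_integral_of_dominated_convergence (fun x => ‖f x‖)
      (fun k => (glip k).continuous.aestronglyMeasurable) hf1.norm
      (fun k => ae_of_all _ (gle k)) (ae_of_all _ fun x => ?_)
    exact tendsto_const_nhds.congr' ((geq x).mono fun k hk => hk.eq_of_nhds.symm)
  have t2 : Tendsto (fun k => ∫ x, g k x ^ 2 ∂μ) atTop (𝓝 (∫ x, f x ^ 2 ∂μ)) := by
    refine tendsto_integral_of_dominated_convergence (fun x => f x ^ 2)
      (fun k => ((glip k).continuous.pow 2).aestronglyMeasurable) hf2
      (fun k => ae_of_all _ fun x => ?_) (ae_of_all _ fun x => ?_)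
    · rw [Real.norm_of_nonneg (sq_nonneg _)]
      exact sq_le_sq.2 (gle k x)
    · exact tendsto_const_nhds.congr' ((geq x).mono fun k hk => by simp only [hk.eq_of_nhds])
  have t3 : Tendsto (fun k => ∫ x, ‖gradient (g k) x‖ ^ 2 ∂μ) atTop
      (𝓝 (∫ x, ‖gradient f x‖ ^ 2 ∂μ)) := by
    refine tendsto_integral_of_dominated_convergence
      (fun x => 2 * ‖gradient f x‖ ^ 2 + 2 * (K : ℝ) ^ 2 * f x ^ 2)
      (fun k => ((measurable_norm_gradient (g k)).pow_const 2).aestronglyMeasurable)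
      ((hgi.const_mul 2).add (hf2.const_mul _))
      (fun k => ?_) (ae_of_all _ fun x => ?_)
    · filter_upwards [hac.ae_le (locLip_ae_diff f hf)] with x hx
      rw [Real.norm_of_nonneg (sq_nonneg _), norm_gradient, norm_gradient]
      have e : fderiv ℝ (g k) x = η k x • fderiv ℝ f x + f x • fderiv ℝ (η k) x :=
        fderiv_fun_mul ((ηdiff k) x) hx
      have b1 : ‖fderiv ℝ (η k) x‖ ≤ K := norm_fderiv_le_of_lipschitz ℝ (ηlip k)
      have b2 : ‖fderiv ℝ (g k) x‖ ≤ ‖fderiv ℝ f x‖ + |f x| * K := by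
        rw [e]
        refine (norm_add_le _ _).trans ?_
        rw [norm_smul, norm_smul, Real.norm_of_nonneg (η0 k x), Real.norm_eq_abs]
        gcongr
        exact mul_le_of_le_one_left (norm_nonneg _) (η1 k x)
      calc _ ≤ (‖fderiv ℝ f x‖ + |f x| * K) ^ 2 := by gcongr
        _ ≤ _ := by
          rw [← sq_abs (f x)]
          nlinarith [sq_nonneg (‖fderiv ℝ f x‖ - |f x| * K)]
    · refine tendsto_const_nhds.congr' ((geq x).mono fun k hk => ?_)
      show ‖gradient f x‖ ^ 2 = ‖gradient (g k) x‖ ^ 2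
      rw [norm_gradient, norm_gradient, hk.fderiv_eq]
  have hev := ((t3.const_mul C).eventually_lt (t2.sub (t1.pow 2)) hlt)
  obtain ⟨k, hk⟩ := hev.exists
  exact ⟨g k, glip k, compact_bounds _ (glip k) (gcs k), hk⟩

lemma lc_exp_neg (φ : Euc n → ℝ) (hφ : ConvexOn ℝ univ φ) :
    IsLogConcaveFun fun x => Real.exp (-φ x) := by
  refine ⟨fun x => (Real.exp_pos _).le, fun x y a b ha hb hab => ?_⟩
  have h := hφ.2 (mem_univ x) (mem_univ y) ha hb hab
  simp only [smul_eq_mul] at h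
  rw [← Real.exp_mul, ← Real.exp_mul, ← Real.exp_add]
  apply Real.exp_le_exp.2
  linarith

lemma par_id (x y : Euc n) (p q : ℝ) (hpq : p + q = 1) :
    ‖p • x + q • y‖ ^ 2 = p * ‖x‖ ^ 2 + q * ‖y‖ ^ 2 - p * q * ‖x - y‖ ^ 2 := by
  rw [norm_add_sq_real, norm_sub_sq_real, norm_smul, norm_smul, inner_smul_left, inner_smul_right,
    mul_pow, mul_pow, Real.norm_eq_abs, Real.norm_eq_abs, sq_abs, sq_abs]
  have hq : q = 1 - p := by linarith
  subst hq
  simp only [conj_trivial]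
  ring

lemma slc_of_gauss (g : Euc n → ℝ) (hg : IsLogConcaveFun g) (s : ℝ) :
    ∀ x y : Euc n, ∀ p q : ℝ, 0 ≤ p → 0 ≤ q → p + q = 1 →
      (Real.exp (-s * ‖x‖ ^ 2 / 2) * g x) ^ p * (Real.exp (-s * ‖y‖ ^ 2 / 2) * g y) ^ q
        * Real.exp (p * q * (s / 2) * ‖x - y‖ ^ 2)
      ≤ Real.exp (-s * ‖p • x + q • y‖ ^ 2 / 2) * g (p • x + q • y) := by
  intro x y p q hp hq hpq
  rw [Real.mul_rpow (Real.exp_pos _).le (hg.1 x), Real.mul_rpow (Real.exp_pos _).le (hg.1 y),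
    ← Real.exp_mul, ← Real.exp_mul, par_id x y p q hpq]
  have e : Real.exp (-s * (p * ‖x‖ ^ 2 + q * ‖y‖ ^ 2 - p * q * ‖x - y‖ ^ 2) / 2)
      = Real.exp (-s * ‖x‖ ^ 2 / 2 * p) * Real.exp (-s * ‖y‖ ^ 2 / 2 * q)
        * Real.exp (p * q * (s / 2) * ‖x - y‖ ^ 2) := by
    rw [← Real.exp_add, ← Real.exp_add]
    congr 1; ring
  rw [e]
  have h := hg.2 x y p q hp hq hpq
  calc _ = (Real.exp (-s * ‖x‖ ^ 2 / 2 * p) * Real.exp (-s * ‖y‖ ^ 2 / 2 * q)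
        * Real.exp (p * q * (s / 2) * ‖x - y‖ ^ 2)) * (g x ^ p * g y ^ q) := by ring
    _ ≤ _ := by gcongr

lemma ulc_of_strong (ψ : Euc n → ℝ) (hc : Continuous ψ) (s : ℝ) (hψ : StrongConvexOn univ s ψ) :
    UniformlyLogConcave s (volume.withDensity fun x => ENNReal.ofReal (Real.exp (-ψ x))) := by
  refine ⟨fun x => Real.exp (-(ψ x - s / 2 * ‖x‖ ^ 2)), ?_, ?_, ?_⟩
  · exact (by fun_prop : Continuous fun x => Real.exp (-(ψ x - s / 2 * ‖x‖ ^ 2))).measurable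
  · exact lc_exp_neg _ (strongConvexOn_iff_convex.1 hψ)
  · congr 1
    funext x
    rw [← Real.exp_add]
    congr 2
    ring

lemma coord_le (x : Euc n) (i : Fin n) : |x i| ≤ ‖x‖ := by
  simpa using PiLp.norm_apply_le x i

lemma cov_tendsto (μ : Measure (Euc n)) (ν : ℕ → Measure (Euc n))
    (hF : ∀ (F : Euc n → ℝ) (K : ℝ), Measurable F → (∀ x, |F x| ≤ K * (1 + ‖x‖) ^ 2) →
      Tendsto (fun k => ∫ x, F x ∂(ν k)) atTop (𝓝 (∫ x, F x ∂μ))) :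
    Tendsto (fun k => opNorm (covMatrix μ - covMatrix (ν k))) atTop (𝓝 0) := by
  have h1 : ∀ i : Fin n, Tendsto (fun k => ∫ x, x i ∂(ν k)) atTop (𝓝 (∫ x, x i ∂μ)) := by
    intro i
    refine hF (fun x => x i) 1 (by fun_prop) fun x => ?_
    have := coord_le x i
    nlinarith [norm_nonneg x]
  have h2 : ∀ i j : Fin n, Tendsto (fun k => ∫ x, x i * x j ∂(ν k)) atTop
      (𝓝 (∫ x, x i * x j ∂μ)) := by
    intro i j
    refine hF (fun x => x i * x j) 1 (by fun_prop) fun x => ?_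
    rw [abs_mul]
    have := mul_le_mul (coord_le x i) (coord_le x j) (abs_nonneg _) (norm_nonneg _)
    nlinarith [norm_nonneg x]
  have h3 : Tendsto (fun k => covMatrix μ - covMatrix (ν k)) atTop (𝓝 0) := by
    refine tendsto_pi_nhds.2 fun i => tendsto_pi_nhds.2 fun j => ?_
    have := ((h2 i j).sub ((h1 i).mul (h1 j))).const_sub
      (∫ x, x i * x j ∂μ - (∫ x, x i ∂μ) * (∫ x, x j ∂μ))
    rw [sub_self] at this
    exact this
  let T : Matrix (Fin n) (Fin n) ℝ →ₗ[ℝ] (Euc n →L[ℝ] Euc n) :=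
    { toFun := fun M => Matrix.toEuclideanCLM (𝕜 := ℝ) M
      map_add' := fun a b => map_add _ a b
      map_smul' := fun a b => map_smul _ a b }
  have hT : Continuous T := LinearMap.continuous_of_finiteDimensional T
  have h4 := ((hT.tendsto 0).comp h3).norm
  rw [map_zero, norm_zero] at h4
  exact h4

lemma poincare_lower (μ : Measure (Euc n)) [IsProbabilityMeasure μ] (hac : μ ≪ volume)
    (ν : ℕ → Measure (Euc n)) (hne : ∀ k, (poincareSet (ν k)).Nonempty)
    (hF : ∀ (F : Euc n → ℝ) (K : ℝ), Measurable F → (∀ x, |F x| ≤ K * (1 + ‖x‖) ^ 2) →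
      Tendsto (fun k => ∫ x, F x ∂(ν k)) atTop (𝓝 (∫ x, F x ∂μ)))
    (hfin : ∀ k, IsProbabilityMeasure (ν k)) (ε : ℝ) (hε : 0 < ε) :
    ∀ᶠ k in atTop, poincareConst μ - ε ≤ poincareConst (ν k) := by
  rcases lt_or_ge (poincareConst μ - ε) 0 with h0 | h0
  · exact Eventually.of_forall fun k => h0.le.trans (Real.sInf_nonneg fun x hx => hx.1)
  set C := poincareConst μ - ε with hC
  have hnot : C ∉ poincareSet μ := by
    intro hm
    have : poincareConst μ ≤ C := csInf_le ⟨0, fun x hx => hx.1⟩ hm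
    linarith
  obtain ⟨g, hg, ⟨B, hB1, hB2⟩, hlt⟩ := cutoff μ hac C h0 hnot
  have hgm : Measurable g := hg.continuous.measurable
  have hB0 : 0 ≤ B := (abs_nonneg _).trans (hB1 0)
  have hbd : ∀ (K : ℝ), 0 ≤ K → ∀ x : Euc n, K ≤ K * (1 + ‖x‖) ^ 2 := by
    intro K hK x
    apply le_mul_of_one_le_right hK
    nlinarith [norm_nonneg x]
  have t1 := hF g B hgm fun x => (hB1 x).trans (hbd B hB0 x)
  have t2 := hF (fun x => g x ^ 2) (B ^ 2) (hgm.pow_const 2) fun x => by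
    refine le_trans ?_ (hbd (B ^ 2) (by positivity) x)
    rw [abs_pow]
    exact pow_le_pow_left₀ (abs_nonneg _) (hB1 x) 2
  have t3 := hF (fun x => ‖gradient g x‖ ^ 2) (B ^ 2)
    ((measurable_norm_gradient g).pow_const 2) fun x => by
    refine le_trans ?_ (hbd (B ^ 2) (by positivity) x)
    rw [abs_pow, abs_norm]
    exact pow_le_pow_left₀ (norm_nonneg _) (hB2 x) 2
  filter_upwards [(t3.const_mul C).eventually_lt (t2.sub (t1.pow 2)) hlt] with k hk
  refine le_csInf (hne k) fun D hD => ?_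
  by_contra hcon
  push Not at hcon
  have hi : Integrable (fun x => ‖gradient g x‖ ^ 2) (ν k) := by
    have := hfin k
    refine Integrable.of_bound ((measurable_norm_gradient g).pow_const 2).aestronglyMeasurable
      (B ^ 2) (ae_of_all _ fun x => ?_)
    rw [norm_pow, norm_norm]
    exact pow_le_pow_left₀ (norm_nonneg _) (hB2 x) 2
  have h1 := hD.2 g hg hi
  have h2 : D * ∫ x, ‖gradient g x‖ ^ 2 ∂(ν k) ≤ C * ∫ x, ‖gradient g x‖ ^ 2 ∂(ν k) :=
    mul_le_mul_of_nonneg_right hcon.le (integral_nonneg fun x => by positivity)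
  linarith

lemma core (ρ : Euc n → ℝ) (s : ℝ) (hs : 0 ≤ s) (hm : Measurable ρ) (h0 : ∀ x, 0 ≤ ρ x)
    (hslc : ∀ x y : Euc n, ∀ p q : ℝ, 0 ≤ p → 0 ≤ q → p + q = 1 →
      ρ x ^ p * ρ y ^ q * Real.exp (p * q * (s / 2) * ‖x - y‖ ^ 2) ≤ ρ (p • x + q • y))
    (hP : IsProbabilityMeasure (volume.withDensity fun x => ENNReal.ofReal (ρ x)))
    (ε : ℝ) (hε : 0 < ε) :
    ∃ ν : Measure (Euc n), IsProbabilityMeasure ν ∧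
      (∃ ψ : Euc n → ℝ, IsRegularMeasure ν ψ) ∧ IsLogConcaveMeasure ν ∧
      poincareConst (volume.withDensity fun x => ENNReal.ofReal (ρ x)) - ε ≤ poincareConst ν ∧
      opNorm (covMatrix (volume.withDensity fun x => ENNReal.ofReal (ρ x)) - covMatrix ν) < ε ∧
      UniformlyLogConcave (s - ε) ν := by
  have hl : IsLogConcaveFun ρ := by
    refine ⟨h0, fun x y p q hp hq hpq => le_trans ?_ (hslc x y p q hp hq hpq)⟩
    apply le_mul_of_one_le_right
    · exact mul_nonneg (Real.rpow_nonneg (h0 x) _) (Real.rpow_nonneg (h0 y) _)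
    · apply Real.one_le_exp; positivity
  obtain ⟨C, a, hC, ha, hb⟩ := decay ρ hm hl hP
  obtain ⟨x0, r0, c0, hr0, hc0, hball⟩ := exists_good_ball ρ hl hP
  have hG : Good ρ s C a :=
    { nonneg := h0, Cpos := hC, apos := ha, bound := hb
      expos := ⟨x0, hc0.trans_le (hball x0 (mem_ball_self hr0))⟩
      spos := hs, slc := hslc }
  obtain ⟨ψ, r, hψ, hr, hF⟩ := family hG hm hP (ae_continuousAt ρ hl)
  have e1 := poincare_lower _ (withDensity_absolutelyContinuous _ _)
    (fun k => volume.withDensity fun x => ENNReal.ofReal (Real.exp (-ψ k x)))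
    (fun k => by
      obtain ⟨p1, p2, p3, p4, ⟨M, p5⟩, p6⟩ := hψ k
      exact poincare_nonempty (ψ k) (r k) M p1 p4 p2 p5 p6) hF (fun k => (hψ k).2.2.2.2.2) ε hε
  have e2 := (cov_tendsto _
    (fun k => volume.withDensity fun x => ENNReal.ofReal (Real.exp (-ψ k x))) hF).eventually_lt_const
      hε
  have e3 := hr.eventually_const_lt (show s - ε < s by linarith)
  obtain ⟨k, k1, k2, k3⟩ := (e1.and (e2.and e3)).exists
  obtain ⟨p1, p2, p3, p4, -, p6⟩ := hψ k
  refine ⟨_, p6, ⟨ψ k, p3, rfl⟩, ⟨_, ?_, lc_exp_neg (ψ k) ?_, rfl⟩, k1, k2, ?_⟩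
  · exact (by fun_prop : Continuous fun x => Real.exp (-ψ k x)).measurable
  · have := p2.mono p1.le
    rwa [strongConvexOn_zero] at this
  · exact ulc_of_strong (ψ k) p4 _ (p2.mono k3.le)

lemma main (μ : Measure (Euc n)) [IsProbabilityMeasure μ]
    (hμ : IsLogConcaveMeasure μ) (ε t : ℝ) (hε : 0 < ε) (hεt : ε < t) :
    ∃ ν : Measure (Euc n), IsProbabilityMeasure ν ∧
      (∃ ψ : Euc n → ℝ, IsRegularMeasure ν ψ) ∧ IsLogConcaveMeasure ν ∧
      poincareConst μ - ε ≤ poincareConst ν ∧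
      opNorm (covMatrix μ - covMatrix ν) < ε ∧
      (UniformlyLogConcave t μ → UniformlyLogConcave (t - ε) ν) := by
  by_cases hu : UniformlyLogConcave t μ
  · obtain ⟨g, hgm, hg, hμe⟩ := hu
    have hP : IsProbabilityMeasure μ := inferInstance
    rw [hμe] at hP
    obtain ⟨ν, q1, q2, q3, q4, q5, q6⟩ :=
      core (fun x => Real.exp (-t * ‖x‖ ^ 2 / 2) * g x) t (hε.trans hεt).le
        (Measurable.mul (by fun_prop) hgm)
        (fun x => mul_nonneg (Real.exp_pos _).le (hg.1 x)) (slc_of_gauss g hg t) hP ε hε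
    rw [← hμe] at q4 q5
    exact ⟨ν, q1, q2, q3, q4, q5, fun _ => q6⟩
  · obtain ⟨ρ, hm, hl, hμe⟩ := hμ
    have hP : IsProbabilityMeasure μ := inferInstance
    rw [hμe] at hP
    obtain ⟨ν, q1, q2, q3, q4, q5, q6⟩ := core ρ 0 le_rfl hm hl.1
      (fun x y p q hp hq hpq => by simpa using hl.2 x y p q hp hq hpq) hP ε hε
    rw [← hμe] at q4 q5
    exact ⟨ν, q1, q2, q3, q4, q5, fun h => absurd h hu⟩

end ApproxAux

end

/-- Approximation by regular log-concave measures (Lemma on regularization). -/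
theorem approximation_lemma {n : ℕ} (μ : Measure (Euc n)) [IsProbabilityMeasure μ]
    (hμ : IsLogConcaveMeasure μ) (ε t : ℝ) (hε : 0 < ε) (hεt : ε < t) :
    ∃ ν : Measure (Euc n), IsProbabilityMeasure ν ∧
      (∃ ψ : Euc n → ℝ, IsRegularMeasure ν ψ) ∧ IsLogConcaveMeasure ν ∧
      poincareConst μ - ε ≤ poincareConst ν ∧
      opNorm (covMatrix μ - covMatrix ν) < ε ∧
      (UniformlyLogConcave t μ → UniformlyLogConcave (t - ε) ν) := by
  exact ApproxAux.main μ hμ ε t hε hεt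
end

section
/- Let μ be a probability measure on ℝⁿ with a regular, log-concave density ρ = e^{−ψ}, let λ = 1/C_P(μ), and let f be a μ-tempered function with ∫ f dμ = 0, ∫ f² dμ = 1 and L_μ f = −λ f, where L_μ u = Δu − ⟨∇ψ, ∇u⟩. Then |∫ ∇f dμ|² ≥ (1/λ) ∫ ⟨(∇²ψ) ∇f, ∇f⟩ dμ. -/
open MeasureTheory Real
open scoped ENNReal RealInnerProductSpace

noncomputable section

/-- Partial derivative. -/
def PD {n : ℕ} (i : Fin n) (u : Euc n → ℝ) (x : Euc n) : ℝ :=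
  fderiv ℝ u x (EuclideanSpace.single i (1:ℝ))

/-- Continuous functions of subexponential decay relative to `e^{-ψ}`. -/
def SubD {n : ℕ} (ψ g : Euc n → ℝ) : Prop :=
  Continuous g ∧ ∃ C a : ℝ, 0 ≤ C ∧ 0 < a ∧
    ∀ x, |g x| ≤ C * Real.exp (ψ x / 2) * Real.exp (-a * ‖x‖)

lemma poly_exp_bound (a : ℝ) (ha : 0 < a) (k : ℕ) :
    ∃ C : ℝ, 0 ≤ C ∧ ∀ t : ℝ, 0 ≤ t → (1 + t) ^ k * Real.exp (-a * t) ≤ C := by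
  refine ⟨(k.factorial : ℝ) * Real.exp a / a ^ k, by positivity, fun t ht => ?_⟩
  have h := Real.pow_div_factorial_le_exp (a * (1 + t)) (by positivity) k
  rw [div_le_iff₀ (by positivity), mul_pow] at h
  rw [le_div_iff₀ (by positivity)]
  have h2 : Real.exp (a * (1 + t)) = Real.exp a * Real.exp (a * t) := by
    rw [← Real.exp_add]; ring_nf
  have h3 : Real.exp (a * t) * Real.exp (-a * t) = 1 := by
    rw [← Real.exp_add]; simp
  rw [h2] at h
  have h4 := mul_le_mul_of_nonneg_right h (Real.exp_pos (-a * t)).le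
  calc (1 + t) ^ k * Real.exp (-a * t) * a ^ k = a ^ k * (1 + t) ^ k * Real.exp (-a * t) := by ring
    _ ≤ _ := h4
    _ = (k.factorial : ℝ) * Real.exp a * (Real.exp (a * t) * Real.exp (-a * t)) := by ring
    _ = _ := by rw [h3, mul_one]

lemma integrable_exp_neg_norm {n : ℕ} (a : ℝ) (ha : 0 < a) :
    Integrable (fun x : Euc n => Real.exp (-a * ‖x‖)) := by
  obtain ⟨C, hC, h⟩ := poly_exp_bound a ha (n + 1)
  have hi := integrable_one_add_norm (E := Euc n) (μ := volume) (r := ((n + 1 : ℕ) : ℝ)) (by simp)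
  refine (hi.const_mul C).mono' (by fun_prop) (Filter.Eventually.of_forall fun x => ?_)
  have := h ‖x‖ (norm_nonneg x)
  have hp : 0 < (1 + ‖x‖) ^ (n + 1) := by positivity
  rw [Real.norm_eq_abs, abs_of_pos (Real.exp_pos _), Real.rpow_neg (by positivity),
    Real.rpow_natCast, ← div_eq_mul_inv, le_div_iff₀ hp]
  linarith

lemma SubD.mul_poly {n : ℕ} {ψ g p : Euc n → ℝ} (hg : SubD ψ g) (hp : Continuous p)
    (hb : ∃ C : ℝ, ∃ k : ℕ, ∀ x, |p x| ≤ C * (1 + ‖x‖) ^ k) : SubD ψ (fun x => p x * g x) := by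
  obtain ⟨hc, C, a, hC, ha, h⟩ := hg
  obtain ⟨K, k, hK⟩ := hb
  obtain ⟨M, hM, hM'⟩ := poly_exp_bound (a / 2) (by positivity) k
  refine ⟨hp.mul hc, |K| * M * C, a / 2, by positivity, by positivity, fun x => ?_⟩
  have e : Real.exp (-a * ‖x‖) = Real.exp (-(a / 2) * ‖x‖) * Real.exp (-(a / 2) * ‖x‖) := by
    rw [← Real.exp_add]; ring_nf
  have h1 : |p x| ≤ |K| * (1 + ‖x‖) ^ k :=
    (hK x).trans (mul_le_mul_of_nonneg_right (le_abs_self K) (by positivity))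
  have h2 := hM' ‖x‖ (norm_nonneg x)
  rw [abs_mul]
  calc |p x| * |g x| ≤ (|K| * (1 + ‖x‖) ^ k) * (C * Real.exp (ψ x / 2) * Real.exp (-a * ‖x‖)) :=
        mul_le_mul h1 (h x) (abs_nonneg _) (by positivity)
    _ = |K| * ((1 + ‖x‖) ^ k * Real.exp (-(a / 2) * ‖x‖)) *
        (C * Real.exp (ψ x / 2) * Real.exp (-(a / 2) * ‖x‖)) := by rw [e]; ring
    _ ≤ |K| * M * (C * Real.exp (ψ x / 2) * Real.exp (-(a / 2) * ‖x‖)) := by gcongr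
    _ = _ := by ring

lemma SubD.integrable_mul {n : ℕ} {ψ g h : Euc n → ℝ} (hψ : Continuous ψ)
    (hg : SubD ψ g) (hh : SubD ψ h) :
    Integrable (fun x => Real.exp (-ψ x) * (g x * h x)) := by
  obtain ⟨hgc, C, a, hC, ha, hg⟩ := hg
  obtain ⟨hhc, D, b, hD, hb, hh⟩ := hh
  refine ((integrable_exp_neg_norm (n := n) (a + b) (by positivity)).const_mul (C * D)).mono'
    (by fun_prop) (Filter.Eventually.of_forall fun x => ?_)
  rw [Real.norm_eq_abs, abs_mul, abs_mul, abs_of_pos (Real.exp_pos _)]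
  calc Real.exp (-ψ x) * (|g x| * |h x|)
      ≤ Real.exp (-ψ x) * ((C * Real.exp (ψ x / 2) * Real.exp (-a * ‖x‖)) *
        (D * Real.exp (ψ x / 2) * Real.exp (-b * ‖x‖))) := by
        gcongr
        · exact hg x
        · exact hh x
    _ = C * D * (Real.exp (-ψ x) * Real.exp (ψ x / 2) * Real.exp (ψ x / 2) *
        Real.exp (-a * ‖x‖) * Real.exp (-b * ‖x‖)) := by ring
    _ = C * D * Real.exp (-(a + b) * ‖x‖) := by
        simp only [← Real.exp_add]; ring_nf
    _ ≤ _ := le_rfl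

lemma SubD.sub {n : ℕ} {ψ g h : Euc n → ℝ} (hg : SubD ψ g) (hh : SubD ψ h) :
    SubD ψ (fun x => g x - h x) := by
  obtain ⟨hgc, C, a, hC, ha, hg⟩ := hg
  obtain ⟨hhc, D, b, hD, hb, hh⟩ := hh
  refine ⟨hgc.sub hhc, C + D, min a b, by positivity, lt_min ha hb, fun x => ?_⟩
  have h1 : Real.exp (-a * ‖x‖) ≤ Real.exp (-(min a b) * ‖x‖) := by
    have := min_le_left a b
    gcongr
  have h2 : Real.exp (-b * ‖x‖) ≤ Real.exp (-(min a b) * ‖x‖) := by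
    have := min_le_right a b
    gcongr
  calc |g x - h x| ≤ |g x| + |h x| := abs_sub _ _
    _ ≤ C * Real.exp (ψ x / 2) * Real.exp (-(min a b) * ‖x‖) +
        D * Real.exp (ψ x / 2) * Real.exp (-(min a b) * ‖x‖) := by
        refine add_le_add ((hg x).trans ?_) ((hh x).trans ?_)
        · gcongr
        · gcongr
    _ = _ := by ring

lemma PD_contDiff {n : ℕ} {u : Euc n → ℝ} (hu : ContDiff ℝ (⊤ : ℕ∞) u) (i : Fin n) :
    ContDiff ℝ (⊤ : ℕ∞) (PD i u) :=
  (hu.fderiv_right (m := (⊤ : ℕ∞)) (by simp)).clm_apply contDiff_const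

lemma PD_norm {n : ℕ} {u : Euc n → ℝ} (hu : ContDiff ℝ (⊤ : ℕ∞) u) (i : Fin n) (m : ℕ)
    (x : Euc n) : ‖iteratedFDeriv ℝ m (PD i u) x‖ ≤ ‖iteratedFDeriv ℝ (m + 1) u x‖ := by
  have hd : ContDiff ℝ (⊤ : ℕ∞) (fderiv ℝ u) := hu.fderiv_right (m := (⊤ : ℕ∞)) (by simp)
  set L := ContinuousLinearMap.apply ℝ ℝ (EuclideanSpace.single i (1:ℝ) : Euc n) with hL
  have h := L.norm_iteratedFDeriv_comp_left (f := fderiv ℝ u) (x := x) (n := m)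
    (N := (⊤ : ℕ∞)) hd.contDiffAt (by exact_mod_cast le_top)
  have hn : ‖L‖ ≤ 1 := by
    refine L.opNorm_le_bound zero_le_one fun A => ?_
    have := A.le_opNorm (EuclideanSpace.single i (1:ℝ))
    simpa [hL] using this
  rw [norm_iteratedFDeriv_fderiv] at h
  refine h.trans ?_
  exact mul_le_of_le_one_left (norm_nonneg _) hn

lemma PD_tempered {n : ℕ} {ρ u : Euc n → ℝ} (hu : IsTempered ρ u) (i : Fin n) :
    IsTempered ρ (PD i u) := by
  refine ⟨PD_contDiff hu.1 i, fun m => ?_⟩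
  obtain ⟨C, hC, a, ha, h⟩ := hu.2 (m + 1)
  exact ⟨C, hC, a, ha, fun x => (PD_norm hu.1 i m x).trans (h x)⟩

lemma tempered_SubD {n : ℕ} {ψ u : Euc n → ℝ} (hu : IsTempered (fun x => Real.exp (-ψ x)) u) :
    SubD ψ u := by
  obtain ⟨C, hC, a, ha, h⟩ := hu.2 0
  refine ⟨hu.1.continuous, C, a, hC.le, ha, fun x => ?_⟩
  have := h x
  rw [norm_iteratedFDeriv_zero, Real.norm_eq_abs, ← Real.exp_half, div_eq_mul_inv,
    ← Real.exp_neg] at this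
  convert this using 4
  ring

lemma PD_comm {n : ℕ} {u : Euc n → ℝ} (hu : ContDiff ℝ (⊤ : ℕ∞) u) (i j : Fin n) (x : Euc n) :
    PD i (PD j u) x = fderiv ℝ (fderiv ℝ u) x (EuclideanSpace.single i (1:ℝ))
      (EuclideanSpace.single j (1:ℝ)) ∧ PD i (PD j u) x = PD j (PD i u) x := by
  have hd : ContDiff ℝ (⊤ : ℕ∞) (fderiv ℝ u) := hu.fderiv_right (m := (⊤ : ℕ∞)) (by simp)
  have key : ∀ i j : Fin n, PD i (PD j u) x =
      fderiv ℝ (fderiv ℝ u) x (EuclideanSpace.single i (1:ℝ))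
      (EuclideanSpace.single j (1:ℝ)) := by
    intro i j
    have hda : DifferentiableAt ℝ (fderiv ℝ u) x := hd.differentiable (by simp) x
    unfold PD
    rw [fderiv_clm_apply hda (by fun_prop)]
    simp
  refine ⟨key i j, ?_⟩
  rw [key, key]
  exact (hu.contDiffAt.isSymmSndFDerivAt (by
    rw [minSmoothness_of_isRCLikeNormedField]
    exact WithTop.coe_le_coe.2 (le_top : ((2 : ℕ∞)) ≤ ⊤))).eq _ _

lemma gradient_apply {n : ℕ} (u : Euc n → ℝ) (x : Euc n) (i : Fin n) :
    gradient u x i = PD i u x := by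
  have := inner_gradient_left (𝕜 := ℝ) (f := u) (x := x)
    (y := (EuclideanSpace.single i (1:ℝ) : Euc n))
  rw [EuclideanSpace.inner_single_right] at this
  simpa [PD] using this

lemma Lop_eq {n : ℕ} {ψ u : Euc n → ℝ} (hu : ContDiff ℝ (⊤ : ℕ∞) u) (x : Euc n) :
    Lop ψ u x = ∑ j, (PD j (PD j u) x - PD j ψ x * PD j u x) := by
  unfold Lop lap
  rw [Finset.sum_sub_distrib, PiLp.inner_apply]
  congr 1
  · refine Finset.sum_congr rfl fun j _ => ?_
    rw [iteratedFDeriv_two_apply, (PD_comm hu j j x).1]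
    simp
  · refine Finset.sum_congr rfl fun j _ => ?_
    rw [gradient_apply, gradient_apply]
    simp [mul_comm]

lemma hess_eq {n : ℕ} {ψ : Euc n → ℝ} (hψ : ContDiff ℝ (⊤ : ℕ∞) ψ) (x v : Euc n) :
    iteratedFDeriv ℝ 2 ψ x ![v, v] = ∑ i, v i * ∑ j, PD i (PD j ψ) x * v j := by
  rw [iteratedFDeriv_two_apply]
  have hv : v = ∑ i, v i • (EuclideanSpace.single i (1:ℝ) : Euc n) := by
    ext k
    simp [Finset.sum_apply, Pi.single_apply]
  simp only [Matrix.cons_val_zero, Matrix.cons_val_one]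
  conv_lhs => rw [hv]
  simp only [map_sum, map_smul, ContinuousLinearMap.sum_apply, ContinuousLinearMap.smul_apply,
    smul_eq_mul, Finset.mul_sum, fun i j => (PD_comm hψ i j x).1]
  rw [Finset.sum_comm]
  refine Finset.sum_congr rfl fun i _ => Finset.sum_congr rfl fun j _ => ?_
  ring

lemma integral_mu {n : ℕ} {μ : Measure (Euc n)} {ψ : Euc n → ℝ} (hψ : Continuous ψ)
    (hμ : μ = volume.withDensity (fun x => ENNReal.ofReal (Real.exp (-ψ x)))) (g : Euc n → ℝ) :
    ∫ x, g x ∂μ = ∫ x, Real.exp (-ψ x) * g x := by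
  rw [hμ, integral_withDensity_eq_integral_toReal_smul (by fun_prop)
    (Filter.Eventually.of_forall fun x => ENNReal.ofReal_lt_top)]
  simp [ENNReal.toReal_ofReal (Real.exp_pos _).le]

lemma integrable_mu {n : ℕ} {μ : Measure (Euc n)} {ψ : Euc n → ℝ} (hψ : Continuous ψ)
    (hμ : μ = volume.withDensity (fun x => ENNReal.ofReal (Real.exp (-ψ x)))) {g : Euc n → ℝ}
    (h : Integrable (fun x => Real.exp (-ψ x) * g x)) : Integrable g μ := by
  rw [hμ, integrable_withDensity_iff_integrable_smul' (by fun_prop)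
    (Filter.Eventually.of_forall fun x => ENNReal.ofReal_lt_top)]
  simpa [ENNReal.toReal_ofReal (Real.exp_pos _).le] using h

lemma PD_poly {n : ℕ} {ψ : Euc n → ℝ} (hψ : IsRegularPotential ψ) (i : Fin n) :
    ∃ C : ℝ, ∃ k : ℕ, ∀ x, |PD i ψ x| ≤ C * (1 + ‖x‖) ^ k := by
  obtain ⟨C, k, h⟩ := hψ.2.2 1
  refine ⟨C, k, fun x => ?_⟩
  have := (PD_norm hψ.1 i 0 x).trans (h x)
  rwa [norm_iteratedFDeriv_zero, Real.norm_eq_abs] at this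

lemma PD2_poly {n : ℕ} {ψ : Euc n → ℝ} (hψ : IsRegularPotential ψ) (i j : Fin n) :
    ∃ C : ℝ, ∃ k : ℕ, ∀ x, |PD i (PD j ψ) x| ≤ C * (1 + ‖x‖) ^ k := by
  obtain ⟨C, k, h⟩ := hψ.2.2 2
  refine ⟨C, k, fun x => ?_⟩
  have := (PD_norm (PD_contDiff hψ.1 j) i 0 x).trans ((PD_norm hψ.1 j 1 x).trans (h x))
  rwa [norm_iteratedFDeriv_zero, Real.norm_eq_abs] at this

section main
variable {n : ℕ} {μ : Measure (Euc n)} {ψ : Euc n → ℝ}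

lemma SubD.int_mu (hreg : IsRegularMeasure μ ψ) {g h : Euc n → ℝ}
    (hg : SubD ψ g) (hh : SubD ψ h) : Integrable (fun x => g x * h x) μ :=
  integrable_mu hreg.1.1.continuous hreg.2 (hg.integrable_mul hreg.1.1.continuous hh)

lemma LpartSubD (hreg : IsRegularMeasure μ ψ) {u : Euc n → ℝ}
    (hu : IsTempered (fun x => Real.exp (-ψ x)) u) (j : Fin n) :
    SubD ψ (fun x => PD j (PD j u) x - PD j ψ x * PD j u x) :=
  (tempered_SubD (PD_tempered (PD_tempered hu j) j)).sub
    ((tempered_SubD (PD_tempered hu j)).mul_poly (PD_contDiff hreg.1.1 j).continuous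
      (PD_poly hreg.1 j))

lemma ibp_coord (hreg : IsRegularMeasure μ ψ) {u : Euc n → ℝ}
    (hu : IsTempered (fun x => Real.exp (-ψ x)) u) (j : Fin n) :
    ∫ x, u x * (PD j (PD j u) x - PD j ψ x * PD j u x) ∂μ = -∫ x, PD j u x * PD j u x ∂μ := by
  have hψc := hreg.1.1.continuous
  have hψd : Differentiable ℝ ψ := hreg.1.1.differentiable (by simp)
  have hud : Differentiable ℝ u := hu.1.differentiable (by simp)
  have hjd : Differentiable ℝ (PD j u) := (PD_contDiff hu.1 j).differentiable (by simp)
  have s0 := tempered_SubD hu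
  have s1 := tempered_SubD (PD_tempered hu j)
  have s2 := LpartSubD hreg hu j
  rw [integral_mu hψc hreg.2, integral_mu hψc hreg.2]
  have hfd : ∀ x, fderiv ℝ (fun x => PD j u x * Real.exp (-ψ x)) x
      (EuclideanSpace.single j (1:ℝ)) =
      Real.exp (-ψ x) * (PD j (PD j u) x - PD j ψ x * PD j u x) := by
    intro x
    have h1 : HasFDerivAt (fun x => Real.exp (-ψ x)) (Real.exp (-ψ x) • -fderiv ℝ ψ x) x :=
      ((hψd x).hasFDerivAt.neg).exp
    have h2 := (hjd x).hasFDerivAt.fun_mul h1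
    rw [h2.fderiv]
    simp only [ContinuousLinearMap.add_apply, ContinuousLinearMap.smul_apply,
      ContinuousLinearMap.neg_apply, smul_eq_mul]
    change _ * (_ * -(PD j ψ x)) + _ * PD j (PD j u) x = _
    ring
  have hd2 : Differentiable ℝ (fun x => PD j u x * Real.exp (-ψ x)) := by fun_prop
  have := integral_mul_fderiv_eq_neg_fderiv_mul_of_integrable (μ := (volume : Measure (Euc n)))
    (f := u) (g := fun x => PD j u x * Real.exp (-ψ x)) (v := EuclideanSpace.single j (1:ℝ))
    ?_ ?_ ?_ (fun x _ => hud x) (fun x _ => hd2 x)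
  · simp only [hfd] at this
    calc _ = _ := integral_congr_ae (Filter.Eventually.of_forall fun x => by ring)
      _ = _ := this
      _ = _ := by
        congr 1
        refine integral_congr_ae (Filter.Eventually.of_forall fun x => ?_)
        change PD j u x * _ = _
        ring
  · refine (s1.integrable_mul hψc s1).congr (Filter.Eventually.of_forall fun x => ?_)
    change _ = PD j u x * _
    ring
  · simp only [hfd]
    refine (s0.integrable_mul hψc s2).congr (Filter.Eventually.of_forall fun x => ?_)
    ring
  · refine (s0.integrable_mul hψc s1).congr (Filter.Eventually.of_forall fun x => ?_)
    ring

lemma ibp (hreg : IsRegularMeasure μ ψ) {u : Euc n → ℝ}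
    (hu : IsTempered (fun x => Real.exp (-ψ x)) u) :
    ∫ x, u x * Lop ψ u x ∂μ = -∑ j, ∫ x, PD j u x * PD j u x ∂μ := by
  simp only [Lop_eq hu.1, Finset.mul_sum]
  rw [integral_finsetSum _ fun j _ => (tempered_SubD hu).int_mu hreg (LpartSubD hreg hu j),
    ← Finset.sum_neg_distrib]
  exact Finset.sum_congr rfl fun j _ => ibp_coord hreg hu j

lemma norm_grad_sq (u : Euc n → ℝ) (x : Euc n) :
    ‖gradient u x‖ ^ 2 = ∑ j, PD j u x * PD j u x := by
  rw [EuclideanSpace.real_norm_sq_eq]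
  exact Finset.sum_congr rfl fun j _ => by rw [gradient_apply, sq]

lemma int_grad_sq (hreg : IsRegularMeasure μ ψ) {u : Euc n → ℝ}
    (hu : IsTempered (fun x => Real.exp (-ψ x)) u) :
    Integrable (fun x => ‖gradient u x‖ ^ 2) μ ∧
    ∫ x, ‖gradient u x‖ ^ 2 ∂μ = ∑ j, ∫ x, PD j u x * PD j u x ∂μ := by
  have hi : ∀ j ∈ Finset.univ, Integrable (fun x => PD j u x * PD j u x) μ := fun j _ =>
    (tempered_SubD (PD_tempered hu j)).int_mu hreg (tempered_SubD (PD_tempered hu j))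
  simp only [norm_grad_sq]
  exact ⟨integrable_finsetSum _ hi, integral_finsetSum _ hi⟩

/-- Differentiating the eigenvalue equation. -/
lemma Lop_PD (hψ : ContDiff ℝ (⊤ : ℕ∞) ψ) {f : Euc n → ℝ} (hf : ContDiff ℝ (⊤ : ℕ∞) f)
    {lam : ℝ} (heig : ∀ x, Lop ψ f x = -lam * f x) (i : Fin n) (x : Euc n) :
    Lop ψ (PD i f) x = -lam * PD i f x + ∑ j, PD i (PD j ψ) x * PD j f x := by
  have d : ∀ {g : Euc n → ℝ}, ContDiff ℝ (⊤ : ℕ∞) g → HasFDerivAt g (fderiv ℝ g x) x :=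
    fun hg => (hg.differentiable (by simp) x).hasFDerivAt
  have h1 : HasFDerivAt (fun y => Lop ψ f y) (-lam • fderiv ℝ f x) x := by
    simp only [heig]
    exact (d hf).const_mul (-lam)
  have h2 : HasFDerivAt (fun y => ∑ j, (PD j (PD j f) y - PD j ψ y * PD j f y))
      (∑ j, (fderiv ℝ (PD j (PD j f)) x -
        (PD j ψ x • fderiv ℝ (PD j f) x + PD j f x • fderiv ℝ (PD j ψ) x))) x :=
    HasFDerivAt.fun_sum fun j _ => (d (PD_contDiff (PD_contDiff hf j) j)).sub
      ((d (PD_contDiff hψ j)).mul (d (PD_contDiff hf j)))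
  simp only [Lop_eq hf] at h1
  have h3 := congrArg (fun A => A (EuclideanSpace.single i (1:ℝ))) (h1.unique h2)
  simp only [ContinuousLinearMap.sum_apply, ContinuousLinearMap.sub_apply,
    ContinuousLinearMap.add_apply, ContinuousLinearMap.smul_apply, smul_eq_mul] at h3
  change -lam * PD i f x = ∑ j, (PD i (PD j (PD j f)) x -
    (PD j ψ x * PD i (PD j f) x + PD j f x * PD i (PD j ψ) x)) at h3
  rw [h3, Lop_eq (PD_contDiff hf i), ← Finset.sum_add_distrib]
  refine Finset.sum_congr rfl fun j _ => ?_
  have e : PD j (PD i f) = PD i (PD j f) := funext fun y => (PD_comm hf j i y).2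
  rw [e, (PD_comm (PD_contDiff hf j) i j x).2]
  ring

end main

lemma poincare_apply {n : ℕ} {μ : Measure (Euc n)} (hpos : 0 < poincareConst μ) {u : Euc n → ℝ}
    (hu : LocallyLipschitz u) (hi : Integrable (fun x => ‖gradient u x‖ ^ 2) μ) :
    ∫ x, u x ^ 2 ∂μ - (∫ x, u x ∂μ) ^ 2 ≤ poincareConst μ * ∫ x, ‖gradient u x‖ ^ 2 ∂μ := by
  have hne : (poincareSet μ).Nonempty := by
    by_contra h
    rw [Set.not_nonempty_iff_eq_empty] at h
    simp [poincareConst, h] at hpos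
  have hD : 0 ≤ ∫ x, ‖gradient u x‖ ^ 2 ∂μ := integral_nonneg fun x => by positivity
  rcases hD.eq_or_lt with h0 | h0
  · obtain ⟨C, hC⟩ := hne
    have := hC.2 u hu hi
    rw [← h0] at this ⊢
    simpa using this
  · rw [← div_le_iff₀ h0]
    refine le_csInf hne fun C hC => ?_
    rw [div_le_iff₀ h0]
    exact hC.2 u hu hi

end

/-- The first eigenfunction has a preferred direction:
`|∫ ∇f dμ|² ≥ (1/λ) ∫ ⟨(∇²ψ)∇f, ∇f⟩ dμ`. -/
theorem eigenfunction_preferred_direction {n : ℕ} (μ : Measure (Euc n))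
    [IsProbabilityMeasure μ] (ψ : Euc n → ℝ) (hreg : IsRegularMeasure μ ψ)
    (lam : ℝ) (hlam : lam = 1 / poincareConst μ)
    (f : Euc n → ℝ) (hf : IsTempered (fun x => Real.exp (-ψ x)) f)
    (hmean : ∫ x, f x ∂μ = 0) (hnorm : ∫ x, f x ^ 2 ∂μ = 1)
    (heig : ∀ x, Lop ψ f x = -lam * f x) :
    (1 / lam) * ∫ x, iteratedFDeriv ℝ 2 ψ x ![gradient f x, gradient f x] ∂μ ≤
      ‖∫ x, gradient f x ∂μ‖ ^ 2 := by
  by_cases hC0 : poincareConst μ = 0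
  · have : lam = 0 := by rw [hlam, hC0]; simp
    rw [this]; simp
  have hCpos : 0 < poincareConst μ :=
    lt_of_le_of_ne (Real.sInf_nonneg fun C hC => hC.1) (Ne.symm hC0)
  have hlpos : 0 < lam := by rw [hlam]; positivity
  have hCl : poincareConst μ = 1 / lam := by rw [hlam]; simp
  have hψ := hreg.1.1
  have sD := fun i => tempered_SubD (PD_tempered hf i)
  -- energy identity
  have hE : ∑ j, ∫ x, PD j f x * PD j f x ∂μ = lam := by
    have h := ibp hreg hf
    simp only [heig] at h
    have h' : ∫ x, f x * (-lam * f x) ∂μ = -lam := by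
      rw [show (fun x => f x * (-lam * f x)) = fun x => -lam * f x ^ 2 by ext; ring,
        integral_const_mul, hnorm, mul_one]
    linarith
  -- integrability of the Hessian terms
  have hHi : ∀ i, Integrable (fun x => PD i f x * ∑ j, PD i (PD j ψ) x * PD j f x) μ := by
    intro i
    simp only [Finset.mul_sum]
    exact integrable_finsetSum _ fun j _ => (sD i).int_mu hreg
      ((sD j).mul_poly (PD_contDiff (PD_contDiff hψ j) i).continuous (PD2_poly hreg.1 i j))
  have hH : ∫ x, iteratedFDeriv ℝ 2 ψ x ![gradient f x, gradient f x] ∂μ =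
      ∑ i, ∫ x, PD i f x * ∑ j, PD i (PD j ψ) x * PD j f x ∂μ := by
    rw [← integral_finsetSum _ fun i _ => hHi i]
    simp only [hess_eq hψ, gradient_apply]
  have hB : ∀ i, ∫ x, ‖gradient (PD i f) x‖ ^ 2 ∂μ = lam * ∫ x, PD i f x * PD i f x ∂μ -
      ∫ x, PD i f x * ∑ j, PD i (PD j ψ) x * PD j f x ∂μ := by
    intro i
    have h := ibp hreg (PD_tempered hf i)
    rw [← (int_grad_sq hreg (PD_tempered hf i)).2] at h
    simp only [Lop_PD hψ hf.1 heig] at h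
    rw [show (fun x => PD i f x * (-lam * PD i f x + ∑ j, PD i (PD j ψ) x * PD j f x)) =
      fun x => -lam * (PD i f x * PD i f x) + PD i f x * ∑ j, PD i (PD j ψ) x * PD j f x by
        ext; ring, integral_add (((sD i).int_mu hreg (sD i)).const_mul _) (hHi i),
        integral_const_mul] at h
    linarith
  have hP : ∀ i, ∫ x, PD i f x * PD i f x ∂μ - (∫ x, PD i f x ∂μ) ^ 2 ≤
      (1 / lam) * ∫ x, ‖gradient (PD i f) x‖ ^ 2 ∂μ := by
    intro i
    have := poincare_apply hCpos
      ((PD_contDiff hf.1 i).of_le (by exact_mod_cast le_top) : ContDiff ℝ 1 (PD i f)).locallyLipschitz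
      (int_grad_sq hreg (PD_tempered hf i)).1
    rw [hCl] at this
    simpa only [sq (PD i f _)] using this
  have hI : ∀ i, Integrable (fun x => gradient f x i) μ := by
    intro i
    simp only [gradient_apply]
    refine (((sD i).int_mu hreg (sD i)).add (integrable_const (1:ℝ))).mono'
      (sD i).1.aestronglyMeasurable (Filter.Eventually.of_forall fun x => ?_)
    simp only [Pi.add_apply, Real.norm_eq_abs]
    have := sq_abs (PD i f x)
    nlinarith [sq_nonneg (|PD i f x| - 1), abs_nonneg (PD i f x)]
  have hG : ‖∫ x, gradient f x ∂μ‖ ^ 2 = ∑ i, (∫ x, PD i f x ∂μ) ^ 2 := by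
    rw [EuclideanSpace.real_norm_sq_eq]
    refine Finset.sum_congr rfl fun i _ => ?_
    rw [eval_integral_piLp hI]
    simp only [gradient_apply]
  have hS := Finset.sum_le_sum fun i (_ : i ∈ Finset.univ) => hP i
  simp only [hB] at hS
  rw [Finset.sum_sub_distrib, ← Finset.mul_sum, Finset.sum_sub_distrib, ← Finset.mul_sum, hE,
    ← hG, ← hH] at hS
  have h5 : 1 / lam * (lam * lam) = lam := by field_simp
  rw [mul_sub, h5] at hS
  linarith
end

section
/- Let μ be a probability measure on ℝⁿ with a regular, log-concave density ρ = e^{−ψ}, let λ > 0, and let f be a μ-tempered function with ∫ f dμ = 0, ∫ f² dμ = 1 and L_μ f = −λ f, where L_μ u = Δu − ⟨∇ψ, ∇u⟩. Then |∫ ∇f dμ|² = λ² |∫ f(x) x dμ(x)|² ≤ λ² ‖Cov(μ)‖_op, where Cov(μ) is the covariance matrix of μ and ‖·‖_op the operator norm. -/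
open MeasureTheory Real
open scoped ENNReal RealInnerProductSpace

section Helpers

lemma aux_integrable {n : ℕ} {h : Euc n → ℝ} (hc : Continuous h) {C a : ℝ} {k : ℕ} (ha : 0 < a)
    (hb : ∀ x, |h x| ≤ C * (1 + ‖x‖) ^ k * Real.exp (-a * ‖x‖)) : Integrable h volume := by
  have hC : 0 ≤ C := by
    have := (abs_nonneg _).trans (hb 0)
    simpa using this
  set N : ℕ := k + (n + 1) with hN
  have hI : Integrable (fun x : Euc n => (1 + ‖x‖) ^ (-((n + 1 : ℕ) : ℝ))) volume := by
    apply integrable_one_add_norm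
    simp
  refine (hI.const_mul (C * (N.factorial / a ^ N * Real.exp a))).mono' hc.aestronglyMeasurable
    (Filter.Eventually.of_forall fun x => ?_)
  rw [Real.norm_eq_abs]
  refine (hb x).trans ?_
  have hp : 0 < 1 + ‖x‖ := by positivity
  have h1 := Real.pow_div_factorial_le_exp (x := a * (1 + ‖x‖)) (by positivity) N
  rw [Real.rpow_neg hp.le, Real.rpow_natCast]
  rw [div_le_iff₀ (by positivity), mul_pow] at h1
  have h2 : Real.exp (a * (1 + ‖x‖)) * Real.exp (-a * ‖x‖) = Real.exp a := by
    rw [← Real.exp_add]; congr 1; ring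
  have h3 : (1 + ‖x‖) ^ N * Real.exp (-a * ‖x‖) ≤ N.factorial / a ^ N * Real.exp a := by
    rw [div_mul_eq_mul_div, le_div_iff₀ (by positivity), ← h2]
    calc _ = (a ^ N * (1 + ‖x‖) ^ N) * Real.exp (-a * ‖x‖) := by ring
      _ ≤ (Real.exp (a * (1 + ‖x‖)) * N.factorial) * Real.exp (-a * ‖x‖) := by gcongr
      _ = _ := by ring
  have h4 : (1 + ‖x‖) ^ k * Real.exp (-a * ‖x‖)
      ≤ N.factorial / a ^ N * Real.exp a * ((1 + ‖x‖) ^ (n + 1))⁻¹ := by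
    rw [← div_eq_mul_inv, le_div_iff₀ (by positivity)]
    refine le_trans (le_of_eq ?_) h3
    rw [hN, pow_add]; ring
  calc _ = C * ((1 + ‖x‖) ^ k * Real.exp (-a * ‖x‖)) := by ring
    _ ≤ C * (N.factorial / a ^ N * Real.exp a * ((1 + ‖x‖) ^ (n + 1))⁻¹) := by gcongr
    _ = _ := by ring

lemma aux_quad {n : ℕ} {ψ : Euc n → ℝ} (hψ : ContDiff ℝ (⊤ : ℕ∞) ψ) {ε : ℝ}
    (h : ∀ x v : Euc n, ε * ‖v‖ ^ 2 ≤ iteratedFDeriv ℝ 2 ψ x ![v, v]) (x : Euc n) :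
    ψ 0 + fderiv ℝ ψ 0 x + ε * ‖x‖ ^ 2 / 2 ≤ ψ x := by
  have hd : Differentiable ℝ ψ := hψ.differentiable (by simp)
  have hd' : Differentiable ℝ (fderiv ℝ ψ) :=
    (contDiff_infty_iff_fderiv.1 hψ).2.differentiable (by simp)
  have hl : ∀ t : ℝ, HasDerivAt (fun t : ℝ => t • x) x t := fun t => by
    simpa using (hasDerivAt_id t).smul_const x
  have hg : ∀ t : ℝ, HasDerivAt (fun t : ℝ => ψ (t • x)) (fderiv ℝ ψ (t • x) x) t := fun t =>
    (hd (t • x)).hasFDerivAt.comp_hasDerivAt t (hl t)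
  have hg' : ∀ t : ℝ, HasDerivAt (fun t : ℝ => fderiv ℝ ψ (t • x) x)
      (fderiv ℝ (fderiv ℝ ψ) (t • x) x x) t := fun t => by
    have := (hd' (t • x)).hasFDerivAt.comp_hasDerivAt t (hl t)
    exact this.clm_apply (hasDerivAt_const t x) |>.congr_deriv (by simp)
  have hh' : ∀ t : ℝ, HasDerivAt
      (fun t : ℝ => fderiv ℝ ψ (t • x) x - fderiv ℝ ψ 0 x - ε * ‖x‖ ^ 2 * t)
      (fderiv ℝ (fderiv ℝ ψ) (t • x) x x - ε * ‖x‖ ^ 2) t := fun t => by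
    have := ((hg' t).sub_const (fderiv ℝ ψ 0 x)).sub ((hasDerivAt_id t).const_mul (ε * ‖x‖ ^ 2))
    exact this.congr_deriv (by simp)
  have hh : ∀ t : ℝ, HasDerivAt
      (fun t : ℝ => ψ (t • x) - fderiv ℝ ψ 0 x * t - ε * ‖x‖ ^ 2 / 2 * t ^ 2)
      (fderiv ℝ ψ (t • x) x - fderiv ℝ ψ 0 x - ε * ‖x‖ ^ 2 * t) t := fun t => by
    have := ((hg t).sub ((hasDerivAt_id t).const_mul (fderiv ℝ ψ 0 x))).sub
      ((hasDerivAt_pow 2 t).const_mul (ε * ‖x‖ ^ 2 / 2))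
    refine this.congr_deriv ?_
    simp; ring
  have m1 : Monotone
      (fun t : ℝ => fderiv ℝ ψ (t • x) x - fderiv ℝ ψ 0 x - ε * ‖x‖ ^ 2 * t) := by
    apply monotone_of_deriv_nonneg (fun t => (hh' t).differentiableAt)
    intro t
    rw [(hh' t).deriv]
    have := h (t • x) x
    rw [iteratedFDeriv_two_apply] at this
    simpa using this
  have m2 : MonotoneOn
      (fun t : ℝ => ψ (t • x) - fderiv ℝ ψ 0 x * t - ε * ‖x‖ ^ 2 / 2 * t ^ 2) (Set.Icc 0 1) := by
    apply monotoneOn_of_deriv_nonneg (convex_Icc 0 1)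
      (fun t _ => (hh t).continuousAt.continuousWithinAt)
      (fun t _ => (hh t).differentiableAt.differentiableWithinAt)
    intro t ht
    rw [(hh t).deriv]
    rw [interior_Icc] at ht
    have := m1 ht.1.le
    simpa using this
  have := m2 (Set.left_mem_Icc.2 zero_le_one) (Set.right_mem_Icc.2 zero_le_one) zero_le_one
  simp at this
  linarith

lemma aux_rho {n : ℕ} {ψ : Euc n → ℝ} (hψ : IsRegularPotential ψ) :
    ∃ C : ℝ, 0 < C ∧ ∀ x, Real.exp (-ψ x) ≤ C * Real.exp (-1 * ‖x‖) := by
  obtain ⟨hs, ⟨ε, hε, h⟩, -⟩ := hψ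
  set b := ‖fderiv ℝ ψ 0‖
  refine ⟨Real.exp (-ψ 0 + (b + 1) ^ 2 / (2 * ε)), Real.exp_pos _, fun x => ?_⟩
  rw [← Real.exp_add]
  apply Real.exp_le_exp.2
  have h1 := aux_quad hs (fun x v => (h x v).1) x
  have h2 : -(b * ‖x‖) ≤ fderiv ℝ ψ 0 x :=
    neg_le_of_abs_le ((fderiv ℝ ψ 0).le_opNorm x)
  have h3 : (b + 1) * ‖x‖ ≤ ε * ‖x‖ ^ 2 / 2 + (b + 1) ^ 2 / (2 * ε) := by
    have : ε * ‖x‖ ^ 2 / 2 + (b + 1) ^ 2 / (2 * ε) - (b + 1) * ‖x‖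
        = (ε * ‖x‖ - (b + 1)) ^ 2 / (2 * ε) := by field_simp; ring
    have h0 : 0 ≤ (ε * ‖x‖ - (b + 1)) ^ 2 / (2 * ε) := by positivity
    linarith
  linarith

lemma aux_tempered {n : ℕ} {ψ f : Euc n → ℝ} (hψ : IsRegularPotential ψ)
    (hf : IsTempered (fun x => Real.exp (-ψ x)) f) (m : ℕ) {g : Euc n → ℝ} (hg : Continuous g)
    {K : ℝ} {k : ℕ} (hb : ∀ x, |g x| ≤ K * (1 + ‖x‖) ^ k * ‖iteratedFDeriv ℝ m f x‖) :
    Integrable (fun x => g x * Real.exp (-ψ x)) volume := by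
  obtain ⟨C, hC, a, ha, h⟩ := hf.2 m
  obtain ⟨C', hC', hr⟩ := aux_rho hψ
  have hψc : Continuous ψ := hψ.1.continuous
  refine aux_integrable (C := |K| * C * Real.sqrt C') (a := a) (k := k) (by fun_prop) ha fun x => ?_
  rw [abs_mul, abs_of_pos (Real.exp_pos _)]
  have hp : 0 < Real.exp (-ψ x) := Real.exp_pos _
  have hsq : Real.sqrt (Real.exp (-ψ x)) ≤ Real.sqrt C' := by
    apply Real.sqrt_le_sqrt
    refine (hr x).trans ?_
    have : Real.exp (-1 * ‖x‖) ≤ 1 := Real.exp_le_one_iff.2 (by simp)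
    nlinarith
  have h1 : ‖iteratedFDeriv ℝ m f x‖ * Real.exp (-ψ x) ≤ C * Real.sqrt C' * Real.exp (-a * ‖x‖) := by
    calc _ ≤ (C / Real.sqrt (Real.exp (-ψ x)) * Real.exp (-a * ‖x‖)) * Real.exp (-ψ x) := by
          gcongr; exact h x
      _ = C * (Real.exp (-ψ x) / Real.sqrt (Real.exp (-ψ x))) * Real.exp (-a * ‖x‖) := by ring
      _ = C * Real.sqrt (Real.exp (-ψ x)) * Real.exp (-a * ‖x‖) := by rw [Real.div_sqrt]
      _ ≤ _ := by gcongr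
  calc _ ≤ (|K| * (1 + ‖x‖) ^ k * ‖iteratedFDeriv ℝ m f x‖) * Real.exp (-ψ x) := by
        gcongr
        refine (hb x).trans ?_
        gcongr
        exact le_abs_self K
    _ = |K| * (1 + ‖x‖) ^ k * (‖iteratedFDeriv ℝ m f x‖ * Real.exp (-ψ x)) := by ring
    _ ≤ |K| * (1 + ‖x‖) ^ k * (C * Real.sqrt C' * Real.exp (-a * ‖x‖)) := by gcongr
    _ = _ := by ring

lemma aux_coord {n : ℕ} (x : Euc n) (i : Fin n) : |x i| ≤ 1 + ‖x‖ := by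
  have := PiLp.norm_apply_le x i
  rw [Real.norm_eq_abs] at this
  linarith

lemma aux_grad {n : ℕ} (u : Euc n → ℝ) (x : Euc n) (i : Fin n) :
    gradient u x i = fderiv ℝ u x (EuclideanSpace.single i (1:ℝ)) := by
  have h : ⟪gradient u x, EuclideanSpace.single i (1:ℝ)⟫
      = fderiv ℝ u x (EuclideanSpace.single i (1:ℝ)) := by
    unfold gradient; rw [InnerProductSpace.toDual_symm_apply]
  rw [← h, EuclideanSpace.inner_single_right]; simp

lemma aux_norm1 {n : ℕ} (u : Euc n → ℝ) (x : Euc n) (i : Fin n) :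
    |fderiv ℝ u x (EuclideanSpace.single i (1:ℝ))| ≤ ‖iteratedFDeriv ℝ 1 u x‖ := by
  rw [norm_iteratedFDeriv_one]
  simpa using (fderiv ℝ u x).le_opNorm (EuclideanSpace.single i (1:ℝ))

lemma aux_norm2 {n : ℕ} (u : Euc n → ℝ) (x : Euc n) (i : Fin n) :
    |fderiv ℝ (fderiv ℝ u) x (EuclideanSpace.single i (1:ℝ)) (EuclideanSpace.single i (1:ℝ))|
      ≤ ‖iteratedFDeriv ℝ 2 u x‖ := by
  have := (iteratedFDeriv ℝ 2 u x).le_opNorm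
    ![EuclideanSpace.single i (1:ℝ), EuclideanSpace.single i (1:ℝ)]
  rw [iteratedFDeriv_two_apply] at this
  simpa using this

lemma aux_parts {n : ℕ} {ψ f : Euc n → ℝ} (hψ : IsRegularPotential ψ)
    (hf : IsTempered (fun x => Real.exp (-ψ x)) f) {lam : ℝ}
    (heig : ∀ x, Lop ψ f x = -lam * f x) (i : Fin n) :
    ∫ x, fderiv ℝ f x (EuclideanSpace.single i (1:ℝ)) * Real.exp (-ψ x)
      = lam * ∫ x, (f x * x i) * Real.exp (-ψ x) := by
  have hfs := hf.1
  have hψs := hψ.1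
  have hψd : Differentiable ℝ ψ := hψs.differentiable (by simp)
  have hf1 : ContDiff ℝ (⊤ : ℕ∞) (fderiv ℝ f) := (contDiff_infty_iff_fderiv.1 hfs).2
  have hfd : Differentiable ℝ (fderiv ℝ f) := hf1.differentiable (by simp)
  have hfc : Continuous (fderiv ℝ f) := hf1.continuous
  have hfc2 : Continuous (fderiv ℝ (fderiv ℝ f)) := hf1.continuous_fderiv (by simp)
  have hψc1 : Continuous (fderiv ℝ ψ) := hψs.continuous_fderiv (by simp)
  have hfc0 : Continuous f := hfs.continuous
  set e : Fin n → Euc n := fun j => EuclideanSpace.single j (1:ℝ) with he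
  have hcoord : ∀ x : Euc n, HasFDerivAt (fun x : Euc n => x i)
      (EuclideanSpace.proj (𝕜 := ℝ) i : Euc n →L[ℝ] ℝ) x := fun x =>
    (EuclideanSpace.proj (𝕜 := ℝ) i : Euc n →L[ℝ] ℝ).hasFDerivAt
  have hu : ∀ j x, HasFDerivAt (fun x : Euc n => x i * fderiv ℝ f x (e j))
      (x i • ((fderiv ℝ (fderiv ℝ f) x).flip (e j)) +
        fderiv ℝ f x (e j) • (EuclideanSpace.proj (𝕜 := ℝ) i : Euc n →L[ℝ] ℝ)) x := fun j x => by
    refine (hcoord x).mul ?_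
    have := (hfd x).hasFDerivAt.clm_apply (hasFDerivAt_const (e j) x)
    refine this.congr_fderiv ?_
    ext v; simp
  have hr : ∀ x, HasFDerivAt (fun x => Real.exp (-ψ x)) (Real.exp (-ψ x) • -fderiv ℝ ψ x) x :=
    fun x => ((hψd x).hasFDerivAt.neg).exp
  -- integrability
  have I0 : Integrable (fun x : Euc n => (f x * x i) * Real.exp (-ψ x)) volume := by
    refine aux_tempered hψ hf 0 (K := 1) (k := 1) (by fun_prop) fun x => ?_
    rw [norm_iteratedFDeriv_zero, abs_mul, Real.norm_eq_abs]
    have := aux_coord x i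
    nlinarith [abs_nonneg (f x)]
  have I1 : ∀ j, Integrable (fun x : Euc n => fderiv ℝ f x (e j) * Real.exp (-ψ x)) volume := by
    intro j
    refine aux_tempered hψ hf 1 (K := 1) (k := 0) (by fun_prop) fun x => ?_
    simpa using aux_norm1 f x j
  have I2 : ∀ j, Integrable (fun x : Euc n => (x i * fderiv ℝ f x (e j)) * Real.exp (-ψ x))
      volume := by
    intro j
    refine aux_tempered hψ hf 1 (K := 1) (k := 1) (by fun_prop) fun x => ?_
    rw [abs_mul, one_mul, pow_one]
    exact mul_le_mul (aux_coord x i) (aux_norm1 f x j) (abs_nonneg _) (by positivity)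
  have I3 : ∀ j, Integrable (fun x : Euc n =>
      (x i * fderiv ℝ (fderiv ℝ f) x (e j) (e j)) * Real.exp (-ψ x)) volume := by
    intro j
    refine aux_tempered hψ hf 2 (K := 1) (k := 1) (by fun_prop) fun x => ?_
    rw [abs_mul, one_mul, pow_one]
    exact mul_le_mul (aux_coord x i) (aux_norm2 f x j) (abs_nonneg _) (by positivity)
  have I4 : ∀ j, Integrable (fun x : Euc n =>
      (x i * fderiv ℝ f x (e j) * fderiv ℝ ψ x (e j)) * Real.exp (-ψ x)) volume := by
    intro j
    obtain ⟨C, k, hC⟩ := hψ.2.2 1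
    refine aux_tempered hψ hf 1 (K := C) (k := k + 1) (by fun_prop) fun x => ?_
    rw [abs_mul, abs_mul]
    have h1 := (aux_norm1 ψ x j).trans (hC x)
    calc _ ≤ ((1 + ‖x‖) * ‖iteratedFDeriv ℝ 1 f x‖) * (C * (1 + ‖x‖) ^ k) := by
          refine mul_le_mul (mul_le_mul (aux_coord x i) (aux_norm1 f x j) (abs_nonneg _)
            (by positivity)) h1 (abs_nonneg _) (by positivity)
      _ = _ := by ring
  have hδ : ∀ j, (e j) i = if i = j then (1:ℝ) else 0 := fun j => by
    simp [he]
  have hdu : ∀ j x, fderiv ℝ (fun x : Euc n => x i * fderiv ℝ f x (e j)) x (e j)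
      = x i * fderiv ℝ (fderiv ℝ f) x (e j) (e j) + fderiv ℝ f x (e j) * (e j) i := fun j x => by
    rw [(hu j x).fderiv]; simp
  have hdr : ∀ j x, fderiv ℝ (fun x => Real.exp (-ψ x)) x (e j)
      = -(fderiv ℝ ψ x (e j) * Real.exp (-ψ x)) := fun j x => by
    rw [(hr x).fderiv]; simp; ring
  have J1 : ∀ j, Integrable (fun x => fderiv ℝ (fun x : Euc n => x i * fderiv ℝ f x (e j)) x (e j)
      * Real.exp (-ψ x)) volume := fun j => by
    refine ((I3 j).add ((I1 j).mul_const ((e j) i))).congr (Filter.Eventually.of_forall fun x => ?_)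
    simp only [Pi.add_apply, hdu]; ring
  have J2 : ∀ j, Integrable (fun x : Euc n => (x i * fderiv ℝ f x (e j))
      * fderiv ℝ (fun x => Real.exp (-ψ x)) x (e j)) volume := fun j => by
    refine (I4 j).neg.congr (Filter.Eventually.of_forall fun x => ?_)
    simp only [Pi.neg_apply, hdr]; ring
  have P : ∀ j, ∫ x : Euc n, (fderiv ℝ (fun x : Euc n => x i * fderiv ℝ f x (e j)) x (e j)
      * Real.exp (-ψ x) + (x i * fderiv ℝ f x (e j))
      * fderiv ℝ (fun x => Real.exp (-ψ x)) x (e j)) = 0 := fun j => by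
    rw [integral_add (J1 j) (J2 j), integral_mul_fderiv_eq_neg_fderiv_mul_of_integrable (J1 j)
      (J2 j) (I2 j) (fun x _ => (hu j x).differentiableAt) (fun x _ => (hr x).differentiableAt)]
    ring
  have S : ∫ x : Euc n, ∑ j, (fderiv ℝ (fun x : Euc n => x i * fderiv ℝ f x (e j)) x (e j)
      * Real.exp (-ψ x) + (x i * fderiv ℝ f x (e j))
      * fderiv ℝ (fun x => Real.exp (-ψ x)) x (e j)) = 0 := by
    rw [integral_finsetSum _ (fun j _ => (J1 j).fun_add (J2 j))]
    exact Finset.sum_eq_zero fun j _ => P j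
  have E : ∀ x : Euc n, ∑ j, (fderiv ℝ (fun x : Euc n => x i * fderiv ℝ f x (e j)) x (e j)
      * Real.exp (-ψ x) + (x i * fderiv ℝ f x (e j))
      * fderiv ℝ (fun x => Real.exp (-ψ x)) x (e j))
      = fderiv ℝ f x (e i) * Real.exp (-ψ x) - lam * ((f x * x i) * Real.exp (-ψ x)) := fun x => by
    have hL : ∑ j, fderiv ℝ (fderiv ℝ f) x (e j) (e j)
        - ∑ j, fderiv ℝ ψ x (e j) * fderiv ℝ f x (e j) = -lam * f x := by
      rw [← heig x, Lop, lap]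
      congr 1
      · exact Finset.sum_congr rfl fun j _ => by rw [iteratedFDeriv_two_apply]; rfl
      · rw [PiLp.inner_apply]
        refine Finset.sum_congr rfl fun j _ => ?_
        rw [aux_grad, aux_grad]; simp [he]; ring
    have hD : ∑ j, fderiv ℝ f x (e j) * (e j) i = fderiv ℝ f x (e i) := by
      simp [hδ]
    calc _ = ∑ j, (x i * Real.exp (-ψ x) * (fderiv ℝ (fderiv ℝ f) x (e j) (e j))
            - x i * Real.exp (-ψ x) * (fderiv ℝ ψ x (e j) * fderiv ℝ f x (e j))
            + (fderiv ℝ f x (e j) * (e j) i) * Real.exp (-ψ x)) := by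
          refine Finset.sum_congr rfl fun j _ => ?_
          rw [hdu, hdr]; ring
      _ = x i * Real.exp (-ψ x) * (∑ j, fderiv ℝ (fderiv ℝ f) x (e j) (e j)
            - ∑ j, fderiv ℝ ψ x (e j) * fderiv ℝ f x (e j))
            + (∑ j, fderiv ℝ f x (e j) * (e j) i) * Real.exp (-ψ x) := by
          rw [Finset.sum_add_distrib, Finset.sum_sub_distrib, ← Finset.mul_sum, ← Finset.mul_sum,
            ← Finset.sum_mul]; ring
      _ = _ := by rw [hL, hD]; ring
  simp_rw [E] at S
  rw [integral_sub (I1 i) (I0.const_mul lam), integral_const_mul] at S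
  linarith

end Helpers

/-- For an eigenfunction `f` of `−L_μ` with eigenvalue `λ`, normalized in L²(μ):
`|∫ ∇f dμ|² = λ² |∫ f(x) x dμ|² ≤ λ² ‖Cov(μ)‖_op`. -/
theorem eigenfunction_moment_identity {n : ℕ} (μ : Measure (Euc n))
    [IsProbabilityMeasure μ] (ψ : Euc n → ℝ) (hreg : IsRegularMeasure μ ψ)
    (lam : ℝ) (hlam : 0 < lam)
    (f : Euc n → ℝ) (hf : IsTempered (fun x => Real.exp (-ψ x)) f)
    (hmean : ∫ x, f x ∂μ = 0) (hnorm : ∫ x, f x ^ 2 ∂μ = 1)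
    (heig : ∀ x, Lop ψ f x = -lam * f x) :
    ‖∫ x, gradient f x ∂μ‖ ^ 2 = lam ^ 2 * ‖∫ x, f x • x ∂μ‖ ^ 2 ∧
    lam ^ 2 * ‖∫ x, f x • x ∂μ‖ ^ 2 ≤ lam ^ 2 * opNorm (covMatrix μ) := by
  obtain ⟨hψ, hμ⟩ := hreg
  have hψc : Continuous ψ := hψ.1.continuous
  have hfc : Continuous f := hf.1.continuous
  have hfc1 : Continuous (fderiv ℝ f) := hf.1.continuous_fderiv (by simp)
  have hmeas : Measurable fun x => ENNReal.ofReal (Real.exp (-ψ x)) := by fun_prop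
  have hInteg : ∀ g : Euc n → ℝ, Integrable g μ ↔
      Integrable (fun x => g x * Real.exp (-ψ x)) volume := fun g => by
    rw [hμ, integrable_withDensity_iff_integrable_smul' hmeas (by simp)]
    refine integrable_congr (Filter.Eventually.of_forall fun x => ?_)
    simp only [ENNReal.toReal_ofReal (Real.exp_pos _).le, smul_eq_mul]; ring
  have hIntEq : ∀ g : Euc n → ℝ, ∫ x, g x ∂μ = ∫ x, g x * Real.exp (-ψ x) := fun g => by
    rw [hμ, integral_withDensity_eq_integral_toReal_smul hmeas (by simp)]
    refine integral_congr_ae (Filter.Eventually.of_forall fun x => ?_)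
    simp only [ENNReal.toReal_ofReal (Real.exp_pos _).le, smul_eq_mul]; ring
  obtain ⟨R, hR, hρ⟩ := aux_rho hψ
  have Ix : ∀ i, Integrable (fun x : Euc n => x i) μ := fun i => by
    rw [hInteg]
    refine aux_integrable (C := R) (k := 1) (a := 1) (by fun_prop) one_pos fun x => ?_
    rw [abs_mul, abs_of_pos (Real.exp_pos _), pow_one]
    calc _ ≤ (1 + ‖x‖) * (R * Real.exp (-1 * ‖x‖)) :=
          mul_le_mul (aux_coord x i) (hρ x) (Real.exp_pos _).le (by positivity)
      _ = _ := by ring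
  have Ixx : ∀ i j, Integrable (fun x : Euc n => x i * x j) μ := fun i j => by
    rw [hInteg]
    refine aux_integrable (C := R) (k := 2) (a := 1) (by fun_prop) one_pos fun x => ?_
    rw [abs_mul, abs_mul, abs_of_pos (Real.exp_pos _)]
    calc _ ≤ ((1 + ‖x‖) * (1 + ‖x‖)) * (R * Real.exp (-1 * ‖x‖)) :=
          mul_le_mul (mul_le_mul (aux_coord x i) (aux_coord x j) (abs_nonneg _) (by positivity))
            (hρ x) (Real.exp_pos _).le (by positivity)
      _ = _ := by ring
  have If : Integrable f μ := by
    rw [hInteg]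
    refine aux_tempered hψ hf 0 (K := 1) (k := 0) (by fun_prop) fun x => ?_
    simp
  have Iff2 : Integrable (fun x => f x ^ 2) μ := by
    by_contra h
    rw [integral_undef h] at hnorm
    exact zero_ne_one hnorm
  have Ifx : ∀ i, Integrable (fun x : Euc n => f x * x i) μ := fun i => by
    rw [hInteg]
    refine aux_tempered hψ hf 0 (K := 1) (k := 1) (by fun_prop) fun x => ?_
    rw [norm_iteratedFDeriv_zero, abs_mul, Real.norm_eq_abs]
    have := aux_coord x i
    nlinarith [abs_nonneg (f x)]
  have Ig : ∀ i, Integrable (fun x : Euc n => gradient f x i) μ := fun i => by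
    rw [hInteg]
    simp_rw [aux_grad]
    refine aux_tempered hψ hf 1 (K := 1) (k := 0) (by fun_prop) fun x => ?_
    simpa using aux_norm1 f x i
  set v : Euc n := ∫ x, f x • x ∂μ with hv
  have hvi : ∀ i, v i = ∫ x, f x * x i ∂μ := fun i => by
    rw [hv, eval_integral_piLp (f := fun x : Euc n => f x • x) (fun i => by simpa using Ifx i)]
    simp
  have hgv : ∫ x, gradient f x ∂μ = lam • v := by
    ext i
    rw [eval_integral_piLp Ig, PiLp.smul_apply, hvi, hIntEq, hIntEq, smul_eq_mul,
      ← aux_parts hψ hf heig i]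
    simp_rw [aux_grad]
  refine ⟨by rw [hgv, norm_smul, mul_pow, Real.norm_eq_abs, sq_abs], ?_⟩
  refine mul_le_mul_of_nonneg_left ?_ (by positivity)
  -- Cauchy-Schwarz
  set ℓ : Euc n → ℝ := fun x => ∑ i, v i * x i with hℓ
  have Iℓ : Integrable ℓ μ := integrable_finsetSum _ fun i _ => (Ix i).const_mul _
  have hℓ2 : ∀ x, ℓ x ^ 2 = ∑ i, ∑ j, v i * v j * (x i * x j) := fun x => by
    rw [hℓ, sq, Finset.sum_mul_sum]
    exact Finset.sum_congr rfl fun i _ => Finset.sum_congr rfl fun j _ => by ring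
  have Iℓ2 : Integrable (fun x => ℓ x ^ 2) μ := by
    simp_rw [hℓ2]
    exact integrable_finsetSum _ fun i _ => integrable_finsetSum _ fun j _ =>
      (Ixx i j).const_mul _
  have hfℓ : ∀ x, f x * ℓ x = ∑ i, v i * (f x * x i) := fun x => by
    rw [hℓ, Finset.mul_sum]
    exact Finset.sum_congr rfl fun i _ => by ring
  have Ifℓ : Integrable (fun x => f x * ℓ x) μ := by
    simp_rw [hfℓ]
    exact integrable_finsetSum _ fun i _ => (Ifx i).const_mul _
  have hs : ∫ x, f x * ℓ x ∂μ = ‖v‖ ^ 2 := by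
    simp_rw [hfℓ]
    rw [integral_finsetSum _ fun i _ => (Ifx i).const_mul _, EuclideanSpace.real_norm_sq_eq]
    refine Finset.sum_congr rfl fun i _ => ?_
    rw [integral_const_mul, ← hvi, sq]
  set m := ∫ x, ℓ x ∂μ with hm
  set s := ‖v‖ ^ 2 with hs'
  have hm1 : m = ∑ i, v i * ∫ x, x i ∂μ := by
    rw [hm, hℓ, integral_finsetSum _ fun i _ => (Ix i).const_mul _]
    exact Finset.sum_congr rfl fun i _ => integral_const_mul _ _
  have hvar : ∫ x, ℓ x ^ 2 ∂μ - m ^ 2 = ⟪v, Matrix.toEuclideanCLM (𝕜 := ℝ) (covMatrix μ) v⟫ := by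
    have h1 : ∫ x, ℓ x ^ 2 ∂μ = ∑ i, ∑ j, v i * v j * ∫ x, x i * x j ∂μ := by
      simp_rw [hℓ2]
      rw [integral_finsetSum _ fun i _ => integrable_finsetSum _ fun j _ =>
        (Ixx i j).const_mul _]
      refine Finset.sum_congr rfl fun i _ => ?_
      rw [integral_finsetSum _ fun j _ => (Ixx i j).const_mul _]
      exact Finset.sum_congr rfl fun j _ => integral_const_mul _ _
    have h2 : m ^ 2 = ∑ i, ∑ j, v i * v j * ((∫ x, x i ∂μ) * ∫ x, x j ∂μ) := by
      rw [hm1, sq, Finset.sum_mul_sum]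
      exact Finset.sum_congr rfl fun i _ => Finset.sum_congr rfl fun j _ => by ring
    rw [h1, h2, ← Finset.sum_sub_distrib, PiLp.inner_apply]
    refine Finset.sum_congr rfl fun i _ => ?_
    rw [← Finset.sum_sub_distrib]
    simp only [Matrix.ofLp_toEuclideanCLM, Matrix.mulVec, dotProduct, covMatrix, Matrix.of_apply,
      RCLike.inner_apply, conj_trivial, Finset.sum_mul]
    exact Finset.sum_congr rfl fun j _ => by ring
  have hle : ⟪v, Matrix.toEuclideanCLM (𝕜 := ℝ) (covMatrix μ) v⟫ ≤ opNorm (covMatrix μ) * s := by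
    refine (real_inner_le_norm _ _).trans ?_
    have := (Matrix.toEuclideanCLM (𝕜 := ℝ) (covMatrix μ)).le_opNorm v
    rw [opNorm, hs']
    nlinarith [norm_nonneg v]
  have hpos : 0 ≤ ∫ x, (ℓ x - m - s * f x) ^ 2 ∂μ := integral_nonneg fun x => sq_nonneg _
  have hexp : ∫ x, (ℓ x - m - s * f x) ^ 2 ∂μ = ∫ x, ℓ x ^ 2 ∂μ - m ^ 2 - s ^ 2 := by
    have e : ∀ x, (ℓ x - m - s * f x) ^ 2 = ((ℓ x ^ 2 + s ^ 2 * f x ^ 2) +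
        ((-2 * m) * ℓ x + (-2 * s) * (f x * ℓ x))) + ((2 * m * s) * f x + m ^ 2) := fun x => by ring
    simp_rw [e]
    rw [integral_add ((Iℓ2.fun_add (Iff2.const_mul _)).fun_add ((Iℓ.const_mul _).fun_add (Ifℓ.const_mul _)))
        ((If.const_mul _).fun_add (integrable_const _)),
      integral_add (Iℓ2.fun_add (Iff2.const_mul _)) ((Iℓ.const_mul _).fun_add (Ifℓ.const_mul _)),
      integral_add Iℓ2 (Iff2.const_mul _), integral_add (Iℓ.const_mul _) (Ifℓ.const_mul _),
      integral_add (If.const_mul _) (integrable_const _)]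
    simp only [integral_const_mul, hnorm, hmean, hs, ← hm]
    simp; ring
  have hfin : s ^ 2 ≤ opNorm (covMatrix μ) * s := by linarith
  have hop : 0 ≤ opNorm (covMatrix μ) := norm_nonneg _
  have hs0 : 0 ≤ s := by positivity
  rcases hs0.eq_or_lt with h | h
  · rw [← h]; exact hop
  · nlinarith
end
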